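/- (Density of equivariant locally Lipschitz functions) Let 1 < p < ∞, and let f ∈ N^{1,p}_loc(T̃) satisfy f ∘ τ − f = 1 almost everywhere. Then for every ε > 0 there exists a locally Lipschitz function v: T̃ → ℝ with v ∘ τ − v = 1 such that for every open domain U compactly contained in T̃ one has ‖v − f‖_{N^{1,p}(U)} ≤ C(U) ε for a constant C(U) depending on U. In particular, degree-1 locally Lipschitz functions are dense in the set of degree-1 functions of N^{1,p}_loc(T̃) with respect to the N^{1,p}(U)-seminorm on each such U. -/

import Mathlib

open MeasureTheory Metric Set Filter Topology
open scoped ENNReal NNReal unitInterval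

noncomputable section

namespace Duality

/-! ### Rectifiable curves, line integrals and upper gradients

A rectifiable path is encoded by its arclength-type parametrization: a `1`-Lipschitz
map defined on a compact interval `[a, b]`.  The line integral `∫_γ ρ ds` of a
nonnegative Borel function is then the Lebesgue integral of `ρ ∘ γ` over `[a, b]`. -/

structure UPath (X : Type*) [PseudoMetricSpace X] where
  a : ℝ
  b : ℝ
  hab : a ≤ b
  toFun : ℝ → X
  lip : LipschitzOnWith 1 toFun (Set.Icc a b)

namespace UPath

variable {X : Type*} [PseudoMetricSpace X]

/-- starting point of the path -/
def start (γ : UPath X) : X := γ.toFun γ.a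

/-- end point of the path -/
def finish (γ : UPath X) : X := γ.toFun γ.b

/-- The line integral `∫_γ ρ ds`. -/
def integral (γ : UPath X) (ρ : X → ℝ≥0∞) : ℝ≥0∞ :=
  ∫⁻ t in Set.Icc γ.a γ.b, ρ (γ.toFun t)

/-- The image (trace) `|γ|` of the path. -/
def trace (γ : UPath X) : Set X := γ.toFun '' Set.Icc γ.a γ.b

/-- The length of the path. -/
def length (γ : UPath X) : ℝ≥0∞ := eVariationOn γ.toFun (Set.Icc γ.a γ.b)

/-- The path stays inside the set `W`. -/
def InSet (γ : UPath X) (W : Set X) : Prop := ∀ t ∈ Set.Icc γ.a γ.b, γ.toFun t ∈ W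

/-- The reparametrization of a rectifiable path as a `Path` (continuous map from `[0,1]`). -/
def toPath (γ : UPath X) : Path γ.start γ.finish where
  toFun := fun t => γ.toFun (γ.a + (t : ℝ) * (γ.b - γ.a))
  continuous_toFun := by
    have hmem : ∀ t : unitInterval, γ.a + (t : ℝ) * (γ.b - γ.a) ∈ Set.Icc γ.a γ.b := by
      intro t
      obtain ⟨ht0, ht1⟩ := t.2
      constructor
      · nlinarith [γ.hab]
      · nlinarith [γ.hab]
    exact γ.lip.continuousOn.comp_continuous (by continuity) hmem
  source' := by simp [start]
  target' := by simp [finish]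

end UPath

/-- `ρ` is an upper gradient of `u`. -/
def IsUpperGradient {X : Type*} [PseudoMetricSpace X] {Y : Type*} [PseudoEMetricSpace Y]
    (u : X → Y) (ρ : X → ℝ≥0∞) : Prop :=
  ∀ γ : UPath X, edist (u γ.start) (u γ.finish) ≤ γ.integral ρ

/-- The `p`-modulus of a family of (rectifiable) paths. -/
def pathMod {X : Type*} [PseudoMetricSpace X] [MeasurableSpace X]
    (μ : Measure X) (p : ℝ) (Γ : Set (UPath X)) : ℝ≥0∞ :=
  ⨅ (ρ : X → ℝ≥0∞) (_ : Measurable ρ ∧ ∀ γ ∈ Γ, 1 ≤ γ.integral ρ),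
    ∫⁻ x, ρ x ^ p ∂μ

/-- `ρ` is a `p`-weak upper gradient of `u`: the upper gradient inequality may fail
only on a path family of zero `p`-modulus. -/
def IsWeakUpperGradient {X : Type*} [PseudoMetricSpace X] [MeasurableSpace X]
    {Y : Type*} [PseudoEMetricSpace Y] (μ : Measure X) (p : ℝ)
    (u : X → Y) (ρ : X → ℝ≥0∞) : Prop :=
  pathMod μ p {γ : UPath X | ¬ edist (u γ.start) (u γ.finish) ≤ γ.integral ρ} = 0

/-- `ρ` is a `p`-weak upper gradient of `u` in the subset `U`. -/
def IsWeakUpperGradientOn {X : Type*} [PseudoMetricSpace X] [MeasurableSpace X]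
    {Y : Type*} [PseudoEMetricSpace Y] (μ : Measure X) (p : ℝ) (U : Set X)
    (u : X → Y) (ρ : X → ℝ≥0∞) : Prop :=
  pathMod (μ.restrict U) p
    {γ : UPath X | γ.InSet U ∧ ¬ edist (u γ.start) (u γ.finish) ≤ γ.integral ρ} = 0

/-- `ρ` is the minimal `p`-weak upper gradient of `u`: it is a `p`-integrable `p`-weak
upper gradient which is `μ`-a.e. dominated by every other one. -/
def IsMinimalWeakUpperGradient {X : Type*} [PseudoMetricSpace X] [MeasurableSpace X]
    {Y : Type*} [PseudoEMetricSpace Y] (μ : Measure X) (p : ℝ)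
    (u : X → Y) (ρ : X → ℝ≥0∞) : Prop :=
  Measurable ρ ∧ IsWeakUpperGradient μ p u ρ ∧ (∫⁻ x, ρ x ^ p ∂μ) < ⊤ ∧
    ∀ ρ' : X → ℝ≥0∞, Measurable ρ' → IsWeakUpperGradient μ p u ρ' →
      (∫⁻ x, ρ' x ^ p ∂μ) < ⊤ → ∀ᵐ x ∂μ, ρ x ≤ ρ' x

/-! ### Doubling measures, Poincaré inequalities, Ahlfors regularity -/

/-- `μ` is a doubling (Borel) measure with doubling constant `Cμ`:
`0 < μ(2B) ≤ Cμ · μ(B) < ∞` for every ball `B` of radius `r < diam T`. -/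
def IsDoubling {X : Type*} [MetricSpace X] [MeasurableSpace X]
    (μ : Measure X) (Cμ : ℝ≥0∞) : Prop :=
  ∀ (x : X) (r : ℝ), 0 < r → r < Metric.diam (Set.univ : Set X) →
    0 < μ (ball x (2 * r)) ∧ μ (ball x (2 * r)) ≤ Cμ * μ (ball x r) ∧
      Cμ * μ (ball x r) < ⊤

/-- `(X, d, μ)` supports a weak `1`-Poincaré inequality with constants `CP`, `lP`:
`⨍_B |u - u_B| dμ ≤ CP · diam B · ⨍_{lP·B} ρ dμ` for every locally integrable `u`
and every upper gradient `ρ` of `u`, and balls have positive finite measure. -/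
def SupportsPoincare {X : Type*} [MetricSpace X] [MeasurableSpace X]
    (μ : Measure X) (CP lP : ℝ) : Prop :=
  (∀ (x : X) (r : ℝ), 0 < r → 0 < μ (ball x r) ∧ μ (ball x r) < ⊤) ∧
  ∀ (u : X → ℝ) (ρ : X → ℝ≥0∞), LocallyIntegrable u μ → Measurable ρ →
    IsUpperGradient u ρ → ∀ (x : X) (r : ℝ), 0 < r →
      (∫⁻ y in ball x r, ENNReal.ofReal |u y - ⨍ z in ball x r, u z ∂μ| ∂μ) /
          μ (ball x r) ≤
        ENNReal.ofReal (CP * Metric.diam (ball x r)) *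
          ((∫⁻ y in ball x (lP * r), ρ y ∂μ) / μ (ball x (lP * r)))

/-- `μ` is Ahlfors `q`-regular with constants `0 < aA ≤ AA`. -/
def IsAhlforsRegular {X : Type*} [MetricSpace X] [MeasurableSpace X]
    (μ : Measure X) (q aA AA : ℝ) : Prop :=
  0 < aA ∧ aA ≤ AA ∧
    ∀ (x : X) (r : ℝ), 0 < r → r < Metric.diam (Set.univ : Set X) →
      ENNReal.ofReal (aA * r ^ q) ≤ μ (ball x r) ∧
        μ (ball x r) ≤ ENNReal.ofReal (AA * r ^ q)

/-! ### The circle `ℝ/ℤ`, loops and degree -/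

lemma intCast_coe_eq_zero (k : ℤ) : ((k : ℝ) : UnitAddCircle) = 0 :=
  (AddCircle.coe_eq_zero_iff _).mpr ⟨k, by simp⟩

/-- The standard loop of degree `k` in `ℝ/ℤ` based at `y`: `t ↦ y + [k t]`. -/
def stdLoop (k : ℤ) (y : UnitAddCircle) : Path y y where
  toFun := fun t => y + (((k : ℝ) * (t : ℝ) : ℝ) : UnitAddCircle)
  continuous_toFun := by
    refine continuous_const.add ?_
    exact (AddCircle.continuous_mk' 1).comp (by continuity)
  source' := by simp
  target' := by
    have h1 : ((1 : unitInterval) : ℝ) = 1 := rfl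
    have h : (((k : ℝ) * ((1 : unitInterval) : ℝ) : ℝ) : UnitAddCircle) = 0 := by
      rw [h1, mul_one]; exact intCast_coe_eq_zero k
    simp [h]

/-- Concatenation of `n` copies of a loop. -/
def loopPow {X : Type*} [TopologicalSpace X] {x : X} (γ : Path x x) : ℕ → Path x x
  | 0 => Path.refl x
  | n + 1 => (loopPow γ n).trans γ

/-- A loop `γ` based at `x` has degree 1 (relative to the chosen generator `α₀` based
at `x₀`) if it is loop-homotopic to a conjugate `η * α₀ * η⁻¹` of `α₀`. -/
def IsDegreeOneLoop {T : Type*} [TopologicalSpace T] (x₀ : T) (α₀ : Path x₀ x₀)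
    {x : T} (γ : Path x x) : Prop :=
  ∃ η : Path x x₀, Path.Homotopic γ (η.trans (α₀.trans η.symm))

/-- A map `f : T → ℝ/ℤ` has degree `k`: it pushes every degree-1 loop based at `x`
to a loop which is loop-homotopic to `[f x] + k·β`, `β (t) = [t]`. -/
def HasDegree {T : Type*} [TopologicalSpace T] (x₀ : T) (α₀ : Path x₀ x₀)
    (f : T → UnitAddCircle) (k : ℤ) : Prop :=
  ∃ hf : Continuous f, ∀ (x : T) (γ : Path x x), IsDegreeOneLoop x₀ α₀ γ →
    Path.Homotopic (γ.map hf) (stdLoop k (f x))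

/-- The class of `α₀` generates `π₁(T, x₀) ≅ ℤ`. -/
def IsGenerator {T : Type*} [TopologicalSpace T] (x₀ : T) (α₀ : Path x₀ x₀) : Prop :=
  Function.Bijective fun k : ℤ =>
    (FundamentalGroup.fromPath (X := TopCat.of T) ⟦α₀⟧ : FundamentalGroup (TopCat.of T) x₀) ^ k

/-- `T` is semilocally simply connected. -/
def SemilocallySimplyConnected (T : Type*) [TopologicalSpace T] : Prop :=
  ∀ x : T, ∃ U ∈ 𝓝 x, ∀ γ : Path x x, (∀ t, γ t ∈ U) → Path.Homotopic γ (Path.refl x)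

/-- `f` is a Lipschitz map of degree 1. -/
def DegOneLip {T : Type*} [MetricSpace T] (x₀ : T) (α₀ : Path x₀ x₀)
    (f : T → UnitAddCircle) : Prop :=
  (∃ L : ℝ≥0, LipschitzWith L f) ∧ HasDegree x₀ α₀ f 1

/-! ### Capacity and surface modulus -/

/-- The degree 1 `p`-capacity of `T`, defined through minimal `p`-weak upper gradients:
the infimum of `∫ ρ^p dμ` over `p`-weak upper gradients `ρ` of Lipschitz degree-1 maps. -/
def cap {T : Type*} [MetricSpace T] [MeasurableSpace T] (μ : Measure T) (p : ℝ)
    (x₀ : T) (α₀ : Path x₀ x₀) : ℝ≥0∞ :=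
  ⨅ (f : T → UnitAddCircle) (_ : DegOneLip x₀ α₀ f) (ρ : T → ℝ≥0∞)
    (_ : Measurable ρ ∧ IsWeakUpperGradient μ p f ρ),
      ∫⁻ x, ρ x ^ p ∂μ

/-- The pointwise Lipschitz constant `Lip f (x)`. -/
def pLip {T : Type*} [MetricSpace T] (f : T → UnitAddCircle) (x : T) : ℝ≥0∞ :=
  Filter.limsup
    (fun r : ℝ => ⨆ y ∈ ball x r, edist (f x) (f y) / ENNReal.ofReal r) (𝓝[>] (0 : ℝ))

/-- The degree 1 `p`-capacity of `T`, defined through pointwise Lipschitz constants. -/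
def capLip {T : Type*} [MetricSpace T] [MeasurableSpace T] (μ : Measure T) (p : ℝ)
    (x₀ : T) (α₀ : Path x₀ x₀) : ℝ≥0∞ :=
  ⨅ (f : T → UnitAddCircle) (_ : DegOneLip x₀ α₀ f), ∫⁻ x, pLip f x ^ p ∂μ

/-- The codimension 1 spherical Hausdorff measure, as a set function:
`H(A) = sup_{δ>0} inf { ∑ μ(B_i)/r_i }`, the infimum being over countable covers of `A`
by balls `B_i` of radii `r_i ≤ δ`. -/
def codimH {T : Type*} [MetricSpace T] [MeasurableSpace T] (μ : Measure T)
    (A : Set T) : ℝ≥0∞ :=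
  ⨆ (δ : ℝ) (_ : 0 < δ),
    ⨅ (c : ℕ → T) (r : ℕ → ℝ) (_ : ∀ i, r i ≤ δ)
      (_ : A ⊆ ⋃ i, ball (c i) (r i)),
        ∑' i, μ (ball (c i) (r i)) / ENNReal.ofReal (r i)

/-- The integral `∫_S g dH` of `g ≥ 0` over `S` against the codimension 1 Hausdorff
measure, via the layer-cake (Choquet) formula. -/
def choquetIntegral {T : Type*} [MetricSpace T] [MeasurableSpace T] (μ : Measure T)
    (S : Set T) (g : T → ℝ≥0∞) : ℝ≥0∞ :=
  ∫⁻ t in Set.Ioi (0 : ℝ), codimH μ {x | x ∈ S ∧ ENNReal.ofReal t < g x}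

/-- The family `Γ*` of all level sets `φ⁻¹[0]` of finite codimension 1 Hausdorff measure
of continuous degree-1 maps `φ : T → ℝ/ℤ`. -/
def Surfaces {T : Type*} [MetricSpace T] [MeasurableSpace T] (μ : Measure T)
    (x₀ : T) (α₀ : Path x₀ x₀) : Set (Set T) :=
  {S | ∃ φ : T → UnitAddCircle, HasDegree x₀ α₀ φ 1 ∧ S = φ ⁻¹' {0} ∧ codimH μ S < ⊤}

/-- The surface `q`-modulus of a family of surfaces, the surfaces being equipped with the
codimension 1 Hausdorff measure. -/
def surfModOf {T : Type*} [MetricSpace T] [MeasurableSpace T] (μ : Measure T) (q : ℝ)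
    (𝒮 : Set (Set T)) : ℝ≥0∞ :=
  ⨅ (ρ : T → ℝ≥0∞) (_ : Measurable ρ ∧ ∀ S ∈ 𝒮, 1 ≤ choquetIntegral μ S ρ),
    ∫⁻ x, ρ x ^ q ∂μ

/-- The surface modulus `mod_q T`. -/
def surfMod {T : Type*} [MetricSpace T] [MeasurableSpace T] (μ : Measure T) (q : ℝ)
    (x₀ : T) (α₀ : Path x₀ x₀) : ℝ≥0∞ :=
  surfModOf μ q (Surfaces μ x₀ α₀)

/-- The family `Γ*` with the `(q-1)`-dimensional Hausdorff measure instead. -/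
def SurfacesH {T : Type*} [MetricSpace T] [MeasurableSpace T] [BorelSpace T] (q : ℝ)
    (x₀ : T) (α₀ : Path x₀ x₀) : Set (Set T) :=
  {S | ∃ φ : T → UnitAddCircle, HasDegree x₀ α₀ φ 1 ∧ S = φ ⁻¹' {0} ∧ μH[q - 1] S < ⊤}

/-- The surface modulus `mod_q T` defined through the `(q-1)`-dimensional Hausdorff
measures `H^{q-1} ⌞ S`, `S ∈ Γ*`. -/
def surfModH {T : Type*} [MetricSpace T] [MeasurableSpace T] [BorelSpace T]
    (μ : Measure T) (q pstar : ℝ) (x₀ : T) (α₀ : Path x₀ x₀) : ℝ≥0∞ :=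
  ⨅ (ρ : T → ℝ≥0∞)
    (_ : Measurable ρ ∧ ∀ S ∈ SurfacesH (T := T) q x₀ α₀, 1 ≤ ∫⁻ x in S, ρ x ∂μH[q - 1]),
      ∫⁻ x, ρ x ^ pstar ∂μ

/-- The standing assumptions 2.1. -/
def Standing {T : Type*} [MetricSpace T] [MeasurableSpace T] (μ : Measure T)
    (Cμ : ℝ≥0∞) (CP lP : ℝ) (x₀ : T) (α₀ : Path x₀ x₀) : Prop :=
  IsDoubling μ Cμ ∧ SupportsPoincare μ CP lP ∧ SemilocallySimplyConnected T ∧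
    IsGenerator x₀ α₀ ∧ ∃ f : T → UnitAddCircle, DegOneLip x₀ α₀ f

/-! ### The universal cover -/

/-- `π` is a local isometry. -/
def IsLocalIsometry {X Y : Type*} [MetricSpace X] [MetricSpace Y] (π : X → Y) : Prop :=
  ∀ x : X, ∃ ε : ℝ, 0 < ε ∧
    ∀ y ∈ ball x ε, ∀ z ∈ ball x ε, dist (π y) (π z) = dist y z

/-- `(T̃, π)` is the universal cover of `T`, with `T̃` carrying the length metric pulled
back by `π` (so that `π` is a local isometry). -/
def CoverSetup {T Tt : Type*} [MetricSpace T] [MetricSpace Tt] (π : Tt → T) : Prop :=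
  IsCoveringMap π ∧ Function.Surjective π ∧ IsLocalIsometry π ∧ SimplyConnectedSpace Tt

/-- `τ` is the deck transformation of the cover `π` determined by
`τ (γ̃ 0) = γ̃ 1` for every lift `γ̃` of every degree-1 loop `γ`. -/
def IsDeck {T Tt : Type*} [MetricSpace T] [MetricSpace Tt] (π : Tt → T)
    (x₀ : T) (α₀ : Path x₀ x₀) (τ : Tt → Tt) : Prop :=
  Continuous τ ∧ (∀ x, π (τ x) = π x) ∧
    ∀ (x : T) (γ : Path x x), IsDegreeOneLoop x₀ α₀ γ →
      ∀ γt : C(unitInterval, Tt), (∀ t, π (γt t) = γ t) → τ (γt 0) = γt 1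

/-- `μ̃` is the natural lift of `μ` to the cover:
`μ̃ (A) = ∫ #(π⁻¹(x) ∩ A) dμ (x)`. -/
def IsLiftedMeasure {T Tt : Type*} [MetricSpace T] [MeasurableSpace T]
    [MetricSpace Tt] [MeasurableSpace Tt] (π : Tt → T) (μ : Measure T)
    (μt : Measure Tt) : Prop :=
  ∀ A : Set Tt, MeasurableSet A → μt A = ∫⁻ x, ((π ⁻¹' {x} ∩ A).encard : ℝ≥0∞) ∂μ

/-! ### Newtonian spaces -/

/-- The seminorm of `N^{1,p}(U)`. -/
def NSeminorm {X : Type*} [PseudoMetricSpace X] [MeasurableSpace X] (μ : Measure X)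
    (p : ℝ) (U : Set X) (f : X → ℝ) : ℝ≥0∞ :=
  (∫⁻ x in U, ENNReal.ofReal |f x| ^ p ∂μ) ^ (1 / p) +
    ⨅ (ρ : X → ℝ≥0∞) (_ : Measurable ρ ∧ IsWeakUpperGradientOn μ p U f ρ),
      (∫⁻ x in U, ρ x ^ p ∂μ) ^ (1 / p)

/-- `f ∈ N^{1,p}_loc`. -/
def MemNloc {X : Type*} [PseudoMetricSpace X] [MeasurableSpace X] (μ : Measure X)
    (p : ℝ) (f : X → ℝ) : Prop :=
  ∀ U : Set X, IsOpen U → IsCompact (closure U) →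
    (∫⁻ x in U, ENNReal.ofReal |f x| ^ p ∂μ) < ⊤ ∧
      ∃ ρ : X → ℝ≥0∞, Measurable ρ ∧ IsWeakUpperGradientOn μ p U f ρ ∧
        (∫⁻ x in U, ρ x ^ p ∂μ) < ⊤

/-- The collection `F`: nonnegative Borel functions `ρ` on `T` such that `ρ ∘ π` is a
`p`-weak upper gradient of some `f ∈ N^{1,p}_loc (T̃)` with `f ∘ τ - f = 1` a.e. -/
def MemF {T Tt : Type*} [MetricSpace T] [MeasurableSpace T] [MetricSpace Tt]
    [MeasurableSpace Tt] (π : Tt → T) (τ : Tt → Tt) (μt : Measure Tt) (p : ℝ)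
    (ρ : T → ℝ≥0∞) : Prop :=
  Measurable ρ ∧ ∃ f : Tt → ℝ, MemNloc μt p f ∧ (∀ᵐ x ∂μt, f (τ x) - f x = 1) ∧
    IsWeakUpperGradient μt p f (ρ ∘ π)

/-- The capacity `cap_p^F T`. -/
def capF {T Tt : Type*} [MetricSpace T] [MeasurableSpace T] [MetricSpace Tt]
    [MeasurableSpace Tt] (μ : Measure T) (π : Tt → T) (τ : Tt → Tt) (μt : Measure Tt)
    (p : ℝ) : ℝ≥0∞ :=
  ⨅ (ρ : T → ℝ≥0∞) (_ : MemF π τ μt p ρ), ∫⁻ x, ρ x ^ p ∂μ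

/-! ### Miscellaneous operators -/

/-- The restricted Hardy–Littlewood maximal operator `M_R`. -/
def restrMax {T : Type*} [MetricSpace T] [MeasurableSpace T] (μ : Measure T)
    (R : ℝ≥0∞) (g : T → ℝ≥0∞) (x : T) : ℝ≥0∞ :=
  ⨆ (s : ℝ) (_ : 0 < s ∧ ENNReal.ofReal s ≤ R),
    (∫⁻ y in ball x s, g y ∂μ) / μ (ball x s)

/-- The upper Lebesgue integral. -/
def upperLintegral {Y : Type*} [MeasurableSpace Y] (ν : Measure Y)
    (F : Y → ℝ≥0∞) : ℝ≥0∞ :=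
  ⨅ (G : Y → ℝ≥0∞) (_ : Measurable G ∧ ∀ y, F y ≤ G y), ∫⁻ y, G y ∂ν

/-! ### The sets `Ω` and the functions `ψ̃`, `ζ`, `ψ` of Section 4.3 -/

/-- The set of points reachable from `A` by a rectifiable path inside `W`. -/
def reach {T : Type*} [MetricSpace T] (A W : Set T) : Set T :=
  {x | ∃ γ : UPath T, γ.start ∈ A ∧ γ.finish = x ∧ γ.InSet W}

/-- `inf_γ ∫_γ ρ ds` over rectifiable paths connecting `A` to `x` inside `W`. -/
def pathDist {T : Type*} [MetricSpace T] (ρ : T → ℝ≥0∞) (A W : Set T) (x : T) : ℝ≥0∞ :=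
  ⨅ (γ : UPath T) (_ : γ.start ∈ A ∧ γ.finish = x ∧ γ.InSet W), γ.integral ρ

open scoped Classical in
/-- The function `ψ̃`. -/
def psiTilde {T : Type*} [MetricSpace T] (ρ : T → ℝ≥0∞) (A W : Set T) (x : T) : ℝ :=
  if x ∈ reach A W then (pathDist ρ A W x).toReal else 0

/-- The function `min {1, ψ̃}`. -/
def zeta {T : Type*} [MetricSpace T] (ρ : T → ℝ≥0∞) (A W : Set T) (x : T) : ℝ :=
  min 1 (psiTilde ρ A W x)

/-- The competing admissible map `ψ = [min {1, ψ̃}] : T → ℝ/ℤ`. -/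
def psiMap {T : Type*} [MetricSpace T] (ρ : T → ℝ≥0∞) (A W : Set T) (x : T) :
    UnitAddCircle :=
  ((zeta ρ A W x : ℝ) : UnitAddCircle)

end Duality

namespace Duality

/-- A path family all of whose members have infinite `H`-length, with `H` of finite `p`-energy,
has zero `p`-modulus. -/
lemma pathMod_eq_zero_of_integral_eq_top {X : Type*} [PseudoMetricSpace X] [MeasurableSpace X]
    {μ : Measure X} {p : ℝ} (hp : 0 < p) {Γ : Set (UPath X)} {H : X → ℝ≥0∞} (hH : Measurable H)
    (hfin : ∫⁻ x, H x ^ p ∂μ < ⊤) (hΓ : ∀ γ ∈ Γ, γ.integral H = ⊤) :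
    pathMod μ p Γ = 0 := by
  have key : ∀ c : ℝ≥0, 0 < c → pathMod μ p Γ ≤ (c : ℝ≥0∞) ^ p * ∫⁻ x, H x ^ p ∂μ := by
    intro c hc
    have hadm : ∀ γ ∈ Γ, 1 ≤ γ.integral (fun x => (c : ℝ≥0∞) * H x) := by
      intro γ hγ
      have : γ.integral (fun x => (c : ℝ≥0∞) * H x) = c * γ.integral H :=
        lintegral_const_mul' _ _ ENNReal.coe_ne_top
      rw [this, hΓ γ hγ, ENNReal.mul_top (by exact_mod_cast hc.ne')]
      exact le_top
    refine (iInf₂_le (fun x => (c : ℝ≥0∞) * H x) ⟨hH.const_mul _, hadm⟩).trans (le_of_eq ?_)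
    simp_rw [ENNReal.mul_rpow_of_nonneg _ _ hp.le]
    rw [lintegral_const_mul _ (hH.pow_const p)]
  refine le_antisymm ?_ zero_le
  have ht : Tendsto (fun c : ℝ≥0 => (c : ℝ≥0∞) ^ p * ∫⁻ x, H x ^ p ∂μ) (𝓝[>] 0) (𝓝 0) := by
    have h1 : Tendsto (fun c : ℝ≥0 => (c : ℝ≥0∞) ^ p) (𝓝[>] 0) (𝓝 0) := by
      have : Continuous fun c : ℝ≥0 => (c : ℝ≥0∞) ^ p :=
        (ENNReal.continuous_rpow_const).comp ENNReal.continuous_coe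
      have h := (this.tendsto 0).mono_left (nhdsWithin_le_nhds (s := Ioi 0))
      simpa [ENNReal.zero_rpow_of_pos hp] using h
    simpa using ENNReal.Tendsto.mul_const h1 (Or.inr hfin.ne)
  exact ge_of_tendsto ht (by filter_upwards [self_mem_nhdsWithin] with c hc using key c hc)

/-- A path family of zero `p`-modulus is contained in the family of paths of infinite `H`-length
for some `H` of finite `p`-energy. -/
lemma exists_integral_eq_top_of_pathMod_eq_zero {X : Type*} [PseudoMetricSpace X]
    [MeasurableSpace X] {μ : Measure X} {p : ℝ} (hp : 0 < p) {Γ : Set (UPath X)}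
    (h0 : pathMod μ p Γ = 0) :
    ∃ H : X → ℝ≥0∞, Measurable H ∧ ∫⁻ x, H x ^ p ∂μ < ⊤ ∧ ∀ γ ∈ Γ, γ.integral H = ⊤ := by
  have hex : ∀ n : ℕ, ∃ ρ : X → ℝ≥0∞, (Measurable ρ ∧ ∀ γ ∈ Γ, 1 ≤ γ.integral ρ) ∧
      ∫⁻ x, (n * ρ x) ^ p ∂μ ≤ (2⁻¹ : ℝ≥0∞) ^ n := by
    intro n
    have hpos : (0 : ℝ≥0∞) < (2⁻¹ : ℝ≥0∞) ^ n / ((n : ℝ≥0∞) ^ p + 1) :=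
      ENNReal.div_pos (by simp) (by simp [ENNReal.rpow_eq_top_iff, hp.le])
    have hlt : pathMod μ p Γ < (2⁻¹ : ℝ≥0∞) ^ n / ((n : ℝ≥0∞) ^ p + 1) := h0 ▸ hpos
    simp only [pathMod, iInf_lt_iff] at hlt
    obtain ⟨ρ, hρ, hlt⟩ := hlt
    refine ⟨ρ, hρ, ?_⟩
    simp_rw [ENNReal.mul_rpow_of_nonneg _ _ hp.le]
    rw [lintegral_const_mul _ (hρ.1.pow_const p)]
    calc (n : ℝ≥0∞) ^ p * ∫⁻ x, ρ x ^ p ∂μ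
        ≤ ((n : ℝ≥0∞) ^ p + 1) * ((2⁻¹ : ℝ≥0∞) ^ n / ((n : ℝ≥0∞) ^ p + 1)) := by
          gcongr
          exact le_self_add
      _ ≤ _ := ENNReal.mul_div_le
  choose ρ hρ hint using hex
  refine ⟨fun x => (∑' n : ℕ, ((n : ℝ≥0∞) * ρ n x) ^ p) ^ (1 / p), ?_, ?_, ?_⟩
  · exact (Measurable.tsum fun n => (((hρ n).1.const_mul _).pow_const p)).pow_const _
  · simp_rw [← ENNReal.rpow_mul, one_div, inv_mul_cancel₀ hp.ne', ENNReal.rpow_one]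
    rw [lintegral_tsum fun n => (((hρ n).1.const_mul _).pow_const p).aemeasurable]
    refine (ENNReal.tsum_le_tsum hint).trans_lt ?_
    rw [ENNReal.tsum_geometric]
    simp
  · intro γ hγ
    refine ENNReal.eq_top_of_forall_nnreal_le fun r => ?_
    obtain ⟨n, hn⟩ := exists_nat_ge r
    calc (r : ℝ≥0∞) ≤ n := by exact_mod_cast hn
      _ ≤ n * γ.integral (ρ n) := by
          simpa using mul_le_mul_right ((hρ n).2 γ hγ) (n : ℝ≥0∞)
      _ = γ.integral (fun x => n * ρ n x) :=
          (lintegral_const_mul' _ _ (ENNReal.natCast_ne_top n)).symm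
      _ ≤ _ := by
          refine lintegral_mono fun t => ?_
          have h := ENNReal.le_tsum (f := fun n : ℕ => ((n : ℝ≥0∞) * ρ n (γ.toFun t)) ^ p) n
          calc (n : ℝ≥0∞) * ρ n (γ.toFun t)
              = (((n : ℝ≥0∞) * ρ n (γ.toFun t)) ^ p) ^ (1 / p) := by
                rw [← ENNReal.rpow_mul, mul_one_div_cancel hp.ne', ENNReal.rpow_one]
            _ ≤ _ := ENNReal.rpow_le_rpow h (by positivity)

lemma add_rpow_le_two_rpow_mul {p : ℝ} (hp : 1 ≤ p) (a b : ℝ≥0∞) :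
    (a + b) ^ p ≤ 2 ^ p * (a ^ p + b ^ p) :=
  (ENNReal.rpow_add_le_mul_rpow_add_rpow a b hp).trans (by
    gcongr
    · norm_num
    · linarith)

/-- A `p`-integrable weak upper gradient on `U` may be enlarged to a `p`-integrable function which
satisfies the upper gradient inequality along every path in `U`. -/
lemma exists_upperGradientOn {X : Type*} [PseudoMetricSpace X] [MeasurableSpace X]
    {μ : Measure X} {p : ℝ} (hp : 1 ≤ p) {U : Set X} {u : X → ℝ} {ρ : X → ℝ≥0∞}
    (hρ : Measurable ρ) (hu : IsWeakUpperGradientOn μ p U u ρ)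
    (hfin : ∫⁻ x in U, ρ x ^ p ∂μ < ⊤) :
    ∃ H : X → ℝ≥0∞, Measurable H ∧ ∫⁻ x in U, H x ^ p ∂μ < ⊤ ∧
      ∀ γ : UPath X, γ.InSet U → edist (u γ.start) (u γ.finish) ≤ γ.integral H := by
  obtain ⟨H, hH, hHfin, htop⟩ :=
    exists_integral_eq_top_of_pathMod_eq_zero (zero_lt_one.trans_le hp) hu
  refine ⟨fun x => ρ x + H x, hρ.add hH, ?_, fun γ hγ => ?_⟩
  · refine (lintegral_mono fun x => add_rpow_le_two_rpow_mul hp (ρ x) (H x)).trans_lt ?_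
    rw [lintegral_const_mul' _ _ (ENNReal.rpow_ne_top_of_nonneg (by linarith) (by simp)),
      lintegral_add_left (hρ.pow_const p)]
    exact ENNReal.mul_lt_top
      (ENNReal.rpow_lt_top_of_nonneg (by linarith) (by simp)) (ENNReal.add_lt_top.2 ⟨hfin, hHfin⟩)
  · by_cases h : edist (u γ.start) (u γ.finish) ≤ γ.integral ρ
    · exact h.trans (lintegral_mono fun t => le_self_add)
    · have : γ.integral H ≤ γ.integral (fun x => ρ x + H x) :=
        lintegral_mono fun t => le_add_self
      rw [htop γ ⟨hγ, h⟩, top_le_iff] at this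
      rw [this]
      exact le_top

namespace UPath

variable {X : Type*} [PseudoMetricSpace X]

/-- The restriction of a path to a subinterval. -/
def sub (γ : UPath X) (s t : ℝ) (hst : s ≤ t) (hs : γ.a ≤ s) (ht : t ≤ γ.b) : UPath X where
  a := s
  b := t
  hab := hst
  toFun := γ.toFun
  lip := γ.lip.mono (Icc_subset_Icc hs ht)

/-- The path traversed backwards. -/
def rev (γ : UPath X) : UPath X where
  a := γ.a
  b := γ.b
  hab := γ.hab
  toFun := fun t => γ.toFun (γ.a + γ.b - t)
  lip := by
    intro s hs t ht
    refine (γ.lip (x := γ.a + γ.b - s) ?_ (y := γ.a + γ.b - t) ?_).trans_eq ?_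
    · exact ⟨by linarith [hs.2], by linarith [hs.1]⟩
    · exact ⟨by linarith [ht.2], by linarith [ht.1]⟩
    · simp only [edist_dist, Real.dist_eq]
      rw [← abs_neg]
      ring_nf

lemma rev_start (γ : UPath X) : γ.rev.start = γ.finish := by simp [rev, start, finish]

lemma rev_finish (γ : UPath X) : γ.rev.finish = γ.start := by simp [rev, start, finish]

lemma integral_rev (γ : UPath X) (ρ : X → ℝ≥0∞) : γ.rev.integral ρ = γ.integral ρ := by
  simp only [integral, rev]
  rw [← lintegral_indicator measurableSet_Icc, ← lintegral_indicator measurableSet_Icc,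
    ← lintegral_sub_left_eq_self _ (γ.a + γ.b)]
  congr 1
  ext t
  have : γ.a + γ.b - t ∈ Icc γ.a γ.b ↔ t ∈ Icc γ.a γ.b :=
    ⟨fun h => ⟨by linarith [h.2], by linarith [h.1]⟩,
      fun h => ⟨by linarith [h.2], by linarith [h.1]⟩⟩
  by_cases ht : t ∈ Icc γ.a γ.b
  · rw [indicator_of_mem ht, indicator_of_mem (this.2 ht)]
    simp
  · rw [indicator_of_notMem ht, indicator_of_notMem (this.not.2 ht)]

end UPath

lemma setLIntegral_Icc_add_Icc (F : ℝ → ℝ≥0∞) {a b c : ℝ} (hab : a ≤ b) (hbc : b ≤ c) :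
    ∫⁻ t in Icc a c, F t = (∫⁻ t in Icc a b, F t) + ∫⁻ t in Icc b c, F t := by
  rw [← Icc_union_Ioc_eq_Icc hab hbc, lintegral_union measurableSet_Ioc,
    Measure.restrict_congr_set (Ioc_ae_eq_Icc (a := b) (b := c))]
  exact disjoint_left.2 fun x hx hx' => absurd hx.2 (not_le.2 hx'.1)

/-- An upper-gradient type inequality on an interval which holds locally holds globally. -/
lemma edist_le_lintegral_of_locally {Y : Type*} [PseudoEMetricSpace Y] {w : ℝ → Y}
    {F : ℝ → ℝ≥0∞} {a b : ℝ}
    (hloc : ∀ t₀ ∈ Icc a b, ∃ δ > 0, ∀ s ∈ Icc a b, ∀ t ∈ Icc a b, s ≤ t →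
      dist s t₀ < δ → dist t t₀ < δ → edist (w s) (w t) ≤ ∫⁻ r in Icc s t, F r)
    {s t : ℝ} (hs : a ≤ s) (hst : s ≤ t) (ht : t ≤ b) :
    edist (w s) (w t) ≤ ∫⁻ r in Icc s t, F r := by
  have hsub : ∀ r ∈ Icc s t, r ∈ Icc a b := fun r hr => ⟨hs.trans hr.1, hr.2.trans ht⟩
  choose! δ hδ hloc using hloc
  obtain ⟨x, hx0, hmono, ⟨m, hm⟩, hcov⟩ := exists_monotone_Icc_subset_open_cover_Icc hst
    (c := fun i : Icc s t => ball i (δ i)) (fun i => isOpen_ball) (by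
      intro i _
      exact mem_iUnion.2 ⟨i, mem_ball_self (hδ _ (hsub _ i.2))⟩)
  have hind : ∀ n, edist (w s) (w (x n)) ≤ ∫⁻ r in Icc s (x n : ℝ), F r := by
    intro n
    induction n with
    | zero => simp [hx0]
    | succ n ih =>
      obtain ⟨i, hi⟩ := hcov n
      have hle : (x n : ℝ) ≤ x (n + 1) := hmono n.le_succ
      have h1 := hi (left_mem_Icc.2 (hmono n.le_succ))
      have h2 := hi (right_mem_Icc.2 (hmono n.le_succ))
      rw [setLIntegral_Icc_add_Icc F (x n).2.1 hle]
      exact (edist_triangle _ (w (x n)) _).trans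
        (add_le_add ih (hloc i (hsub _ i.2) _ (hsub _ (x n).2) _ (hsub _ (x (n+1)).2) hle h1 h2))
  have := hind m
  rwa [hm m le_rfl] at this

/-! ### Coarse curves and the distance they induce -/

section Coarse

variable {T : Type*} [MetricSpace T]

/-- `c : ℝ → T` is `1`-Lipschitz up to jumps of size `δ`. -/
def IsCoarse (δ : ℝ) (c : ℝ → T) : Prop := ∀ s t, dist (c s) (c t) ≤ |s - t| + δ

/-- The infimum of the `h`-lengths of the coarse curves from `x` to `z`. -/
def coarseDist (h : T → ℝ≥0∞) (δ : ℝ) (x z : T) : ℝ≥0∞ :=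
  ⨅ (ℓ : ℝ) (c : ℝ → T) (_ : 0 ≤ ℓ ∧ IsCoarse δ c ∧ c 0 = x ∧ c ℓ = z),
    ∫⁻ t in Icc 0 ℓ, h (c t)

lemma IsCoarse.of_le {δ : ℝ} {c : ℝ → T} (h : ∀ s t, s ≤ t → dist (c s) (c t) ≤ t - s + δ) :
    IsCoarse δ c := by
  intro s t
  rcases le_total s t with hst | hst
  · rw [abs_sub_comm, abs_of_nonneg (sub_nonneg.2 hst)]
    exact h s t hst
  · rw [dist_comm, abs_of_nonneg (sub_nonneg.2 hst)]
    exact h t s hst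

lemma IsCoarse.dist_le {δ : ℝ} {c : ℝ → T} (h : IsCoarse δ c) {s t : ℝ} (hst : s ≤ t) :
    dist (c s) (c t) ≤ t - s + δ := by
  have := h s t
  rwa [abs_sub_comm, abs_of_nonneg (sub_nonneg.2 hst)] at this

lemma coarseDist_le {h : T → ℝ≥0∞} {δ ℓ : ℝ} {c : ℝ → T} (hℓ : 0 ≤ ℓ) (hc : IsCoarse δ c) :
    coarseDist h δ (c 0) (c ℓ) ≤ ∫⁻ t in Icc 0 ℓ, h (c t) :=
  iInf_le_of_le ℓ (iInf_le_of_le c (iInf_le_of_le ⟨hℓ, hc, rfl, rfl⟩ le_rfl))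

lemma coarseDist_self (h : T → ℝ≥0∞) {δ : ℝ} (hδ : 0 ≤ δ) (x : T) : coarseDist h δ x x = 0 := by
  have := coarseDist_le (h := h) (δ := δ) (ℓ := 0) (c := fun _ => x) le_rfl
    (fun s t => by rw [dist_self]; positivity)
  simpa using this

lemma coarseDist_finish_le (h : T → ℝ≥0∞) {δ : ℝ} (hδ : 0 ≤ δ) (x : T) (γ : UPath T) :
    coarseDist h δ x γ.finish ≤ coarseDist h δ x γ.start + γ.integral h := by
  have hγ : ∀ s t, γ.a ≤ s → s ≤ t → t ≤ γ.b → dist (γ.toFun s) (γ.toFun t) ≤ t - s := by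
    intro s t hs hst ht
    have := γ.lip.dist_le_mul s ⟨hs, hst.trans ht⟩ t ⟨hs.trans hst, ht⟩
    rwa [NNReal.coe_one, one_mul, Real.dist_eq, abs_sub_comm,
      abs_of_nonneg (sub_nonneg.2 hst)] at this
  have hab := γ.hab
  conv_rhs => rw [coarseDist]
  simp only [ENNReal.iInf_add]
  refine le_iInf fun ℓ => le_iInf fun c => le_iInf fun ⟨hℓ, hc, hc0, hcℓ⟩ => ?_
  let c' : ℝ → T := fun t => if t < ℓ then c t else γ.toFun (min (γ.a + (t - ℓ)) γ.b)
  have hlow : ∀ t < ℓ, c' t = c t := fun t ht => if_pos ht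
  have hhigh : ∀ t, ℓ ≤ t → c' t = γ.toFun (min (γ.a + (t - ℓ)) γ.b) :=
    fun t ht => if_neg (not_lt.2 ht)
  have hℓ' : c' ℓ = c ℓ := by
    rw [hhigh ℓ le_rfl, hcℓ]
    simp [hab, UPath.start]
  have hcoarse : IsCoarse δ c' := by
    refine IsCoarse.of_le fun s t hst => ?_
    have hmin : ∀ r, ℓ ≤ r → dist (γ.toFun γ.a) (c' r) ≤ r - ℓ := by
      intro r hr
      rw [hhigh r hr]
      refine (hγ _ _ le_rfl (le_min (by linarith) hab) (min_le_right _ _)).trans ?_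
      linarith [min_le_left (γ.a + (r - ℓ)) γ.b]
    rcases lt_or_ge t ℓ with ht | ht
    · rw [hlow t ht, hlow s (hst.trans_lt ht)]
      exact hc.dist_le hst
    · rcases lt_or_ge s ℓ with hs | hs
      · rw [hlow s hs]
        have h1 := hc.dist_le hs.le
        have h2 := hmin t ht
        have h3 := dist_triangle (c s) (c ℓ) (c' t)
        rw [hcℓ] at h1 h3
        change dist (c s) γ.start ≤ _ at h1
        change dist γ.start (c' t) ≤ _ at h2
        linarith
      · rw [hhigh s hs, hhigh t ht]
        refine (hγ _ _ (le_min (by linarith) hab) (min_le_min_right _ (by linarith))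
          (min_le_right _ _)).trans ?_
        rcases le_total (γ.a + (s - ℓ)) γ.b with h | h
        · rw [min_eq_left h]
          linarith [min_le_left (γ.a + (t - ℓ)) γ.b]
        · rw [min_eq_right h]
          linarith [min_le_right (γ.a + (t - ℓ)) γ.b]
  have h0 : c' 0 = x := by
    rcases hℓ.lt_or_eq with h | h
    · rw [hlow 0 h, hc0]
    · subst h
      rw [hℓ', hc0]
  have hend : c' (ℓ + (γ.b - γ.a)) = γ.finish := by
    rw [hhigh _ (by linarith)]
    simp [UPath.finish]
  have hle := coarseDist_le (h := h) (ℓ := ℓ + (γ.b - γ.a)) (by linarith) hcoarse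
  rw [h0, hend] at hle
  refine hle.trans (le_of_eq ?_)
  rw [setLIntegral_Icc_add_Icc _ hℓ (by linarith : ℓ ≤ ℓ + (γ.b - γ.a))]
  congr 1
  · refine setLIntegral_congr_fun measurableSet_Icc fun t ht => ?_
    rcases ht.2.lt_or_eq with h | h
    · simp only [hlow t h]
    · simp only [h, hℓ']
  · rw [UPath.integral, ← lintegral_indicator measurableSet_Icc,
      ← lintegral_indicator measurableSet_Icc,
      ← lintegral_add_right_eq_self _ (ℓ - γ.a)]
    congr 1
    ext t
    have : t + (ℓ - γ.a) ∈ Icc ℓ (ℓ + (γ.b - γ.a)) ↔ t ∈ Icc γ.a γ.b :=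
      ⟨fun h => ⟨by linarith [h.1], by linarith [h.2]⟩,
        fun h => ⟨by linarith [h.1], by linarith [h.2]⟩⟩
    by_cases ht : t ∈ Icc γ.a γ.b
    · rw [indicator_of_mem ht, indicator_of_mem (this.2 ht), hhigh _ (this.2 ht).1]
      congr 2
      rw [min_eq_left] <;> linarith [ht.2]
    · rw [indicator_of_notMem ht, indicator_of_notMem (this.not.2 ht)]

lemma isUpperGradient_coarseDist (h : T → ℝ≥0∞) {δ : ℝ} (hδ : 0 ≤ δ) (x : T)
    (hfin : ∀ z, coarseDist h δ x z ≠ ⊤) :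
    IsUpperGradient (fun z => (coarseDist h δ x z).toReal) h := by
  have key : ∀ γ : UPath T, ENNReal.ofReal ((coarseDist h δ x γ.finish).toReal -
      (coarseDist h δ x γ.start).toReal) ≤ γ.integral h := by
    intro γ
    by_cases htop : γ.integral h = ⊤
    · rw [htop]
      exact le_top
    rw [ENNReal.ofReal_le_iff_le_toReal htop, sub_le_iff_le_add',
      ← ENNReal.toReal_add (hfin _) htop]
    exact ENNReal.toReal_mono (ENNReal.add_ne_top.2 ⟨hfin _, htop⟩)
      (coarseDist_finish_le h hδ x γ)
  intro γ
  rw [edist_dist, Real.dist_eq]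
  rcases le_total (coarseDist h δ x γ.start).toReal (coarseDist h δ x γ.finish).toReal with hle | hle
  · rw [abs_sub_comm, abs_of_nonneg (sub_nonneg.2 hle)]
    exact key γ
  · rw [abs_of_nonneg (sub_nonneg.2 hle)]
    have := key γ.rev
    rwa [γ.rev_start, γ.rev_finish, γ.integral_rev] at this

lemma coarseDist_jump_le {h : T → ℝ≥0∞} {M : ℝ≥0∞} (hM : ∀ z, h z ≤ M) {δ : ℝ}
    (x : T) {z w : T} (hzw : dist z w ≤ δ) (hd : 0 < dist z w) :
    coarseDist h δ x w ≤ coarseDist h δ x z + M * ENNReal.ofReal (dist z w) := by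
  conv_rhs => rw [coarseDist]
  simp only [ENNReal.iInf_add]
  refine le_iInf fun ℓ => le_iInf fun c => le_iInf fun ⟨hℓ, hc, hc0, hcℓ⟩ => ?_
  set d := dist z w with hdd
  let c' : ℝ → T := fun t => if t < ℓ + d then c (min t ℓ) else w
  have hlow : ∀ t < ℓ + d, c' t = c (min t ℓ) := fun t ht => if_pos ht
  have hhigh : ∀ t, ℓ + d ≤ t → c' t = w := fun t ht => if_neg (not_lt.2 ht)
  have hcoarse : IsCoarse δ c' := by
    refine IsCoarse.of_le fun s t hst => ?_
    rcases lt_or_ge t (ℓ + d) with ht | ht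
    · rw [hlow t ht, hlow s (hst.trans_lt ht)]
      refine (hc.dist_le (min_le_min_right _ hst)).trans ?_
      rcases le_total s ℓ with h | h
      · rw [min_eq_left h]
        linarith [min_le_left t ℓ]
      · rw [min_eq_right h]
        linarith [min_le_right t ℓ]
    · rcases lt_or_ge s (ℓ + d) with hs | hs
      · rw [hlow s hs, hhigh t ht]
        rcases le_total s ℓ with h | h
        · rw [min_eq_left h]
          have h1 := hc.dist_le h
          have h3 := dist_triangle (c s) z w
          rw [hcℓ] at h1
          linarith
        · rw [min_eq_right h, hcℓ]
          linarith
      · rw [hhigh s hs, hhigh t ht, dist_self]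
        linarith
  have h0 : c' 0 = x := by rw [hlow 0 (by linarith), min_eq_left hℓ, hc0]
  have hend : c' (ℓ + d) = w := hhigh _ le_rfl
  have hle := coarseDist_le (h := h) (ℓ := ℓ + d) (by linarith) hcoarse
  rw [h0, hend] at hle
  refine hle.trans ?_
  rw [setLIntegral_Icc_add_Icc _ hℓ (by linarith : ℓ ≤ ℓ + d)]
  refine add_le_add ?_ ?_
  · refine le_of_eq (setLIntegral_congr_fun measurableSet_Icc fun t ht => ?_)
    simp only [hlow t (by linarith [ht.2]), min_eq_left ht.2]
  · refine (lintegral_mono fun t => hM (c' t)).trans (le_of_eq ?_)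
    simp

lemma coarseDist_le_add {h : T → ℝ≥0∞} {M : ℝ≥0∞} (hM : ∀ z, h z ≤ M) {δ : ℝ}
    (x : T) {z w : T} (hzw : dist z w ≤ δ) :
    coarseDist h δ x w ≤ coarseDist h δ x z + M * ENNReal.ofReal (dist z w) := by
  rcases (dist_nonneg (x := z) (y := w)).lt_or_eq with hd | hd
  · exact coarseDist_jump_le hM x hzw hd
  · obtain rfl := dist_eq_zero.1 hd.symm
    exact le_self_add

lemma coarseDist_ne_top [PreconnectedSpace T] {h : T → ℝ≥0∞} {M : ℝ≥0∞} (hM : ∀ z, h z ≤ M)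
    (hMtop : M ≠ ⊤) {δ : ℝ} (hδ : 0 < δ) (x z : T) : coarseDist h δ x z ≠ ⊤ := by
  have hiff : ∀ z w, dist z w < δ → coarseDist h δ x z ≠ ⊤ → coarseDist h δ x w ≠ ⊤ := by
    intro z w hzw hz
    exact ne_top_of_le_ne_top (ENNReal.add_ne_top.2 ⟨hz, ENNReal.mul_ne_top hMtop
      ENNReal.ofReal_ne_top⟩) (coarseDist_le_add hM x hzw.le)
  have hopen : IsOpen {z | coarseDist h δ x z ≠ ⊤} := Metric.isOpen_iff.2 fun z hz =>
    ⟨δ, hδ, fun w hw => hiff z w (by rwa [dist_comm]) hz⟩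
  have hclosed : IsClosed {z | coarseDist h δ x z ≠ ⊤} := by
    refine ⟨Metric.isOpen_iff.2 fun z hz => ⟨δ, hδ, fun w hw hw' => hz (hiff w z hw hw')⟩⟩
  have := IsClopen.eq_univ ⟨hclosed, hopen⟩ ⟨x, by simp [coarseDist_self h hδ.le x]⟩
  exact (eq_univ_iff_forall.1 this z :)

lemma continuous_coarseDist [PreconnectedSpace T] {h : T → ℝ≥0∞} {M : ℝ≥0∞} (hM : ∀ z, h z ≤ M)
    (hMtop : M ≠ ⊤) {δ : ℝ} (hδ : 0 < δ) (x : T) :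
    Continuous fun z => (coarseDist h δ x z).toReal := by
  have hfin := coarseDist_ne_top hM hMtop hδ x
  have key : ∀ z w, dist z w ≤ δ → (coarseDist h δ x w).toReal - (coarseDist h δ x z).toReal ≤
      M.toReal * dist z w := by
    intro z w hzw
    have h1 := ENNReal.toReal_mono (ENNReal.add_ne_top.2 ⟨hfin z, ENNReal.mul_ne_top hMtop
      ENNReal.ofReal_ne_top⟩) (coarseDist_le_add hM x hzw)
    rw [ENNReal.toReal_add (hfin z) (ENNReal.mul_ne_top hMtop ENNReal.ofReal_ne_top),
      ENNReal.toReal_mul, ENNReal.toReal_ofReal dist_nonneg] at h1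
    linarith
  refine continuous_iff_continuousAt.2 fun z => ?_
  refine tendsto_iff_dist_tendsto_zero.2 ?_
  have ht : Tendsto (fun w => M.toReal * dist w z) (𝓝 z) (𝓝 0) := by
    have : Continuous fun w => M.toReal * dist w z := by fun_prop
    simpa using this.tendsto z
  refine squeeze_zero' (Eventually.of_forall fun _ => dist_nonneg) ?_ ht
  filter_upwards [Metric.closedBall_mem_nhds z hδ] with w hw
  rw [Real.dist_eq, abs_le]
  have h1 := key w z hw
  have h2 := key z w (by rwa [dist_comm])
  rw [dist_comm] at h2
  constructor <;> linarith

end Coarse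

/-! ### Telescoping along shrinking balls -/

section Telescoping

lemma ofReal_abs_setAverage_sub_mul_le {T : Type*} [MeasurableSpace T] {μ : Measure T} {u : T → ℝ} {B : Set T} (hu : IntegrableOn u B μ)
    (h0 : μ B ≠ 0) (htop : μ B ≠ ⊤) (c : ℝ) :
    ENNReal.ofReal |(⨍ y in B, u y ∂μ) - c| * μ B ≤ ∫⁻ y in B, ENNReal.ofReal |u y - c| ∂μ := by
  have hpos : 0 < (μ B).toReal := ENNReal.toReal_pos h0 htop
  have hc : IntegrableOn (fun _ : T => c) B μ := integrableOn_const htop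
  have h1 : (⨍ y in B, u y ∂μ) - c = (μ B).toReal⁻¹ * ∫ y in B, (u y - c) ∂μ := by
    rw [setAverage_eq, integral_sub hu hc, setIntegral_const, smul_eq_mul, smul_eq_mul,
      mul_sub, Measure.real, inv_mul_cancel_left₀ hpos.ne']
  have h2 : |(⨍ y in B, u y ∂μ) - c| * (μ B).toReal ≤ ∫ y in B, |u y - c| ∂μ := by
    rw [h1, abs_mul, abs_of_pos (inv_pos.2 hpos), mul_comm, mul_inv_cancel_left₀ hpos.ne']
    exact abs_integral_le_integral_abs
  calc ENNReal.ofReal |(⨍ y in B, u y ∂μ) - c| * μ B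
      = ENNReal.ofReal (|(⨍ y in B, u y ∂μ) - c| * (μ B).toReal) := by
        rw [ENNReal.ofReal_mul (abs_nonneg _), ENNReal.ofReal_toReal htop]
    _ ≤ ENNReal.ofReal (∫ y in B, |u y - c| ∂μ) := ENNReal.ofReal_le_ofReal h2
    _ = _ := ofReal_integral_eq_lintegral_ofReal (hu.sub hc).abs
        (Eventually.of_forall fun _ => abs_nonneg _)

lemma IsDoubling.ne_top {T : Type*} [MetricSpace T] [MeasurableSpace T] {μ : Measure T} {Cμ : ℝ≥0∞} (h : IsDoubling μ Cμ)
    (hd : 0 < Metric.diam (univ : Set T)) : Cμ ≠ ⊤ := by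
  intro htop
  have hne : Nonempty T := by
    by_contra hne
    rw [not_nonempty_iff] at hne
    simp [Set.univ_eq_empty_iff.2 hne] at hd
  obtain ⟨x⟩ := hne
  have h1 := h x (diam (univ : Set T) / 4) (by linarith) (by linarith)
  have h2 := h x (diam (univ : Set T) / 4 / 2) (by linarith) (by linarith)
  have h3 : (2 : ℝ) * (diam (univ : Set T) / 4 / 2) = diam (univ : Set T) / 4 := by ring
  rw [h3] at h2
  have := h1.2.2
  rw [htop, ENNReal.top_mul h2.1.ne'] at this
  exact this.ne rfl

variable {T : Type*} [MetricSpace T] [MeasurableSpace T]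

/-- Mean values over comparable balls differ by at most the scaled mean of an upper gradient. -/
lemma abs_setAverage_sub_setAverage_le {μ : Measure T} [IsFiniteMeasure μ] {CP lP : ℝ}
    (hPI : SupportsPoincare μ CP lP) {u : T → ℝ} {H : T → ℝ≥0∞} (hu : Integrable u μ)
    (hH : Measurable H) (huH : IsUpperGradient u H) {x : T} {r l : ℝ} (hr : 0 < r) (hl : 0 ≤ l)
    (havg : ∫⁻ y in ball x (lP * r), H y ∂μ ≤ ENNReal.ofReal l * μ (ball x (lP * r)))
    {B : Set T} (hB : B ⊆ ball x r) {K : ℝ} (hK : 0 ≤ K)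
    (hμB : μ (ball x r) ≤ ENNReal.ofReal K * μ B) :
    |(⨍ y in B, u y ∂μ) - ⨍ y in ball x r, u y ∂μ| ≤ K * (2 * max CP 0 * r * l) := by
  have hball := hPI.1 x r hr
  have hB0 : μ B ≠ 0 := by
    intro h
    rw [h, mul_zero] at hμB
    exact hball.1.not_ge hμB
  have hBtop : μ B ≠ ⊤ := measure_ne_top _ _
  have hP := hPI.2 u H hu.locallyIntegrable hH huH x r hr
  set c := ⨍ y in ball x r, u y ∂μ
  have h1 := ofReal_abs_setAverage_sub_mul_le (μ := μ) hu.integrableOn hB0 hBtop c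
  have h2 : (∫⁻ y in ball x (lP * r), H y ∂μ) / μ (ball x (lP * r)) ≤ ENNReal.ofReal l :=
    ENNReal.div_le_of_le_mul havg
  have h3 : ENNReal.ofReal (CP * diam (ball x r)) ≤ ENNReal.ofReal (2 * max CP 0 * r) := by
    refine ENNReal.ofReal_le_ofReal ?_
    calc CP * diam (ball x r) ≤ max CP 0 * diam (ball x r) := by
          gcongr
          exact le_max_left _ _
      _ ≤ max CP 0 * (2 * r) := by
          gcongr
          exact diam_ball hr.le
      _ = _ := by ring
  have h4 : ∫⁻ y in ball x r, ENNReal.ofReal |u y - c| ∂μ ≤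
      ENNReal.ofReal (2 * max CP 0 * r * l) * μ (ball x r) := by
    rw [ENNReal.ofReal_mul (p := 2 * max CP 0 * r) (by positivity)]
    have := hP.trans (mul_le_mul' h3 h2)
    rwa [ENNReal.div_le_iff hball.1.ne' hball.2.ne] at this
  have h5 : ENNReal.ofReal |(⨍ y in B, u y ∂μ) - c| * μ B ≤
      ENNReal.ofReal (K * (2 * max CP 0 * r * l)) * μ B := by
    refine h1.trans ((lintegral_mono_set hB).trans (h4.trans ?_))
    rw [mul_comm K, ENNReal.ofReal_mul (q := K) (by positivity), mul_assoc (ENNReal.ofReal _)]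
    exact mul_le_mul_right hμB _
  rw [ENNReal.mul_le_mul_iff_left hB0 hBtop] at h5
  exact (ENNReal.ofReal_le_ofReal_iff (by positivity)).1 h5

variable [BorelSpace T]

/-- The telescoping estimate at a point of continuity. -/
lemma abs_sub_setAverage_le {μ : Measure T} [IsFiniteMeasure μ] {Cμ : ℝ≥0∞} {CP lP : ℝ}
    (hdbl : IsDoubling μ Cμ) (hCμ : Cμ ≠ ⊤)
    (hPI : SupportsPoincare μ CP lP) {u : T → ℝ} {H : T → ℝ≥0∞} (hu : Integrable u μ)
    (hcont : Continuous u) (hH : Measurable H) (huH : IsUpperGradient u H) {x : T} {r l : ℝ}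
    (hr : 0 < r) (hl : 0 ≤ l) (hrd : r < diam (univ : Set T))
    (havg : ∀ s, s ≤ max lP 1 * r → ∫⁻ y in ball x s, H y ∂μ ≤ ENNReal.ofReal l * μ (ball x s)) :
    |u x - ⨍ y in ball x r, u y ∂μ| ≤ 4 * Cμ.toReal * max CP 0 * r * l := by
  have hstep : ∀ n : ℕ, |(⨍ y in ball x (r / 2 ^ (n + 1)), u y ∂μ) -
      ⨍ y in ball x (r / 2 ^ n), u y ∂μ| ≤
        Cμ.toReal * (2 * max CP 0 * (r / 2 ^ n) * l) := by
    intro n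
    have hle : r / 2 ^ n ≤ r := div_le_self hr.le (one_le_pow₀ (by norm_num))
    have hle' : r / 2 ^ (n + 1) ≤ r := div_le_self hr.le (one_le_pow₀ (by norm_num))
    have hpos : 0 < r / 2 ^ n := by positivity
    have heq : 2 * (r / 2 ^ (n + 1)) = r / 2 ^ n := by
      rw [pow_succ]
      field_simp
    refine abs_setAverage_sub_setAverage_le hPI hu hH huH hpos hl (havg _ ?_)
      (ball_subset_ball (by linarith)) ENNReal.toReal_nonneg ?_
    · exact mul_le_mul (le_max_left _ _) hle hpos.le (by positivity)
    · have := (hdbl x (r / 2 ^ (n + 1)) (by positivity) (hle'.trans_lt hrd)).2.1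
      rwa [heq, ← ENNReal.ofReal_toReal hCμ] at this
  have hsum : ∀ n : ℕ, |(⨍ y in ball x (r / 2 ^ n), u y ∂μ) - ⨍ y in ball x r, u y ∂μ| ≤
      4 * Cμ.toReal * max CP 0 * r * l * (1 - 1 / 2 ^ n) := by
    intro n
    induction n with
    | zero => simp
    | succ n ih =>
      refine (abs_sub_le _ (⨍ y in ball x (r / 2 ^ n), u y ∂μ) _).trans
        ((add_le_add (hstep n) ih).trans (le_of_eq ?_))
      rw [pow_succ]
      field_simp
      ring
  have hC : 0 ≤ 4 * Cμ.toReal * max CP 0 * r * l := by positivity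
  have hlim : Tendsto (fun n : ℕ => ⨍ y in ball x (r / 2 ^ n), u y ∂μ) atTop (𝓝 (u x)) := by
    refine Metric.tendsto_atTop.2 fun ε hε => ?_
    obtain ⟨δ, hδ, hball⟩ := Metric.continuous_iff.1 hcont x (ε / 2) (by positivity)
    have hr0 : Tendsto (fun n : ℕ => r / 2 ^ n) atTop (𝓝 0) := by
      have := (tendsto_pow_atTop_nhds_zero_of_lt_one (r := (2⁻¹ : ℝ)) (by norm_num)
        (by norm_num)).const_mul r
      simpa [div_eq_mul_inv] using this
    obtain ⟨N, hN⟩ := eventually_atTop.1 (hr0.eventually_lt_const hδ)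
    refine ⟨N, fun n hn => ?_⟩
    have hb := hPI.1 x (r / 2 ^ n) (by positivity)
    have h1 := ofReal_abs_setAverage_sub_mul_le (μ := μ) (u := u)
      hu.integrableOn hb.1.ne' hb.2.ne (u x)
    have h2 : ∫⁻ y in ball x (r / 2 ^ n), ENNReal.ofReal |u y - u x| ∂μ ≤
        ENNReal.ofReal (ε / 2) * μ (ball x (r / 2 ^ n)) := by
      rw [← setLIntegral_const]
      refine setLIntegral_mono' measurableSet_ball fun y hy => ENNReal.ofReal_le_ofReal ?_
      exact (hball y ((mem_ball.1 hy).trans (hN n hn))).le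
    have h3 := h1.trans h2
    rw [ENNReal.mul_le_mul_iff_left hb.1.ne' hb.2.ne,
      ENNReal.ofReal_le_ofReal_iff (by positivity)] at h3
    rw [Real.dist_eq]
    linarith
  refine le_of_tendsto ((hlim.sub_const _).abs) (Eventually.of_forall fun n => (hsum n).trans ?_)
  exact mul_le_of_le_one_right hC (by
    have : (0 : ℝ) ≤ 1 / 2 ^ n := by positivity
    linarith)

/-- Pointwise estimate for a continuous function in terms of the means of an upper gradient over
balls centred at the two points. -/
lemma abs_sub_le_of_avg_le {μ : Measure T} [IsFiniteMeasure μ] {Cμ : ℝ≥0∞} {CP lP : ℝ}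
    (hdbl : IsDoubling μ Cμ) (hCμ : Cμ ≠ ⊤)
    (hPI : SupportsPoincare μ CP lP) {u : T → ℝ} {H : T → ℝ≥0∞} (hu : Integrable u μ)
    (hcont : Continuous u) (hH : Measurable H) (huH : IsUpperGradient u H) {x y : T} {l : ℝ}
    (hxy : 0 < dist x y) (hl : 0 ≤ l) (hrd : 2 * dist x y < diam (univ : Set T))
    (hx : ∀ s, s ≤ 2 * max lP 1 * dist x y →
      ∫⁻ y in ball x s, H y ∂μ ≤ ENNReal.ofReal l * μ (ball x s))
    (hy : ∀ s, s ≤ 2 * max lP 1 * dist x y →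
      ∫⁻ z in ball y s, H z ∂μ ≤ ENNReal.ofReal l * μ (ball y s)) :
    |u x - u y| ≤ (12 * Cμ.toReal + 4 * Cμ.toReal ^ 2) * max CP 0 * dist x y * l := by
  set r := dist x y
  have hm : 0 < max lP 1 := by positivity
  have h1 := abs_sub_setAverage_le hdbl hCμ hPI hu hcont hH huH (x := x) (r := 2 * r) (l := l)
    (by positivity) hl hrd (fun s hs => hx s (by linarith))
  have h2 := abs_sub_setAverage_le hdbl hCμ hPI hu hcont hH huH (x := y) (r := r) (l := l)
    hxy hl (by linarith) (fun s hs => hy s (by nlinarith))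
  have h3 := abs_setAverage_sub_setAverage_le hPI hu hH huH (x := x) (r := 2 * r) (l := l)
    (by positivity) hl (hx _ (by nlinarith [le_max_left lP 1])) (B := ball y r)
    (ball_subset_ball' (by rw [dist_comm]; linarith)) (K := Cμ.toReal ^ 2) (by positivity) (by
      have ha := (hdbl y r hxy (by linarith)).2.1
      have hb := (hdbl y (2 * r) (by positivity) hrd).2.1
      calc μ (ball x (2 * r)) ≤ μ (ball y (2 * (2 * r))) :=
            measure_mono (ball_subset_ball' (by linarith))
        _ ≤ Cμ * μ (ball y (2 * r)) := hb
        _ ≤ Cμ * (Cμ * μ (ball y r)) := by gcongr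
        _ = _ := by
          rw [← mul_assoc, sq, ENNReal.ofReal_mul ENNReal.toReal_nonneg,
            ENNReal.ofReal_toReal hCμ])
  rw [abs_sub_comm] at h2
  have h4 := abs_sub_le (u x) (⨍ y in ball x (2 * r), u y ∂μ) (u y)
  have h5 := abs_sub_le (⨍ y in ball x (2 * r), u y ∂μ) (⨍ z in ball y r, u z ∂μ) (u y)
  rw [abs_sub_comm (⨍ y in ball x (2 * r), u y ∂μ) (⨍ z in ball y r, u z ∂μ)] at h5
  linarith

end Telescoping

/-! ### Lipschitz regularization of lower semicontinuous functions -/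

section Regularization

variable {T : Type*} [MetricSpace T]

/-- The increasing Lipschitz approximations of a lower semicontinuous function. -/
def infConv (g : T → ℝ≥0∞) (j : ℕ) (z : T) : ℝ≥0∞ := ⨅ w, (min (g w) j + j * edist z w)

lemma infConv_le (g : T → ℝ≥0∞) (j : ℕ) (z : T) : infConv g j z ≤ min (g z) j :=
  (iInf_le _ z).trans (by simp)

lemma infConv_le_add (g : T → ℝ≥0∞) (j : ℕ) (z w : T) :
    infConv g j z ≤ infConv g j w + j * edist z w := by
  conv_rhs => rw [infConv]
  rw [ENNReal.iInf_add]
  refine le_iInf fun v => (iInf_le _ v).trans ?_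
  rw [add_assoc, ← mul_add, add_comm (edist w v)]
  gcongr
  exact edist_triangle _ _ _

lemma monotone_infConv (g : T → ℝ≥0∞) : Monotone (infConv g) := by
  intro i j hij z
  refine iInf_mono fun w => ?_
  have : (i : ℝ≥0∞) ≤ j := by exact_mod_cast hij
  gcongr

lemma measurable_infConv [MeasurableSpace T] [BorelSpace T] (g : T → ℝ≥0∞) (j : ℕ) :
    Measurable (infConv g j) := by
  have : UpperSemicontinuous (infConv g j) := by
    refine upperSemicontinuous_iInf fun w => Continuous.upperSemicontinuous ?_
    exact continuous_const.add ((ENNReal.continuous_const_mul (ENNReal.natCast_ne_top j)).comp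
      (continuous_id.edist continuous_const))
  exact this.measurable

lemma iSup_infConv {g : T → ℝ≥0∞} (hg : LowerSemicontinuous g) (z : T) :
    ⨆ j, infConv g j z = g z := by
  refine le_antisymm (iSup_le fun j => (infConv_le g j z).trans (min_le_left _ _)) ?_
  refine le_of_forall_lt fun a ha => ?_
  obtain ⟨b, hab, hb⟩ := exists_between ha
  obtain ⟨δ, hδ, hball⟩ := EMetric.mem_nhds_iff.1 (hg z b hb)
  obtain ⟨i, hi⟩ := ENNReal.exists_nat_gt hb.ne_top
  obtain ⟨n, hn⟩ := ENNReal.exists_nat_mul_gt hδ.ne' hb.ne_top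
  refine hab.trans_le (le_iSup_of_le (max i n) (le_iInf fun w => ?_))
  by_cases hw : edist z w < δ
  · refine le_add_right (le_min ?_ ?_)
    · exact (hball (by rwa [Metric.mem_eball, edist_comm])).le
    · refine hi.le.trans ?_
      exact_mod_cast le_max_left i n
  · refine le_add_left (hn.le.trans ?_)
    have : (n : ℝ≥0∞) ≤ (max i n : ℕ) := by exact_mod_cast le_max_right i n
    gcongr
    exact not_lt.1 hw

end Regularization

/-! ### Existence of short paths with small line integral -/

section Paths

variable {T : Type*} [MetricSpace T] [MeasurableSpace T] [BorelSpace T] [CompactSpace T]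

/-- Coarse curves subconverge to Lipschitz curves, with lower semicontinuous line integrals. -/
lemma exists_lipschitz_of_isCoarse {g : T → ℝ≥0∞} (hg : LowerSemicontinuous g) {L : ℝ}
    {c : ℕ → ℝ → T} {δ : ℕ → ℝ} (hδ : Tendsto δ atTop (𝓝 0))
    (hc : ∀ k, IsCoarse (δ k) (c k)) {x y : T} (hx : ∀ k, c k 0 = x) (hy : ∀ k, c k L = y)
    {A : ℝ≥0∞} (hA : ∀ k, ∫⁻ t in Icc 0 L, infConv g k (c k t) ≤ A) :
    ∃ e : ℝ → T, LipschitzWith 1 e ∧ e 0 = x ∧ e L = y ∧ ∫⁻ t in Icc 0 L, g (e t) ≤ A := by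
  let F : Ultrafilter ℕ := hyperfilter ℕ
  have hF : (F : Filter ℕ) ≤ atTop := by
    rw [← Nat.cofinite_eq_atTop]
    exact hyperfilter_le_cofinite
  have hlim : ∀ t, ∃ z, Tendsto (fun k => c k t) F (𝓝 z) := fun t => by
    obtain ⟨z, -, hz⟩ := isCompact_univ.ultrafilter_le_nhds (F.map fun k => c k t) (by simp)
    exact ⟨z, hz⟩
  choose e he using hlim
  have hlip : LipschitzWith 1 e := by
    refine LipschitzWith.of_dist_le_mul fun s t => ?_
    rw [NNReal.coe_one, one_mul, Real.dist_eq]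
    have h1 : Tendsto (fun k => |s - t| + δ k) F (𝓝 (|s - t| + 0)) :=
      tendsto_const_nhds.add (hδ.mono_left hF)
    rw [add_zero] at h1
    exact le_of_tendsto_of_tendsto ((he s).dist (he t)) h1 (Eventually.of_forall fun k => hc k s t)
  have hclose : ∀ (j : ℕ) (ε : ℝ), 0 < ε → ∃ k ≥ j, ∀ t ∈ Icc 0 L, dist (e t) (c k t) ≤ ε := by
    intro j ε hε
    obtain ⟨s, -, hsfin, hs⟩ := (isCompact_Icc (a := (0 : ℝ)) (b := L)).finite_cover_balls
      (e := ε / 4) (by positivity)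
    have h1 : ∀ᶠ k in (F : Filter ℕ), ∀ t ∈ s, dist (c k t) (e t) < ε / 4 :=
      (eventually_all_finite hsfin).2 fun t _ =>
        (he t).eventually (ball_mem_nhds _ (by positivity))
    have h2 : ∀ᶠ k in (F : Filter ℕ), δ k < ε / 4 :=
      hF (hδ.eventually_lt_const (by positivity))
    obtain ⟨k, hk1, hk2, hk3⟩ := (h1.and (h2.and (hF (eventually_ge_atTop j)))).exists
    refine ⟨k, hk3, fun t ht => ?_⟩
    obtain ⟨t', ht', htt'⟩ := mem_iUnion₂.1 (hs ht)
    rw [mem_ball, Real.dist_eq] at htt'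
    have h3 := hlip.dist_le_mul t t'
    rw [NNReal.coe_one, one_mul, Real.dist_eq] at h3
    have h4 := hc k t' t
    rw [abs_sub_comm] at h4
    have h5 := hk1 t' ht'
    rw [dist_comm] at h5
    have h6 := dist_triangle4 (e t) (e t') (c k t') (c k t)
    linarith
  refine ⟨e, hlip, tendsto_nhds_unique (he 0) (by simp [hx]),
    tendsto_nhds_unique (he L) (by simp [hy]), ?_⟩
  have hj : ∀ j, ∫⁻ t in Icc 0 L, infConv g j (e t) ≤ A := by
    intro j
    have hM : (j : ℝ≥0∞) * ENNReal.ofReal L ≠ ⊤ :=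
      ENNReal.mul_ne_top (ENNReal.natCast_ne_top j) ENNReal.ofReal_ne_top
    have h1 : ∀ ε : ℝ, 0 < ε → ∫⁻ t in Icc 0 L, infConv g j (e t) ≤
        A + ENNReal.ofReal ε * (j * ENNReal.ofReal L) := by
      intro ε hε
      obtain ⟨k, hk, hclose⟩ := hclose j ε hε
      calc ∫⁻ t in Icc 0 L, infConv g j (e t)
          ≤ ∫⁻ t in Icc 0 L, (infConv g k (c k t) + j * ENNReal.ofReal ε) := by
            refine setLIntegral_mono' measurableSet_Icc fun t ht => ?_
            refine (infConv_le_add g j _ (c k t)).trans (add_le_add (monotone_infConv g hk _) ?_)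
            gcongr
            rw [edist_dist]
            exact ENNReal.ofReal_le_ofReal (hclose t ht)
        _ = (∫⁻ t in Icc 0 L, infConv g k (c k t)) + j * ENNReal.ofReal ε * ENNReal.ofReal L := by
            rw [lintegral_add_right _ measurable_const, setLIntegral_const, Real.volume_Icc,
              sub_zero]
        _ ≤ _ := by
            gcongr ?_ + ?_
            · exact hA k
            · exact le_of_eq (by ring)
    have h2 : Tendsto (fun n : ℕ => A + ENNReal.ofReal (1 / ((n : ℝ) + 1)) *
        (j * ENNReal.ofReal L)) atTop (𝓝 (A + ENNReal.ofReal 0 * (j * ENNReal.ofReal L))) :=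
      tendsto_const_nhds.add (ENNReal.Tendsto.mul_const
        (ENNReal.tendsto_ofReal tendsto_one_div_add_atTop_nhds_zero_nat) (Or.inr hM))
    have h3 := ge_of_tendsto' h2 fun n => h1 (1 / ((n : ℝ) + 1)) (by positivity)
    simpa using h3
  have h : ∀ t, g (e t) = ⨆ j, infConv g j (e t) := fun t => (iSup_infConv hg _).symm
  simp_rw [h]
  rw [lintegral_iSup (f := fun j t => infConv g j (e t))
    (fun j => (measurable_infConv g j).comp hlip.continuous.measurable)
    (fun i j hij t => monotone_infConv g hij (e t))]
  exact iSup_le hj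

/-- Points at which the mean values of `g` are small can be joined by a path which is not much
longer than their distance and along which `g` has a small integral. -/
lemma exists_path_integral_le [PreconnectedSpace T] {μ : Measure T} [IsFiniteMeasure μ]
    {Cμ : ℝ≥0∞} {CP lP : ℝ}
    (hdbl : IsDoubling μ Cμ) (hCμ : Cμ ≠ ⊤) (hPI : SupportsPoincare μ CP lP)
    {g : T → ℝ≥0∞} (hg : LowerSemicontinuous g) {x y : T} {l : ℝ}
    (hxy : 0 < dist x y) (hl : 0 < l) (hrd : 2 * dist x y < diam (univ : Set T))
    (hx : ∀ s, s ≤ 2 * max lP 1 * dist x y →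
      ∫⁻ z in ball x s, g z ∂μ ≤ ENNReal.ofReal l * μ (ball x s))
    (hy : ∀ s, s ≤ 2 * max lP 1 * dist x y →
      ∫⁻ z in ball y s, g z ∂μ ≤ ENNReal.ofReal l * μ (ball y s))
    (hgy : g y ≤ ENNReal.ofReal l) {L : ℝ}
    (hL : L = (2 * ((12 * Cμ.toReal + 4 * Cμ.toReal ^ 2) * max CP 0) + 1) * dist x y) :
    ∃ e : ℝ → T, LipschitzWith 1 e ∧ e 0 = x ∧ e L = y ∧
      ∫⁻ t in Icc 0 L, g (e t) ≤ ENNReal.ofReal (3 * l * L) := by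
  set K := (12 * Cμ.toReal + 4 * Cμ.toReal ^ 2) * max CP 0 with hK
  have hK0 : 0 ≤ K := by positivity
  have hL0 : 0 ≤ L := by rw [hL]; positivity
  have hstep : ∀ k : ℕ, ∃ c : ℝ → T, IsCoarse (1 / ((k : ℝ) + 1)) c ∧ c 0 = x ∧ c L = y ∧
      ∫⁻ t in Icc 0 L, infConv g k (c t) ≤ ENNReal.ofReal (3 * l * L) := by
    intro k
    set δ : ℝ := 1 / ((k : ℝ) + 1)
    have hδ : 0 < δ := by positivity
    set h : T → ℝ≥0∞ := fun z => ENNReal.ofReal l + infConv g k z with hh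
    have hmeas : Measurable h := measurable_const.add (measurable_infConv g k)
    have hM : ∀ z, h z ≤ ENNReal.ofReal l + k := fun z =>
      add_le_add le_rfl ((infConv_le g k z).trans (min_le_right _ _))
    have hMtop : ENNReal.ofReal l + (k : ℝ≥0∞) ≠ ⊤ := by finiteness
    have hcont := continuous_coarseDist hM hMtop hδ x
    have hup := isUpperGradient_coarseDist h hδ.le x (coarseDist_ne_top hM hMtop hδ x)
    have h2l : ENNReal.ofReal (2 * l) = ENNReal.ofReal l + ENNReal.ofReal l := by
      rw [two_mul, ENNReal.ofReal_add hl.le hl.le]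
    have havg : ∀ (w : T) (s : ℝ), ∫⁻ z in ball w s, g z ∂μ ≤ ENNReal.ofReal l * μ (ball w s) →
        ∫⁻ z in ball w s, h z ∂μ ≤ ENNReal.ofReal (2 * l) * μ (ball w s) := by
      intro w s hw
      rw [hh, lintegral_add_left measurable_const, setLIntegral_const, h2l, add_mul]
      gcongr
      exact (lintegral_mono fun z => (infConv_le g k z).trans (min_le_left _ _)).trans hw
    have hest := abs_sub_le_of_avg_le hdbl hCμ hPI
      (hcont.integrable_of_hasCompactSupport (HasCompactSupport.of_compactSpace _))
      hcont hmeas hup hxy (by positivity : (0 : ℝ) ≤ 2 * l) hrd (fun s hs => havg x s (hx s hs))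
      (fun s hs => havg y s (hy s hs))
    rw [coarseDist_self h hδ.le, ENNReal.toReal_zero, zero_sub, abs_neg,
      abs_of_nonneg ENNReal.toReal_nonneg, ← hK] at hest
    have hlt : coarseDist h δ x y < ENNReal.ofReal (l * L) := by
      rw [ENNReal.lt_ofReal_iff_toReal_lt (coarseDist_ne_top hM hMtop hδ x y)]
      refine hest.trans_lt ?_
      rw [hL]
      nlinarith [mul_pos hl hxy]
    simp only [coarseDist, iInf_lt_iff] at hlt
    obtain ⟨ℓ, c, ⟨hℓ, hc, hc0, hcℓ⟩, hint⟩ := hlt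
    have hℓL : ℓ ≤ L := by
      have h1 : ENNReal.ofReal (l * ℓ) ≤ ∫⁻ t in Icc 0 ℓ, h (c t) := by
        calc ENNReal.ofReal (l * ℓ) = ∫⁻ t in Icc 0 ℓ, ENNReal.ofReal l := by
              rw [setLIntegral_const, Real.volume_Icc, sub_zero, ENNReal.ofReal_mul hl.le]
          _ ≤ _ := lintegral_mono fun t => le_self_add
      have h2 := (ENNReal.ofReal_lt_ofReal_iff_of_nonneg (by positivity)).1 (h1.trans_lt hint)
      exact (lt_of_mul_lt_mul_left h2 hl.le).le
    refine ⟨fun t => c (min t ℓ), fun s t => (hc _ _).trans ?_, ?_, ?_, ?_⟩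
    · refine add_le_add ?_ le_rfl
      refine (abs_min_sub_min_le_max s ℓ t ℓ).trans (max_le le_rfl ?_)
      simp
    · simp [hℓ, hc0]
    · simp [hℓL, hcℓ]
    · have hhy : h y ≤ ENNReal.ofReal (2 * l) := by
        rw [h2l]
        exact add_le_add le_rfl ((infConv_le g k y).trans ((min_le_left _ _).trans hgy))
      calc ∫⁻ t in Icc 0 L, infConv g k (c (min t ℓ))
          ≤ ∫⁻ t in Icc 0 L, h (c (min t ℓ)) := lintegral_mono fun t => le_add_self
        _ = (∫⁻ t in Icc 0 ℓ, h (c (min t ℓ))) + ∫⁻ t in Icc ℓ L, h (c (min t ℓ)) :=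
            setLIntegral_Icc_add_Icc (fun t => h (c (min t ℓ))) hℓ hℓL
        _ ≤ ENNReal.ofReal (l * L) + ∫⁻ t in Icc ℓ L, ENNReal.ofReal (2 * l) := by
            refine add_le_add ?_ ?_
            · refine le_trans (le_of_eq ?_) hint.le
              exact setLIntegral_congr_fun measurableSet_Icc fun t ht => by
                simp only [min_eq_left ht.2]
            · refine setLIntegral_mono' measurableSet_Icc fun t ht => ?_
              rw [min_eq_right ht.1, hcℓ]
              exact hhy
        _ ≤ ENNReal.ofReal (l * L) + ENNReal.ofReal (2 * l * L) := by
            rw [setLIntegral_const, Real.volume_Icc, ENNReal.ofReal_mul (p := 2 * l) (by positivity)]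
            gcongr
            linarith
        _ = _ := by
            rw [← ENNReal.ofReal_add (by positivity) (by positivity)]
            congr 1
            ring
  choose c hc hc0 hcL hcint using hstep
  exact exists_lipschitz_of_isCoarse hg tendsto_one_div_add_atTop_nhds_zero_nat hc hc0 hcL hcint

end Paths

/-! ### A weak type estimate -/

section WeakType

variable {T : Type*} [MetricSpace T] [MeasurableSpace T]

/-- The union of the balls of radius at most `S` on which the mean value of `g` exceeds `l`. -/
def highSet (μ : Measure T) (g : T → ℝ≥0∞) (S l : ℝ) : Set T :=
  {x | ∃ (z : T) (s : ℝ), 0 < s ∧ s ≤ S ∧ x ∈ ball z s ∧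
    ENNReal.ofReal l * μ (ball z s) < ∫⁻ w in ball z s, g w ∂μ}

lemma isOpen_highSet (μ : Measure T) (g : T → ℝ≥0∞) (S l : ℝ) : IsOpen (highSet μ g S l) := by
  refine isOpen_iff_forall_mem_open.2 fun x ⟨z, s, hs, hsS, hx, h⟩ =>
    ⟨ball z s, fun w hw => ⟨z, s, hs, hsS, hw, h⟩, isOpen_ball, hx⟩

lemma highSet_anti (μ : Measure T) (g : T → ℝ≥0∞) (S : ℝ) : Antitone (highSet μ g S) := by
  rintro l l' hl x ⟨z, s, hs, hsS, hx, h⟩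
  refine ⟨z, s, hs, hsS, hx, lt_of_le_of_lt ?_ h⟩
  gcongr

lemma lintegral_ball_le_of_notMem_highSet {μ : Measure T} {g : T → ℝ≥0∞} {S l : ℝ} {x : T}
    (hx : x ∉ highSet μ g S l) {s : ℝ} (hs : s ≤ S) :
    ∫⁻ w in ball x s, g w ∂μ ≤ ENNReal.ofReal l * μ (ball x s) := by
  rcases le_or_gt s 0 with h0 | h0
  · simp [ball_eq_empty.2 h0]
  · by_contra! h
    exact hx ⟨x, s, h0, hs, mem_ball_self h0, h⟩

lemma le_of_notMem_highSet [BorelSpace T] {μ : Measure T} {CP lP : ℝ}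
    (hPI : SupportsPoincare μ CP lP) {g : T → ℝ≥0∞} (hg : LowerSemicontinuous g) {S l : ℝ}
    (hS : 0 < S) {x : T} (hx : x ∉ highSet μ g S l) : g x ≤ ENNReal.ofReal l := by
  by_contra! h
  obtain ⟨b, hlb, hb⟩ := exists_between h
  obtain ⟨δ, hδ, hball⟩ := Metric.mem_nhds_iff.1 (hg x b hb)
  have hs : 0 < min δ S := lt_min hδ hS
  have h1 := lintegral_ball_le_of_notMem_highSet hx (min_le_right δ S)
  have h2 := hPI.1 x _ hs
  have h3 : b * μ (ball x (min δ S)) ≤ ∫⁻ w in ball x (min δ S), g w ∂μ := by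
    rw [← setLIntegral_const]
    exact setLIntegral_mono' measurableSet_ball fun w hw =>
      (hball (ball_subset_ball (min_le_left _ _) hw)).le
  exact hlb.not_ge ((ENNReal.mul_le_mul_iff_left h2.1.ne' h2.2.ne).1 (h3.trans h1))

lemma rpow_mul_measure_le_of_lt_lintegral {T : Type*} [MeasurableSpace T] {μ : Measure T}
    [IsFiniteMeasure μ] {g : T → ℝ≥0∞} {p : ℝ} (hp : 1 ≤ p) {a : ℝ≥0∞} (ha : a ≠ ⊤) {B : Set T}
    (h : (a + a) * μ B ≤ ∫⁻ w in B, g w ∂μ) :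
    a ^ p * μ B ≤ ∫⁻ w in B, {w | a < g w}.indicator (fun w => g w ^ p) w ∂μ := by
  have h1 : (a + a) * μ B ≤ a * μ B + ∫⁻ w in B, {w | a < g w}.indicator g w ∂μ := by
    refine h.trans ?_
    rw [← setLIntegral_const, ← lintegral_add_left measurable_const]
    refine lintegral_mono fun w => ?_
    by_cases hw : a < g w
    · simp [hw]
    · simp [hw, not_lt.1 hw]
  rw [add_mul, ENNReal.add_le_add_iff_left (ENNReal.mul_ne_top ha (measure_ne_top _ _))] at h1
  have hsplit : ∀ b : ℝ≥0∞, b ^ p = b ^ (p - 1) * b := fun b => by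
    nth_rw 3 [← ENNReal.rpow_one b]
    rw [← ENNReal.rpow_add_of_nonneg _ _ (by linarith) zero_le_one,
      sub_add_cancel]
  calc a ^ p * μ B = a ^ (p - 1) * (a * μ B) := by rw [hsplit, mul_assoc]
    _ ≤ a ^ (p - 1) * ∫⁻ w in B, {w | a < g w}.indicator g w ∂μ := by gcongr
    _ = ∫⁻ w in B, a ^ (p - 1) * {w | a < g w}.indicator g w ∂μ :=
        (lintegral_const_mul' _ _ (ENNReal.rpow_ne_top_of_nonneg (by linarith) ha)).symm
    _ ≤ _ := by
        refine lintegral_mono fun w => ?_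
        by_cases hw : a < g w
        · simp only [indicator, mem_ofPred_eq, hw, if_true, hsplit (g w)]
          gcongr
        · simp [hw]

lemma rpow_mul_measure_highSet_le [BorelSpace T] [CompactSpace T] {μ : Measure T}
    [IsFiniteMeasure μ] {Cμ : ℝ≥0∞} (hdbl : IsDoubling μ Cμ) {g : T → ℝ≥0∞} (hg : Measurable g)
    {p : ℝ} (hp : 1 ≤ p) {S l : ℝ} (hS : 4 * S < diam (univ : Set T)) (hl : 0 ≤ l) :
    ENNReal.ofReal (l / 2) ^ p * μ (highSet μ g S l) ≤
      Cμ ^ 3 * ∫⁻ w in {w | ENNReal.ofReal (l / 2) < g w}, g w ^ p ∂μ := by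
  set a := ENNReal.ofReal (l / 2)
  have haa : ENNReal.ofReal l = a + a := by
    rw [← ENNReal.ofReal_add (by positivity) (by positivity), add_halves]
  set t : Set (T × ℝ) := {q | 0 < q.2 ∧ q.2 ≤ S ∧
    ENNReal.ofReal l * μ (ball q.1 q.2) < ∫⁻ w in ball q.1 q.2, g w ∂μ}
  obtain ⟨u, hut, hdisj, hcover⟩ := Vitali.exists_disjoint_subfamily_covering_enlargement_closedBall
    t Prod.fst Prod.snd S (fun q hq => hq.2.1) 4 (by norm_num)
  have hdisj' : u.PairwiseDisjoint fun q => ball q.1 q.2 :=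
    hdisj.mono_on fun q _ => ball_subset_closedBall
  have hcount : u.Countable := hdisj'.countable_of_isOpen (fun _ _ => isOpen_ball)
    fun q hq => ⟨q.1, mem_ball_self (hut hq).1⟩
  have hG : MeasurableSet {w | a < g w} := measurableSet_lt measurable_const hg
  have hsub : highSet μ g S l ⊆ ⋃ q ∈ u, ball q.1 (8 * q.2) := by
    rintro x ⟨z, s, hs, hsS, hx, h⟩
    obtain ⟨q, hq, hqs⟩ := hcover (z, s) ⟨hs, hsS, h⟩
    refine mem_biUnion hq (closedBall_subset_ball ?_ (hqs (ball_subset_closedBall hx)))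
    linarith [(hut hq).1]
  have hball : ∀ q ∈ u, μ (ball q.1 (8 * q.2)) ≤ Cμ ^ 3 * μ (ball q.1 q.2) := by
    intro q hq
    obtain ⟨h0, h1, -⟩ := hut hq
    have e1 := (hdbl q.1 q.2 h0 (by linarith)).2.1
    have e2 := (hdbl q.1 (2 * q.2) (by linarith) (by linarith)).2.1
    have e3 := (hdbl q.1 (2 * (2 * q.2)) (by linarith) (by linarith)).2.1
    calc μ (ball q.1 (8 * q.2)) = μ (ball q.1 (2 * (2 * (2 * q.2)))) := by ring_nf
      _ ≤ Cμ * (Cμ * (Cμ * μ (ball q.1 q.2))) := e3.trans (by gcongr; exact e2.trans (by gcongr))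
      _ = _ := by ring
  calc a ^ p * μ (highSet μ g S l)
      ≤ a ^ p * ∑' q : u, μ (ball q.1.1 (8 * q.1.2)) := by
        gcongr
        exact (measure_mono hsub).trans (measure_biUnion_le μ hcount _)
    _ ≤ a ^ p * ∑' q : u, Cμ ^ 3 * μ (ball q.1.1 q.1.2) := by
        gcongr with q
        exact hball q.1 q.2
    _ = Cμ ^ 3 * ∑' q : u, a ^ p * μ (ball q.1.1 q.1.2) := by
        rw [ENNReal.tsum_mul_left, ENNReal.tsum_mul_left]
        ring
    _ ≤ Cμ ^ 3 * ∑' q : u, ∫⁻ w in ball q.1.1 q.1.2,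
          {w | a < g w}.indicator (fun w => g w ^ p) w ∂μ := by
        gcongr with q
        refine rpow_mul_measure_le_of_lt_lintegral hp ENNReal.ofReal_ne_top ?_
        rw [← haa]
        exact (hut q.2).2.2.le
    _ = Cμ ^ 3 * ∫⁻ w in ⋃ q ∈ u, ball q.1 q.2,
          {w | a < g w}.indicator (fun w => g w ^ p) w ∂μ := by
        rw [lintegral_biUnion hcount (fun _ _ => measurableSet_ball) hdisj']
    _ ≤ Cμ ^ 3 * ∫⁻ w, {w | a < g w}.indicator (fun w => g w ^ p) w ∂μ := by
        gcongr
        exact Measure.restrict_le_self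
    _ = _ := by rw [lintegral_indicator hG]

lemma tendsto_measure_highSet [BorelSpace T] [CompactSpace T] {μ : Measure T}
    [IsFiniteMeasure μ] {Cμ : ℝ≥0∞} (hdbl : IsDoubling μ Cμ) (hCμ : Cμ ≠ ⊤) {g : T → ℝ≥0∞}
    (hg : Measurable g) {p : ℝ} (hp : 1 ≤ p) {S : ℝ} (hS : 4 * S < diam (univ : Set T))
    (hfin : ∫⁻ w, g w ^ p ∂μ ≠ ⊤) :
    Tendsto (fun l : ℝ => ENNReal.ofReal l ^ p * μ (highSet μ g S l)) atTop (𝓝 0) := by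
  have hp0 : 0 < p := by linarith
  have hhalf : Tendsto (fun l : ℝ => ENNReal.ofReal (l / 2) ^ p) atTop (𝓝 ⊤) := by
    have h1 : Tendsto (fun l : ℝ => ENNReal.ofReal (l / 2)) atTop (𝓝 ⊤) :=
      ENNReal.tendsto_ofReal_atTop.comp (tendsto_id.atTop_div_const (by norm_num))
    have h2 := (ENNReal.continuous_rpow_const (y := p)).tendsto ⊤
    rw [ENNReal.top_rpow_of_pos hp0] at h2
    exact h2.comp h1
  have hmarkov : Tendsto (fun l : ℝ => μ {w | ENNReal.ofReal (l / 2) < g w}) atTop (𝓝 0) := by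
    have h0 : Tendsto (fun l : ℝ => (∫⁻ w, g w ^ p ∂μ) / ENNReal.ofReal (l / 2) ^ p) atTop
        (𝓝 ((∫⁻ w, g w ^ p ∂μ) / ⊤)) := ENNReal.Tendsto.const_div hhalf (Or.inr hfin)
    rw [ENNReal.div_top] at h0
    refine tendsto_of_tendsto_of_tendsto_of_le_of_le' tendsto_const_nhds h0
      (Eventually.of_forall fun _ => zero_le) ?_
    filter_upwards [eventually_gt_atTop 0] with l hl
    have hpos : ENNReal.ofReal (l / 2) ^ p ≠ 0 := by
      have := ENNReal.ofReal_pos.2 (half_pos hl)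
      exact (ENNReal.rpow_pos this ENNReal.ofReal_ne_top).ne'
    rw [ENNReal.le_div_iff_mul_le (Or.inl hpos)
      (Or.inl (ENNReal.rpow_ne_top_of_nonneg hp0.le ENNReal.ofReal_ne_top)), mul_comm]
    refine le_trans ?_ (mul_meas_ge_le_lintegral (hg.pow_const p) (ENNReal.ofReal (l / 2) ^ p))
    refine mul_le_mul_right (measure_mono fun w hw => ?_) _
    exact ENNReal.rpow_le_rpow (le_of_lt hw) hp0.le
  have h1 := tendsto_setLIntegral_zero hfin hmarkov
  have h2 : Tendsto (fun l : ℝ => 2 ^ p * (Cμ ^ 3 *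
      ∫⁻ w in {w | ENNReal.ofReal (l / 2) < g w}, g w ^ p ∂μ)) atTop (𝓝 (2 ^ p * (Cμ ^ 3 * 0))) := by
    refine ENNReal.Tendsto.const_mul (ENNReal.Tendsto.const_mul h1 (Or.inr (by finiteness)))
      (Or.inr (ENNReal.rpow_ne_top_of_nonneg hp0.le (by norm_num)))
  rw [mul_zero, mul_zero] at h2
  refine tendsto_of_tendsto_of_tendsto_of_le_of_le' tendsto_const_nhds h2
    (Eventually.of_forall fun _ => zero_le) ?_
  filter_upwards [eventually_ge_atTop 0] with l hl
  have h3 : ENNReal.ofReal l ^ p = 2 ^ p * ENNReal.ofReal (l / 2) ^ p := by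
    rw [← ENNReal.mul_rpow_of_nonneg _ _ hp0.le]
    congr 1
    rw [← ENNReal.ofReal_ofNat 2, ← ENNReal.ofReal_mul (by norm_num)]
    congr 1
    ring
  rw [h3, mul_assoc]
  exact mul_le_mul_right (rpow_mul_measure_highSet_le hdbl hg hp hS hl) _

end WeakType

/-! ### Deck transformations -/

section Deck

variable {T Tt : Type*} [MetricSpace T] [MetricSpace Tt] {π : Tt → T} {x₀ : T} {α₀ : Path x₀ x₀}
  {τ : Tt → Tt}

lemma IsDeck.monodromy_eq (hdeck : IsDeck π x₀ α₀ τ) (hc : IsCoveringMap π) {x : T}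
    (η : Path x x₀) (e : π ⁻¹' {x}) :
    τ e = hc.monodromy (.mk (η.trans (α₀.trans η.symm))) e := by
  have h := hdeck.2.2 x (η.trans (α₀.trans η.symm)) ⟨η, Path.Homotopic.refl _⟩
    (hc.liftPath (η.trans (α₀.trans η.symm)).toContinuousMap e (by
      have h0 : π e = x := e.2
      simp [h0])) (fun t => congr_fun (hc.liftPath_lifts ..) t)
  rw [hc.liftPath_zero] at h
  exact h

lemma IsDeck.monodromy_comm (hdeck : IsDeck π x₀ α₀ τ) (hc : IsCoveringMap π) {x : T}
    (η : Path x x₀) (e e' : π ⁻¹' {x}) (he : τ e = e') :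
    hc.monodromy (.mk η) e' =
      hc.monodromyPerm x₀ (FundamentalGroup.fromPath (.mk α₀)) (hc.monodromy (.mk η) e) := by
  have h' : e' = hc.monodromy (.mk (η.trans (α₀.trans η.symm))) e :=
    Subtype.ext (he.symm.trans (hdeck.monodromy_eq hc η e))
  rw [h', hc.coe_monodromyPerm]
  show _ = hc.monodromy (.mk α₀) _
  rw [← hc.monodromy_trans_apply, ← hc.monodromy_trans_apply]
  congr 1
  simp only [Path.Homotopic.Quotient.mk_trans, Path.Homotopic.Quotient.mk_symm,
    Path.Homotopic.Quotient.trans_assoc, Path.Homotopic.Quotient.symm_trans,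
    Path.Homotopic.Quotient.trans_refl]

lemma IsDeck.bijective (hdeck : IsDeck π x₀ α₀ τ) (hc : IsCoveringMap π)
    (hη : ∀ x : T, Nonempty (Path x x₀)) : Function.Bijective τ := by
  constructor
  · intro a b hab
    obtain ⟨η⟩ := hη (π a)
    have hba : π b = π a := by rw [← hdeck.2.1 a, hab, hdeck.2.1]
    have h1 := hdeck.monodromy_comm hc η ⟨a, rfl⟩ ⟨τ a, hdeck.2.1 a⟩ rfl
    have h2 := hdeck.monodromy_comm hc η ⟨b, hba⟩ ⟨τ a, hdeck.2.1 a⟩ hab.symm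
    have h3 := (hc.monodromy_bijective _).1 ((Equiv.injective _) (h1.symm.trans h2))
    exact congrArg Subtype.val h3
  · intro b
    obtain ⟨η⟩ := hη (π b)
    obtain ⟨c, hc'⟩ := (hc.monodromyPerm x₀ (FundamentalGroup.fromPath (.mk α₀))).surjective
      (hc.monodromy (.mk η) ⟨b, rfl⟩)
    obtain ⟨a, rfl⟩ := (hc.monodromy_bijective (.mk η)).2 c
    have ha : π a = π b := a.2
    have h := hdeck.monodromy_comm hc η a ⟨τ a, (hdeck.2.1 a).trans ha⟩ rfl
    exact ⟨a, congrArg Subtype.val ((hc.monodromy_bijective _).1 (h.trans hc'))⟩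

lemma IsDeck.monodromy_zpow (hdeck : IsDeck π x₀ α₀ τ) (hc : IsCoveringMap π) {θ : Tt ≃ₜ Tt}
    (hθ : ∀ x, θ x = τ x) {x : T} (η : Path x x₀) (k : ℤ) :
    ∀ e e' : π ⁻¹' {x}, (θ ^ k) e.1 = e'.1 → hc.monodromy (.mk η) e' =
      (hc.monodromyPerm x₀ (FundamentalGroup.fromPath (.mk α₀)) ^ k)
        (hc.monodromy (.mk η) e) := by
  induction k with
  | zero =>
    intro e e' h
    rw [zpow_zero] at h ⊢
    rw [Subtype.ext (show e.1 = e'.1 from h)]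
    rfl
  | succ k ih =>
    intro e e' h
    have hx : π e = x := e.2
    rw [add_comm, zpow_add, zpow_one, Homeomorph.mul_apply] at h
    have hmem : π ((θ ^ (k : ℤ)) e) = x := by
      rw [← hdeck.2.1, ← hθ, h]
      exact e'.2
    rw [hdeck.monodromy_comm hc η ⟨_, hmem⟩ e' ((hθ _).symm.trans h), ih e ⟨_, hmem⟩ rfl,
      add_comm, zpow_add, zpow_one, Equiv.Perm.mul_apply]
  | pred k ih =>
    intro e e' h
    have hθe : θ e' = (θ ^ (-(k : ℤ))) e := by
      rw [← h, ← Homeomorph.mul_apply, ← zpow_one_add]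
      congr 2
      ring
    have hmem : π ((θ ^ (-(k : ℤ))) e) = x := by
      rw [← hθe, hθ, hdeck.2.1]
      exact e'.2
    have h1 := hdeck.monodromy_comm hc η e' ⟨_, hmem⟩ ((hθ _).symm.trans hθe)
    rw [ih e ⟨_, hmem⟩ rfl] at h1
    rw [sub_eq_neg_add, zpow_add, zpow_neg_one, Equiv.Perm.mul_apply, h1]
    exact (Equiv.symm_apply_apply _ _).symm

lemma eq_one_of_monodromyPerm_apply_eq [SimplyConnectedSpace Tt] (hc : IsCoveringMap π)
    (a : FundamentalGroup T x₀) (e : π ⁻¹' {x₀}) (h : hc.monodromyPerm x₀ a e = e) : a = 1 := by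
  obtain ⟨γ, rfl⟩ := Path.Homotopic.Quotient.mk_surjective a
  obtain ⟨e, rfl⟩ := e
  have hlift : γ 0 = π e := γ.source
  have h1 : hc.liftPath γ e hlift 1 = e := congrArg Subtype.val h
  set Γ : Path e e := ⟨hc.liftPath γ e hlift, hc.liftPath_zero .., h1⟩
  have h2 : γ = Γ.map hc.continuous := by
    ext t
    exact (congr_fun (hc.liftPath_lifts γ e hlift) t).symm
  have h3 : Path.Homotopic Γ (Path.refl e) := SimplyConnectedSpace.paths_homotopic _ _
  rw [h2]
  exact Path.Homotopic.Quotient.eq.2 (h3.map ⟨π, hc.continuous⟩)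

/-- The deck transformation generates a free action of `ℤ` which is transitive on the fibres. -/
lemma IsDeck.exists_homeomorph (hcov : CoverSetup π) (hgen : IsGenerator x₀ α₀)
    (hdeck : IsDeck π x₀ α₀ τ) :
    ∃ θ : Tt ≃ₜ Tt, (∀ x, θ x = τ x) ∧ (∀ (k : ℤ) x, π ((θ ^ k) x) = π x) ∧
      (∀ x y, π x = π y → ∃ k : ℤ, (θ ^ k) x = y) ∧ ∀ (k : ℤ) x, (θ ^ k) x = x → k = 0 := by
  obtain ⟨hc, hsurj, -, hsc⟩ := hcov
  have hη : ∀ x : T, Nonempty (Path x x₀) := fun x => by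
    obtain ⟨a, rfl⟩ := hsurj x
    obtain ⟨b, hb⟩ := hsurj x₀
    exact ⟨((PathConnectedSpace.somePath a b).map hc.continuous).cast rfl hb.symm⟩
  have hbij := hdeck.bijective hc hη
  have hcomp : π ∘ τ = π := funext hdeck.2.1
  have hloc : IsLocalHomeomorph τ :=
    IsLocalHomeomorph.of_comp (g := π) (by rw [hcomp]; exact hc.isLocalHomeomorph)
      hc.isLocalHomeomorph hdeck.1
  let θ : Tt ≃ₜ Tt := (Equiv.ofBijective τ hbij).toHomeomorphOfContinuousOpen hdeck.1
    hloc.isOpenMap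
  have hθ : ∀ x, θ x = τ x := fun _ => rfl
  have hπ : ∀ (k : ℤ) x, π ((θ ^ k) x) = π x := by
    intro k
    induction k with
    | zero => exact fun x => rfl
    | succ k ih =>
      intro x
      rw [add_comm, zpow_add, zpow_one, Homeomorph.mul_apply, hθ, hdeck.2.1, ih]
    | pred k ih =>
      intro x
      rw [← ih x, ← hdeck.2.1, ← hθ, ← Homeomorph.mul_apply, ← zpow_one_add]
      congr 3
      ring
  refine ⟨θ, hθ, hπ, fun x y hxy => ?_, fun k x hk => ?_⟩
  · obtain ⟨η⟩ := hη (π x)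
    set M := hc.monodromy (.mk η)
    have hx0 : π (M ⟨x, rfl⟩).1 = x₀ := (M ⟨x, rfl⟩).2
    have hy0 : π (M ⟨y, hxy.symm⟩).1 = x₀ := (M ⟨y, hxy.symm⟩).2
    set Γ := PathConnectedSpace.somePath (M ⟨x, rfl⟩).1 (M ⟨y, hxy.symm⟩).1
    obtain ⟨k, hk⟩ := hgen.2 (FundamentalGroup.fromPath (X := TopCat.of T)
      (.mk ((Γ.map hc.continuous).cast hx0.symm hy0.symm)))
    have hmap : hc.monodromy (.mk ((Γ.map hc.continuous).cast hx0.symm hy0.symm)) (M ⟨x, rfl⟩) =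
        M ⟨y, hxy.symm⟩ := by
      refine hc.monodromy_eq_of_map_eq (.mk Γ) ?_
      rfl
    refine ⟨k, ?_⟩
    have h1 := hdeck.monodromy_zpow hc hθ η k ⟨x, rfl⟩ ⟨(θ ^ k) x, hπ k x⟩ rfl
    have h2 : (hc.monodromyPerm x₀ (FundamentalGroup.fromPath (.mk α₀)) ^ k)
        (hc.monodromy (.mk η) ⟨x, rfl⟩) = M ⟨y, hxy.symm⟩ := by
      rw [← map_zpow, ← hmap]
      exact congrArg (fun a => hc.monodromyPerm x₀ a (M ⟨x, rfl⟩)) hk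
    exact congrArg Subtype.val ((hc.monodromy_bijective _).1 (h1.trans h2))
  · obtain ⟨η⟩ := hη (π x)
    have h1 := hdeck.monodromy_zpow hc hθ η k ⟨x, rfl⟩ ⟨x, rfl⟩ hk
    rw [← map_zpow] at h1
    have h2 := eq_one_of_monodromyPerm_apply_eq hc _ _ h1.symm
    refine hgen.1 ?_
    simp only [zpow_zero]
    exact h2

/-- The base space is not a point. -/
lemma IsGenerator.diam_pos [CompactSpace T] (hgen : IsGenerator x₀ α₀) :
    0 < diam (univ : Set T) := by
  refine Metric.diam_pos ?_ isCompact_univ.isBounded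
  by_contra hnt
  have hss := Set.not_nontrivial_iff.1 hnt
  have hpath : ∀ γ γ' : Path x₀ x₀, γ = γ' := fun γ γ' => by
    ext t
    exact hss (mem_univ _) (mem_univ _)
  have h01 : (0 : ℤ) = 1 := by
    refine hgen.1 ?_
    obtain ⟨γ, hγ⟩ := Path.Homotopic.Quotient.mk_surjective
      ((FundamentalGroup.fromPath (X := TopCat.of T) ⟦α₀⟧ : FundamentalGroup (TopCat.of T) x₀) ^
        (0 : ℤ))
    simp only [zpow_one]
    rw [← hγ, hpath γ α₀]
    rfl
  exact zero_ne_one h01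

end Deck

/-! ### Sheets of the covering -/

/-- An isometric section of `π` over a ball, whose image is open and relatively compact. -/
structure Sheet {T Tt : Type*} [MetricSpace T] [MetricSpace Tt] (π : Tt → T) where
  center : T
  radius : ℝ
  sec : T → Tt
  radius_pos : 0 < radius
  proj : ∀ z ∈ ball center radius, π (sec z) = z
  dist_sec : ∀ z ∈ ball center radius, ∀ w ∈ ball center radius,
    dist (sec z) (sec w) = dist z w
  isOpen_image : IsOpen (sec '' ball center radius)
  isCompact_closure : IsCompact (closure (sec '' ball center radius))

namespace Sheet

variable {T Tt : Type*} [MetricSpace T] [MetricSpace Tt] {π : Tt → T}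

/-- The ball over which the section is defined. -/
def base (P : Sheet π) : Set T := ball P.center P.radius

/-- The image of the section. -/
def sheet (P : Sheet π) : Set Tt := P.sec '' P.base

variable (P : Sheet π)

lemma isOpen_base : IsOpen P.base := isOpen_ball

lemma isOpen_sheet : IsOpen P.sheet := P.isOpen_image

lemma sec_mem {z : T} (hz : z ∈ P.base) : P.sec z ∈ P.sheet := mem_image_of_mem _ hz

lemma proj_sec {z : T} (hz : z ∈ P.base) : π (P.sec z) = z := P.proj z hz

lemma proj_mem {x : Tt} (hx : x ∈ P.sheet) : π x ∈ P.base := by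
  obtain ⟨z, hz, rfl⟩ := hx
  rwa [P.proj_sec hz]

lemma sec_proj {x : Tt} (hx : x ∈ P.sheet) : P.sec (π x) = x := by
  obtain ⟨z, hz, rfl⟩ := hx
  rw [P.proj_sec hz]

lemma lipschitzOnWith_sec : LipschitzOnWith 1 P.sec P.base :=
  LipschitzOnWith.of_dist_le_mul fun z hz w hw => by
    rw [P.dist_sec z hz w hw, NNReal.coe_one, one_mul]

lemma preimage_inter_sheet (A : Set Tt) (x : T) :
    ((π ⁻¹' {x} ∩ (A ∩ P.sheet)).encard : ℝ≥0∞) =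
      (P.base ∩ P.sec ⁻¹' A).indicator 1 x := by
  by_cases hx : x ∈ P.base ∩ P.sec ⁻¹' A
  · have h : π ⁻¹' {x} ∩ (A ∩ P.sheet) = {P.sec x} := by
      ext a
      simp only [mem_inter_iff, mem_preimage, mem_singleton_iff]
      constructor
      · rintro ⟨rfl, -, ha⟩
        exact (P.sec_proj ha).symm
      · rintro rfl
        exact ⟨P.proj_sec hx.1, hx.2, P.sec_mem hx.1⟩
    rw [h, indicator_of_mem hx, encard_singleton, Pi.one_apply,
      ENat.toENNReal_one]
  · have h : π ⁻¹' {x} ∩ (A ∩ P.sheet) = ∅ := by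
      refine eq_empty_of_forall_notMem fun a ⟨h1, h2, h3⟩ => hx ?_
      obtain rfl : π a = x := h1
      refine ⟨P.proj_mem h3, ?_⟩
      rwa [mem_preimage, P.sec_proj h3]
    rw [h, indicator_of_notMem hx, encard_empty, ENat.toENNReal_zero]

section Measure

variable [MeasurableSpace T] [BorelSpace T] [MeasurableSpace Tt] [BorelSpace Tt]
  {μ : Measure T} {μt : Measure Tt}

lemma measurableSet_base_inter_preimage {A : Set Tt} (hA : MeasurableSet A) :
    MeasurableSet (P.base ∩ P.sec ⁻¹' A) := by
  have h := MeasurableSet.subtype_image P.isOpen_base.measurableSet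
    (P.lipschitzOnWith_sec.continuousOn.domRestrict.measurable hA)
  convert h using 1
  ext x
  simp [and_comm]

lemma aemeasurable_sec : AEMeasurable P.sec (μ.restrict P.base) :=
  P.lipschitzOnWith_sec.continuousOn.aemeasurable P.isOpen_base.measurableSet

lemma map_restrict (hμt : IsLiftedMeasure π μ μt) :
    (μ.restrict P.base).map P.sec = μt.restrict P.sheet := by
  ext A hA
  rw [Measure.map_apply_of_aemeasurable P.aemeasurable_sec hA,
    Measure.restrict_apply' P.isOpen_base.measurableSet, Measure.restrict_apply hA,
    hμt _ (hA.inter P.isOpen_sheet.measurableSet)]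
  simp_rw [P.preimage_inter_sheet A]
  rw [lintegral_indicator_one (P.measurableSet_base_inter_preimage hA), inter_comm]

lemma setLIntegral_sheet (hμt : IsLiftedMeasure π μ μt) {F : Tt → ℝ≥0∞} (hF : Measurable F) :
    ∫⁻ x in P.sheet, F x ∂μt = ∫⁻ z in P.base, F (P.sec z) ∂μ := by
  rw [← P.map_restrict hμt, lintegral_map' hF.aemeasurable P.aemeasurable_sec]

lemma setLIntegral_sheet_comp (hμt : IsLiftedMeasure π μ μt) (hπ : Continuous π)
    {F : T → ℝ≥0∞} (hF : Measurable F) :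
    ∫⁻ x in P.sheet, F (π x) ∂μt = ∫⁻ z in P.base, F z ∂μ := by
  refine (P.setLIntegral_sheet hμt (hF.comp hπ.measurable)).trans ?_
  exact setLIntegral_congr_fun P.isOpen_base.measurableSet fun z hz =>
    congrArg F (P.proj_sec hz)

lemma measure_sheet_inter_preimage_le (hμt : IsLiftedMeasure π μ μt) (hπ : Continuous π)
    {A : Set T} (hA : MeasurableSet A) : μt (P.sheet ∩ π ⁻¹' A) ≤ μ A := by
  have h := P.setLIntegral_sheet_comp hμt hπ (measurable_one.indicator hA)
  rw [← lintegral_indicator_one hA, inter_comm,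
    ← Measure.restrict_apply (hπ.measurable hA),
    ← lintegral_indicator_one (hπ.measurable hA)]
  exact h.le.trans (setLIntegral_le_lintegral _ _)

lemma ae_sec (hμt : IsLiftedMeasure π μ μt) {q : Tt → Prop} (h : ∀ᵐ x ∂μt, q x) :
    ∀ᵐ z ∂μ.restrict P.base, q (P.sec z) := by
  refine ae_of_ae_map P.aemeasurable_sec ?_
  rw [P.map_restrict hμt]
  exact ae_restrict_of_ae h

end Measure

end Sheet

section LiftedMeasure

variable {T Tt : Type*} [MetricSpace T] [MetricSpace Tt] {π : Tt → T}

lemma CoverSetup.exists_sheet [CompactSpace T] (hcov : CoverSetup π) (y : T) :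
    ∃ P : Sheet π, P.center = y := by
  obtain ⟨hc, hsurj, hloc, -⟩ := hcov
  obtain ⟨x, rfl⟩ := hsurj y
  obtain ⟨e, hxe, he⟩ := hc.isLocalHomeomorph x
  obtain ⟨ε, hε, hiso⟩ := hloc x
  have hx : e.symm (π x) = x := by rw [he, e.left_inv hxe]
  have hmem : π x ∈ e.target := by rw [he]; exact e.map_source hxe
  have hnhds : e.target ∩ e.symm ⁻¹' ball x ε ∈ 𝓝 (π x) :=
    inter_mem (e.open_target.mem_nhds hmem)
      ((e.continuousAt_symm hmem).preimage_mem_nhds (by rw [hx]; exact ball_mem_nhds x hε))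
  obtain ⟨R, hR, hsub⟩ := Metric.nhds_basis_closedBall.mem_iff.1 hnhds
  have hsub' : ball (π x) R ⊆ e.target ∩ e.symm ⁻¹' ball x ε := ball_subset_closedBall.trans hsub
  have hproj : ∀ z ∈ ball (π x) R, π (e.symm z) = z := fun z hz => by
    rw [he, e.right_inv (hsub' hz).1]
  have hK : IsCompact (e.symm '' closedBall (π x) R) :=
    (isCompact_closedBall (π x) R).image_of_continuousOn
      (e.continuousOn_symm.mono fun z hz => (hsub hz).1)
  exact ⟨⟨π x, R, e.symm, hR, hproj, fun z hz w hw => by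
      rw [← hiso _ (hsub' hz).2 _ (hsub' hw).2, hproj z hz, hproj w hw],
    e.symm.isOpen_image_of_subset_source isOpen_ball fun z hz => (hsub' hz).1,
    hK.of_isClosed_subset isClosed_closure
      (closure_minimal (image_mono ball_subset_closedBall) hK.isClosed)⟩, rfl⟩

/-- A relatively compact set is covered by finitely many translates of the sheets. -/
lemma exists_finset_subset_translates {ι : Type*} {θ : Tt ≃ₜ Tt} (P : ι → Sheet π)
    (hcover : ∀ z, ∃ i, z ∈ (P i).base) (htrans : ∀ x y, π x = π y → ∃ k : ℤ, (θ ^ k) x = y)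
    {U : Set Tt} (hU : IsCompact (closure U)) :
    ∃ J : Finset (ι × ℤ), U ⊆ ⋃ j ∈ J, (θ ^ j.2) '' (P j.1).sheet := by
  obtain ⟨J, hJ⟩ := hU.elim_finite_subcover (fun j : ι × ℤ => (θ ^ j.2) '' (P j.1).sheet)
    (fun j => (θ ^ j.2).isOpenMap _ (P j.1).isOpen_sheet) (fun x _ => by
      obtain ⟨i, hi⟩ := hcover (π x)
      obtain ⟨k, hk⟩ := htrans ((P i).sec (π x)) x ((P i).proj_sec hi)
      exact mem_iUnion.2 ⟨(i, k), _, (P i).sec_mem hi, hk⟩)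
  exact ⟨J, subset_closure.trans hJ⟩

variable [MeasurableSpace T] [MeasurableSpace Tt] [BorelSpace Tt]
  {μ : Measure T} {μt : Measure Tt}

lemma IsLiftedMeasure.measure_preimage_eq_zero [BorelSpace T]
    (hμt : IsLiftedMeasure π μ μt) (hπ : Continuous π) {N : Set T} (hN : MeasurableSet N) (h0 : μ N = 0) :
    μt (π ⁻¹' N) = 0 := by
  rw [hμt _ (hπ.measurable hN), ← lintegral_zero (μ := μ)]
  refine lintegral_congr_ae ?_
  filter_upwards [measure_eq_zero_iff_ae_notMem.1 h0] with x hx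
  have h : π ⁻¹' {x} ∩ π ⁻¹' N = ∅ :=
    eq_empty_of_forall_notMem fun a ⟨h1, h2⟩ => hx (by
      obtain rfl : π a = x := h1
      exact h2)
  rw [h, encard_empty, ENat.toENNReal_zero]

lemma IsLiftedMeasure.measurePreserving (hμt : IsLiftedMeasure π μ μt) (θ : Tt ≃ₜ Tt)
    (hθ : ∀ x, π (θ x) = π x) : MeasurePreserving θ μt μt := by
  refine ⟨θ.continuous.measurable, ?_⟩
  ext A hA
  rw [Measure.map_apply θ.continuous.measurable hA, hμt _ hA,
    hμt _ (θ.continuous.measurable hA)]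
  refine lintegral_congr fun x => ?_
  have h : π ⁻¹' {x} ∩ θ ⁻¹' A = θ ⁻¹' (π ⁻¹' {x} ∩ A) := by
    ext a
    simp [hθ]
  rw [h, ← θ.image_symm, θ.symm.injective.encard_image]

variable {ι : Type*} [Fintype ι]

/-- The integral of an invariant function over a relatively compact set is controlled by
its integrals over the sheets. -/
lemma IsLiftedMeasure.exists_setLIntegral_le (hμt : IsLiftedMeasure π μ μt) {θ : Tt ≃ₜ Tt}
    (hπθ : ∀ (k : ℤ) x, π ((θ ^ k) x) = π x) (P : ι → Sheet π)
    (hcover : ∀ z, ∃ i, z ∈ (P i).base) (htrans : ∀ x y, π x = π y → ∃ k : ℤ, (θ ^ k) x = y)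
    {U : Set Tt} (hU : IsCompact (closure U)) :
    ∃ M : ℝ≥0∞, M < ⊤ ∧ ∀ F : Tt → ℝ≥0∞, (∀ᵐ x ∂μt, ∀ k : ℤ, F ((θ ^ k) x) = F x) →
      ∫⁻ x in U, F x ∂μt ≤ M * ∑ i, ∫⁻ x in (P i).sheet, F x ∂μt := by
  obtain ⟨J, hJ⟩ := exists_finset_subset_translates P hcover htrans hU
  refine ⟨J.card, ENNReal.natCast_lt_top _, fun F hF => ?_⟩
  calc ∫⁻ x in U, F x ∂μt
      ≤ ∫⁻ x in ⋃ j : J, (θ ^ j.1.2) '' (P j.1.1).sheet, F x ∂μt := by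
        refine lintegral_mono_set fun x hx => ?_
        obtain ⟨j, hj, h⟩ := mem_iUnion₂.1 (hJ hx)
        exact mem_iUnion.2 ⟨⟨j, hj⟩, h⟩
    _ ≤ ∑ j ∈ J, ∫⁻ x in (θ ^ j.2) '' (P j.1).sheet, F x ∂μt := by
        refine (lintegral_iUnion_le _ _).trans_eq ?_
        rw [tsum_fintype]
        exact Finset.sum_coe_sort J fun j => ∫⁻ x in (θ ^ j.2) '' (P j.1).sheet, F x ∂μt
    _ ≤ ∑ j ∈ J, ∑ i, ∫⁻ x in (P i).sheet, F x ∂μt := by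
        refine Finset.sum_le_sum fun j _ => ?_
        rw [← (hμt.measurePreserving (θ ^ j.2) (hπθ j.2)).setLIntegral_comp_emb
          (θ ^ j.2).measurableEmbedding,
          lintegral_congr_ae (ae_restrict_of_ae (hF.mono fun x hx => hx j.2))]
        exact Finset.single_le_sum (f := fun i => ∫⁻ x in (P i).sheet, F x ∂μt)
          (fun _ _ => zero_le) (Finset.mem_univ j.1)
    _ = J.card * ∑ i, ∫⁻ x in (P i).sheet, F x ∂μt := by
        rw [Finset.sum_const, nsmul_eq_mul]

end LiftedMeasure

/-! ### Estimates on a single sheet -/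

lemma exists_lowerSemicontinuous_rpow {X : Type*} [TopologicalSpace X] [MeasurableSpace X]
    [BorelSpace X] {μ : Measure X} [IsFiniteMeasure μ] [μ.WeaklyRegular] {p : ℝ} (hp : 0 < p)
    {g : X → ℝ≥0∞} (hg : Measurable g) (hfin : ∫⁻ x, g x ^ p ∂μ < ⊤) :
    ∃ G : X → ℝ≥0∞, LowerSemicontinuous G ∧ (∀ x, g x ≤ G x) ∧ ∫⁻ x, G x ^ p ∂μ < ⊤ := by
  obtain ⟨G, hgG, hG, hint⟩ := exists_le_lowerSemicontinuous_lintegral_ge μ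
    (fun x => g x ^ p) (hg.pow_const p) one_ne_zero
  have hGp : ∀ x, (G x ^ (1 / p)) ^ p = G x := fun x => by
    rw [← ENNReal.rpow_mul, one_div_mul_cancel hp.ne', ENNReal.rpow_one]
  refine ⟨fun x => G x ^ (1 / p), ?_, fun x => ?_, ?_⟩
  · exact ENNReal.continuous_rpow_const.comp_lowerSemicontinuous hG
      (ENNReal.monotone_rpow_of_nonneg (by positivity))
  · rw [← ENNReal.rpow_le_rpow_iff hp, hGp]
    exact hgG x
  · simp_rw [hGp]
    exact hint.trans_lt (ENNReal.add_lt_top.2 ⟨hfin, ENNReal.one_lt_top⟩)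

lemma Sheet.exists_gradient {T Tt : Type*} [MetricSpace T] [MetricSpace Tt] {π : Tt → T}
    [MeasurableSpace T] [BorelSpace T] [MeasurableSpace Tt] [BorelSpace Tt]
    {μ : Measure T} {μt : Measure Tt} [IsFiniteMeasure μ] (P : Sheet π)
    (hμt : IsLiftedMeasure π μ μt) {p : ℝ} (hp : 1 ≤ p) {f : Tt → ℝ} (hf : MemNloc μt p f) :
    ∃ g : T → ℝ≥0∞, LowerSemicontinuous g ∧ ∫⁻ x, g x ^ p ∂μ < ⊤ ∧
      ∀ γ : UPath T, γ.InSet P.base →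
        edist (f (P.sec γ.start)) (f (P.sec γ.finish)) ≤ γ.integral g := by
  have hp0 : 0 < p := by linarith
  obtain ⟨ρ, hρ, hwug, hfin⟩ := (hf P.sheet P.isOpen_sheet P.isCompact_closure).2
  obtain ⟨H, hH, hHfin, hug⟩ := exists_upperGradientOn hp hρ hwug hfin
  have hmeas : Measurable (P.base.indicator (H ∘ P.sec)) := fun A hA => by
    rw [indicator_preimage, Set.ite]
    refine MeasurableSet.union ?_ ((measurable_zero hA).diff P.isOpen_base.measurableSet)
    rw [inter_comm]
    exact P.measurableSet_base_inter_preimage (hH hA)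
  have hint : ∫⁻ x, P.base.indicator (H ∘ P.sec) x ^ p ∂μ < ⊤ := by
    rw [P.setLIntegral_sheet hμt (hH.pow_const p)] at hHfin
    rw [← lintegral_indicator P.isOpen_base.measurableSet] at hHfin
    refine lt_of_eq_of_lt (lintegral_congr fun x => ?_) hHfin
    by_cases hx : x ∈ P.base
    · simp [hx]
    · simp [hx, hp0]
  obtain ⟨G, hG, hle, hGfin⟩ := exists_lowerSemicontinuous_rpow hp0 hmeas hint
  refine ⟨G, hG, hGfin, fun γ hγ => ?_⟩
  have hlip : LipschitzOnWith 1 (P.sec ∘ γ.toFun) (Icc γ.a γ.b) := by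
    have := P.lipschitzOnWith_sec.comp γ.lip hγ
    rwa [one_mul] at this
  refine (hug ⟨γ.a, γ.b, γ.hab, P.sec ∘ γ.toFun, hlip⟩ fun t ht => P.sec_mem (hγ t ht)).trans ?_
  refine setLIntegral_mono' measurableSet_Icc fun t ht => ?_
  refine le_trans ?_ (hle _)
  rw [indicator_of_mem (hγ t ht)]
  rfl

/-- A radius on which short quasigeodesics are available. -/
lemma exists_radius {S D K M R : ℝ} (hS : 0 < S) (hD : 0 < D) (hK : 0 ≤ K) (hM : 0 < M)
    (hR : 0 < R) : ∃ r > 0, 2 * (2 * r) < D ∧ M * (2 * r) ≤ S ∧ r + K * (2 * r) < R := by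
  refine ⟨min (D / 8) (min (S / (2 * M)) (R / (2 * (1 + 2 * K)))), by positivity, ?_, ?_, ?_⟩
  · have := min_le_left (D / 8) (min (S / (2 * M)) (R / (2 * (1 + 2 * K))))
    linarith
  · have := (min_le_right (D / 8) (min (S / (2 * M)) (R / (2 * (1 + 2 * K))))).trans
      (min_le_left _ _)
    rw [le_div_iff₀ (by positivity)] at this
    linarith
  · have := (min_le_right (D / 8) (min (S / (2 * M)) (R / (2 * (1 + 2 * K))))).trans
      (min_le_right _ _)
    rw [le_div_iff₀ (by positivity)] at this
    linarith

lemma lipschitzOnWith_of_gradient {T : Type*} [MetricSpace T] [MeasurableSpace T] [BorelSpace T]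
    [CompactSpace T] [PreconnectedSpace T] {μ : Measure T} [IsFiniteMeasure μ]
    {Cμ : ℝ≥0∞} {CP lP : ℝ} (hdbl : IsDoubling μ Cμ) (hCμ : Cμ ≠ ⊤)
    (hPI : SupportsPoincare μ CP lP) {g : T → ℝ≥0∞} (hg : LowerSemicontinuous g)
    {c : T} {R r S K : ℝ} (hS : 0 < S)
    (hK : K = 2 * ((12 * Cμ.toReal + 4 * Cμ.toReal ^ 2) * max CP 0) + 1)
    (hrD : 2 * (2 * r) < diam (univ : Set T)) (hrS : 2 * max lP 1 * (2 * r) ≤ S)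
    (hrR : r + K * (2 * r) < R) {F : T → ℝ}
    (hF : ∀ γ : UPath T, γ.InSet (ball c R) → edist (F γ.start) (F γ.finish) ≤ γ.integral g)
    {l : ℝ} (hl : 0 < l) :
    LipschitzOnWith (Real.toNNReal (3 * l * K)) F (ball c r \ highSet μ g S l) := by
  have hK0 : 0 < K := by rw [hK]; positivity
  have hM : 0 < 2 * max lP 1 := by positivity
  refine LipschitzOnWith.of_dist_le_mul fun x ⟨hx, hxN⟩ y ⟨hy, hyN⟩ => ?_
  rw [Real.coe_toNNReal _ (by positivity)]
  rcases eq_or_ne x y with rfl | hne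
  · simp
  have hxy : 0 < dist x y := dist_pos.2 hne
  have hxy2 : dist x y < 2 * r := by
    have := dist_triangle_right x y c
    rw [mem_ball] at hx hy
    linarith
  have havg : ∀ {s}, s ≤ 2 * max lP 1 * dist x y → s ≤ S := fun hs =>
    hs.trans (((mul_le_mul_iff_right₀ hM).2 hxy2.le).trans hrS)
  obtain ⟨e, he, he0, heL, hint⟩ := exists_path_integral_le hdbl hCμ hPI hg hxy hl (by linarith)
    (fun s hs => lintegral_ball_le_of_notMem_highSet hxN (havg hs))
    (fun s hs => lintegral_ball_le_of_notMem_highSet hyN (havg hs))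
    (le_of_notMem_highSet hPI hg hS hyN) (L := K * dist x y) (by rw [hK])
  have hin : ∀ t ∈ Icc 0 (K * dist x y), e t ∈ ball c R := fun t ht => by
    have h1 : dist (e t) x ≤ t := by
      have := he.dist_le_mul t 0
      rwa [he0, NNReal.coe_one, one_mul, Real.dist_eq, sub_zero, abs_of_nonneg ht.1] at this
    have h2 := dist_triangle (e t) x c
    have h3 : K * dist x y ≤ K * (2 * r) := (mul_le_mul_iff_right₀ hK0).2 hxy2.le
    rw [mem_ball] at hx ⊢
    linarith [ht.2]
  have h := hF ⟨0, K * dist x y, by positivity, e, he.lipschitzOnWith⟩ hin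
  change edist (F (e 0)) (F (e (K * dist x y))) ≤ ∫⁻ t in Icc 0 (K * dist x y), g (e t) at h
  rw [he0, heL, edist_dist] at h
  have := (ENNReal.ofReal_le_ofReal_iff (by positivity)).1 (h.trans hint)
  linarith

/-! ### Gluing local functions equivariantly -/

/-- Finitely many sheets whose slightly shrunk bases cover the base space, together with the
index of the translate of the sheet which contains a given point. -/
structure Atlas {T Tt : Type*} [MetricSpace T] [MetricSpace Tt] (π : Tt → T) (θ : Tt ≃ₜ Tt)
    (ι : Type*) where
  chart : ι → Sheet π
  inner : ι → ℝ
  idx : ι → Tt → ℤ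
  continuous_proj : Continuous π
  proj_zpow : ∀ (k : ℤ) x, π ((θ ^ k) x) = π x
  free : ∀ (k : ℤ) x, (θ ^ k) x = x → k = 0
  inner_pos : ∀ i, 0 < inner i
  inner_lt : ∀ i, inner i < (chart i).radius
  exists_mem_ball : ∀ z, ∃ i, z ∈ ball (chart i).center (inner i)
  zpow_idx : ∀ i x, π x ∈ (chart i).base → (θ ^ idx i x) ((chart i).sec (π x)) = x

namespace Atlas

variable {T Tt : Type*} [MetricSpace T] [MetricSpace Tt] {π : Tt → T} {θ : Tt ≃ₜ Tt} {ι : Type*}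
  (𝒜 : Atlas π θ ι)

/-- The base of the `i`-th sheet, shrunk. -/
def core (i : ι) : Set T := ball (𝒜.chart i).center (𝒜.inner i)

lemma closedBall_subset_base (i : ι) :
    closedBall (𝒜.chart i).center (𝒜.inner i) ⊆ (𝒜.chart i).base :=
  closedBall_subset_ball (𝒜.inner_lt i)

lemma core_subset_base (i : ι) : 𝒜.core i ⊆ (𝒜.chart i).base :=
  ball_subset_closedBall.trans (𝒜.closedBall_subset_base i)

lemma idx_eq {i : ι} {x : Tt} {k : ℤ} (hx : π x ∈ (𝒜.chart i).base)
    (h : (θ ^ k) ((𝒜.chart i).sec (π x)) = x) : 𝒜.idx i x = k := by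
  have h1 := 𝒜.zpow_idx i x hx
  have h2 : (θ ^ (-k + 𝒜.idx i x)) ((𝒜.chart i).sec (π x)) = (𝒜.chart i).sec (π x) := by
    rw [zpow_add, Homeomorph.mul_apply, h1]
    nth_rw 1 [← h]
    rw [← Homeomorph.mul_apply, ← zpow_add, neg_add_cancel, zpow_zero]
    rfl
  have := 𝒜.free _ _ h2
  lia

lemma idx_zpow {i : ι} {x : Tt} (k : ℤ) (hx : π x ∈ (𝒜.chart i).base) :
    𝒜.idx i ((θ ^ k) x) = 𝒜.idx i x + k := by
  refine 𝒜.idx_eq (by rwa [𝒜.proj_zpow]) ?_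
  rw [𝒜.proj_zpow, add_comm, zpow_add, Homeomorph.mul_apply, 𝒜.zpow_idx i x hx]

lemma eventually_idx_eq {i : ι} {x : Tt} (hx : π x ∈ (𝒜.chart i).base) :
    ∀ᶠ y in 𝓝 x, π y ∈ (𝒜.chart i).base ∧ 𝒜.idx i y = 𝒜.idx i x := by
  have hopen : IsOpen ((θ ^ 𝒜.idx i x) '' (𝒜.chart i).sheet) :=
    (θ ^ 𝒜.idx i x).isOpenMap _ (𝒜.chart i).isOpen_sheet
  filter_upwards [hopen.mem_nhds ⟨_, (𝒜.chart i).sec_mem hx, 𝒜.zpow_idx i x hx⟩]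
  rintro _ ⟨y, hy, rfl⟩
  have hb : π ((θ ^ 𝒜.idx i x) y) ∈ (𝒜.chart i).base := by
    rw [𝒜.proj_zpow]
    exact (𝒜.chart i).proj_mem hy
  refine ⟨hb, 𝒜.idx_eq hb ?_⟩
  rw [𝒜.proj_zpow, (𝒜.chart i).sec_proj hy]

/-- The union of the sheets. -/
def domain : Set Tt := ⋃ i, (𝒜.chart i).sheet

lemma exists_zpow_mem_domain (x : Tt) : ∃ k : ℤ, (θ ^ k) x ∈ 𝒜.domain := by
  obtain ⟨i, hi⟩ := 𝒜.exists_mem_ball (π x)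
  refine ⟨-𝒜.idx i x, mem_iUnion.2 ⟨i, ?_⟩⟩
  have h := 𝒜.zpow_idx i x (𝒜.core_subset_base i hi)
  nth_rw 2 [← h]
  rw [← Homeomorph.mul_apply, ← zpow_add, neg_add_cancel, zpow_zero]
  exact (𝒜.chart i).sec_mem (𝒜.core_subset_base i hi)

variable [Fintype ι]

lemma isCompact_closure_domain : IsCompact (closure 𝒜.domain) := by
  rw [domain, closure_iUnion_of_finite]
  exact isCompact_iUnion fun i => (𝒜.chart i).isCompact_closure

lemma exists_abs_idx_le : ∃ N : ℝ, 0 ≤ N ∧ ∀ x ∈ 𝒜.domain, ∀ i,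
    π x ∈ closedBall (𝒜.chart i).center (𝒜.inner i) → |(𝒜.idx i x : ℝ)| ≤ N := by
  have h : ∀ i, ∃ N : ℝ, ∀ x ∈ closure 𝒜.domain ∩
      π ⁻¹' closedBall (𝒜.chart i).center (𝒜.inner i), |(𝒜.idx i x : ℝ)| ≤ N := fun i => by
    refine (𝒜.isCompact_closure_domain.inter_right
      (isClosed_closedBall.preimage 𝒜.continuous_proj)).exists_bound_of_continuousOn
      (f := fun x => (𝒜.idx i x : ℝ)) fun x hx => ?_
    refine ContinuousAt.continuousWithinAt ?_
    refine (continuousAt_const (y := (𝒜.idx i x : ℝ))).congr ?_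
    filter_upwards [𝒜.eventually_idx_eq (𝒜.closedBall_subset_base i hx.2)] with y hy
    rw [hy.2]
  choose N hN using h
  refine ⟨∑ i, |N i|, by positivity, fun x hx i hi => ?_⟩
  refine (hN i x ⟨subset_closure hx, hi⟩).trans ((le_abs_self _).trans ?_)
  exact Finset.single_le_sum (f := fun i => |N i|) (fun i _ => abs_nonneg _) (Finset.mem_univ i)

lemma exists_partition [CompactSpace T] : ∃ (φ : ι → T → ℝ) (Λ : ℝ), 0 ≤ Λ ∧
    (∀ i z, 0 ≤ φ i z) ∧ (∀ z, ∑ i, φ i z = 1) ∧ (∀ i z, φ i z ≠ 0 → z ∈ 𝒜.core i) ∧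
    ∀ i z w, |φ i z - φ i w| ≤ Λ * dist z w := by
  set ψ : ι → T → ℝ := fun i z => max 0 (𝒜.inner i - dist z (𝒜.chart i).center) with hψ
  have hψ0 : ∀ i z, 0 ≤ ψ i z := fun i z => le_max_left _ _
  have hψlip : ∀ i z w, |ψ i z - ψ i w| ≤ dist z w := fun i z w => by
    refine (abs_max_sub_max_le_max _ _ _ _).trans ?_
    rw [sub_self, abs_zero, max_eq_right (abs_nonneg _), sub_sub_sub_cancel_left, abs_sub_comm]
    exact abs_dist_sub_le z w _
  have hψne : ∀ i z, ψ i z ≠ 0 → z ∈ 𝒜.core i := fun i z h => by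
    by_contra hz
    rw [core, mem_ball, not_lt] at hz
    exact h (max_eq_left (by linarith))
  have hψcont : ∀ i, Continuous (ψ i) := fun i => by fun_prop
  obtain ⟨m, hm, hle⟩ := isCompact_univ.exists_forall_le' (f := fun z => ∑ i, ψ i z) (a := 0)
    (by fun_prop) fun z _ => by
      obtain ⟨i, hi⟩ := 𝒜.exists_mem_ball z
      refine Finset.sum_pos' (fun j _ => hψ0 j z) ⟨i, Finset.mem_univ i, ?_⟩
      exact lt_max_of_lt_right (sub_pos.2 hi)
  have hle : ∀ z, m ≤ ∑ i, ψ i z := fun z => hle z (mem_univ z)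
  have hpos : ∀ z, 0 < ∑ i, ψ i z := fun z => hm.trans_le (hle z)
  refine ⟨fun i z => ψ i z / ∑ j, ψ j z, (1 + Fintype.card ι) / m, by positivity,
    fun i z => div_nonneg (hψ0 i z) (hpos z).le, fun z => ?_, fun i z h => hψne i z fun h0 => ?_,
    fun i z w => ?_⟩
  · rw [← Finset.sum_div, div_self (hpos z).ne']
  · exact h (by simp [h0])
  · have hs : |∑ j, ψ j w - ∑ j, ψ j z| ≤ Fintype.card ι * dist z w := by
      rw [← Finset.sum_sub_distrib]
      refine (Finset.abs_sum_le_sum_abs _ _).trans ?_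
      refine (Finset.sum_le_sum fun j _ => (hψlip j w z).trans_eq (dist_comm _ _)).trans_eq ?_
      simp
    have h1 : ψ i w / ∑ j, ψ j w ≤ 1 := (div_le_one (hpos w)).2
      (Finset.single_le_sum (f := fun j => ψ j w) (fun j _ => hψ0 j w) (Finset.mem_univ i))
    have heq : ψ i z / ∑ j, ψ j z - ψ i w / ∑ j, ψ j w =
        ((ψ i z - ψ i w) + (ψ i w / ∑ j, ψ j w) * (∑ j, ψ j w - ∑ j, ψ j z)) / ∑ j, ψ j z := by
      have := (hpos w).ne'
      have := (hpos z).ne'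
      field_simp
      ring
    rw [heq, abs_div, abs_of_pos (hpos z), div_mul_eq_mul_div (1 + (Fintype.card ι : ℝ))]
    refine div_le_div₀ (by positivity) ?_ hm (hle z)
    refine (abs_add_le _ _).trans ?_
    rw [abs_mul, abs_of_nonneg (div_nonneg (hψ0 i w) (hpos w).le), add_mul, one_mul]
    exact add_le_add (hψlip i z w) ((mul_le_of_le_one_left (abs_nonneg _) h1).trans hs)

/-- The equivariant function obtained by gluing local functions with a partition of unity. -/
def glue (φ G : ι → T → ℝ) (x : Tt) : ℝ := ∑ i, φ i (π x) * (G i (π x) + 𝒜.idx i x)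

variable {φ G : ι → T → ℝ}

lemma glue_zpow (hsum : ∀ z, ∑ i, φ i z = 1) (hsupp : ∀ i z, φ i z ≠ 0 → z ∈ 𝒜.core i)
    (k : ℤ) (x : Tt) : 𝒜.glue φ G ((θ ^ k) x) = 𝒜.glue φ G x + k := by
  have h : ∀ i, φ i (π x) * (G i (π x) + 𝒜.idx i ((θ ^ k) x)) =
      φ i (π x) * (G i (π x) + 𝒜.idx i x) + φ i (π x) * k := fun i => by
    by_cases h0 : φ i (π x) = 0
    · simp [h0]
    · rw [𝒜.idx_zpow k (𝒜.core_subset_base i (hsupp i _ h0))]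
      push_cast
      ring
  simp only [glue, 𝒜.proj_zpow, h, Finset.sum_add_distrib, ← Finset.sum_mul, hsum, one_mul]

lemma glue_eq (hsum : ∀ z, ∑ i, φ i z = 1) {x : Tt} {a : ℝ}
    (h : ∀ i, φ i (π x) ≠ 0 → G i (π x) + 𝒜.idx i x = a) : 𝒜.glue φ G x = a := by
  have h' : ∀ i, φ i (π x) * (G i (π x) + 𝒜.idx i x) = φ i (π x) * a := fun i => by
    by_cases h0 : φ i (π x) = 0
    · simp [h0]
    · rw [h i h0]
  simp only [glue, h', ← Finset.sum_mul, hsum, one_mul]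

lemma abs_glue_le (hφ : ∀ i z, 0 ≤ φ i z) (hsum : ∀ z, ∑ i, φ i z = 1)
    (hsupp : ∀ i z, φ i z ≠ 0 → z ∈ 𝒜.core i) {A N : ℝ} (hG : ∀ i z, |G i z| ≤ A) {x : Tt}
    (hN : ∀ i, π x ∈ closedBall (𝒜.chart i).center (𝒜.inner i) → |(𝒜.idx i x : ℝ)| ≤ N) :
    |𝒜.glue φ G x| ≤ A + N := by
  have h : ∀ i, |φ i (π x) * (G i (π x) + 𝒜.idx i x)| ≤ φ i (π x) * (A + N) := fun i => by
    rw [abs_mul, abs_of_nonneg (hφ i _)]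
    by_cases h0 : φ i (π x) = 0
    · simp [h0]
    · refine mul_le_mul_of_nonneg_left ((abs_add_le _ _).trans (add_le_add (hG i _) ?_)) (hφ i _)
      exact hN i (ball_subset_closedBall (hsupp i _ h0))
  refine (Finset.abs_sum_le_sum_abs _ _).trans ((Finset.sum_le_sum fun i _ => h i).trans_eq ?_)
  rw [← Finset.sum_mul, hsum, one_mul]

lemma exists_nhds_abs_glue_sub_le_of_mem_domain (hφ : ∀ i z, 0 ≤ φ i z)
    (hsum : ∀ z, ∑ i, φ i z = 1)
    (hsupp : ∀ i z, φ i z ≠ 0 → z ∈ 𝒜.core i) {Λ : ℝ}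
    (hφlip : ∀ i z w, |φ i z - φ i w| ≤ Λ * dist z w) {A N K : ℝ} (hG : ∀ i z, |G i z| ≤ A)
    (hGlip : ∀ i z w, |G i z - G i w| ≤ K * dist z w) {x : Tt}
    (hN : ∀ i, π x ∈ closedBall (𝒜.chart i).center (𝒜.inner i) → |(𝒜.idx i x : ℝ)| ≤ N)
    (hC : 0 ≤ Λ * (A + N) + K) :
    ∃ O ∈ 𝓝 x, ∀ y ∈ O, ∀ z ∈ O, |𝒜.glue φ G y - 𝒜.glue φ G z| ≤
      Fintype.card ι * (Λ * (A + N) + K) * dist (π y) (π z) := by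
  have hφ1 : ∀ i z, φ i z ≤ 1 := fun i z => by
    rw [← hsum z]
    exact Finset.single_le_sum (f := fun i => φ i z) (fun j _ => hφ j z) (Finset.mem_univ i)
  have h : ∀ i, ∃ O ∈ 𝓝 x, ∀ y ∈ O, ∀ z ∈ O, |φ i (π y) * (G i (π y) + 𝒜.idx i y) -
      φ i (π z) * (G i (π z) + 𝒜.idx i z)| ≤ (Λ * (A + N) + K) * dist (π y) (π z) := fun i => by
    by_cases hx : π x ∈ closedBall (𝒜.chart i).center (𝒜.inner i)
    · refine ⟨_, 𝒜.eventually_idx_eq (𝒜.closedBall_subset_base i hx), ?_⟩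
      rintro y ⟨-, hy⟩ z ⟨-, hz⟩
      rw [hy, hz]
      have heq : φ i (π y) * (G i (π y) + 𝒜.idx i x) - φ i (π z) * (G i (π z) + 𝒜.idx i x) =
          (φ i (π y) - φ i (π z)) * (G i (π y) + 𝒜.idx i x) +
            φ i (π z) * (G i (π y) - G i (π z)) := by ring
      rw [heq]
      refine (abs_add_le _ _).trans ?_
      rw [abs_mul, abs_mul, abs_of_nonneg (hφ i (π z)), add_mul]
      refine add_le_add ?_ ((mul_le_of_le_one_left (abs_nonneg _) (hφ1 i _)).trans (hGlip i _ _))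
      calc _ ≤ (Λ * dist (π y) (π z)) * (A + N) :=
            mul_le_mul (hφlip i _ _) ((abs_add_le _ _).trans (add_le_add (hG i _) (hN i hx)))
              (abs_nonneg _) ((abs_nonneg _).trans (hφlip i _ _))
        _ = _ := by ring
    · have hopen : IsOpen (π ⁻¹' (closedBall (𝒜.chart i).center (𝒜.inner i))ᶜ) :=
        isClosed_closedBall.isOpen_compl.preimage 𝒜.continuous_proj
      refine ⟨_, hopen.mem_nhds hx, fun y hy z hz => ?_⟩
      have h0 : ∀ y, π y ∉ closedBall (𝒜.chart i).center (𝒜.inner i) → φ i (π y) = 0 :=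
        fun y hy => by
          by_contra h
          exact hy (ball_subset_closedBall (hsupp i _ h))
      rw [h0 y hy, h0 z hz, zero_mul, zero_mul, sub_zero, abs_zero]
      exact mul_nonneg hC dist_nonneg
  choose O hO hle using h
  refine ⟨⋂ i, O i, Filter.iInter_mem.2 hO, fun y hy z hz => ?_⟩
  rw [mem_iInter] at hy hz
  simp only [glue]
  rw [← Finset.sum_sub_distrib]
  refine (Finset.abs_sum_le_sum_abs _ _).trans
    ((Finset.sum_le_sum fun i _ => hle i y (hy i) z (hz i)).trans_eq ?_)
  rw [Finset.sum_const, Finset.card_univ, nsmul_eq_mul, mul_assoc]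

lemma exists_nhds_abs_glue_sub_le (hφ : ∀ i z, 0 ≤ φ i z) (hsum : ∀ z, ∑ i, φ i z = 1)
    (hsupp : ∀ i z, φ i z ≠ 0 → z ∈ 𝒜.core i) {Λ : ℝ}
    (hφlip : ∀ i z w, |φ i z - φ i w| ≤ Λ * dist z w) {A N K : ℝ} (hG : ∀ i z, |G i z| ≤ A)
    (hGlip : ∀ i z w, |G i z - G i w| ≤ K * dist z w)
    (hN : ∀ x ∈ 𝒜.domain, ∀ i,
      π x ∈ closedBall (𝒜.chart i).center (𝒜.inner i) → |(𝒜.idx i x : ℝ)| ≤ N)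
    (hC : 0 ≤ Λ * (A + N) + K) (x : Tt) :
    ∃ O ∈ 𝓝 x, ∀ y ∈ O, ∀ z ∈ O, |𝒜.glue φ G y - 𝒜.glue φ G z| ≤
      Fintype.card ι * (Λ * (A + N) + K) * dist (π y) (π z) := by
  obtain ⟨k, hk⟩ := 𝒜.exists_zpow_mem_domain x
  obtain ⟨O, hO, hle⟩ := 𝒜.exists_nhds_abs_glue_sub_le_of_mem_domain hφ hsum hsupp hφlip hG
    hGlip (hN _ hk) hC
  refine ⟨(θ ^ k) ⁻¹' O, (θ ^ k).continuous.continuousAt.preimage_mem_nhds hO,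
    fun y hy z hz => ?_⟩
  have := hle _ hy _ hz
  rwa [𝒜.glue_zpow hsum hsupp, 𝒜.glue_zpow hsum hsupp, 𝒜.proj_zpow, 𝒜.proj_zpow,
    add_sub_add_right_eq_sub] at this

end Atlas

/-! ### Upper gradients of functions vanishing on the preimage of a closed set -/

lemma edist_le_lintegral_indicator {w : ℝ → ℝ} {h : ℝ → ℝ≥0∞} {a b : ℝ} (hab : a ≤ b)
    (hw : ∀ s t, a ≤ s → s ≤ t → t ≤ b → edist (w s) (w t) ≤ ∫⁻ r in Icc s t, h r)
    {K : Set ℝ} (hK : IsClosed K) (h0 : ∀ t ∈ K ∩ Icc a b, w t = 0) :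
    edist (w a) (w b) ≤ ∫⁻ r in Icc a b, Kᶜ.indicator h r := by
  rcases (K ∩ Icc a b).eq_empty_or_nonempty with he | hne
  · refine (hw a b le_rfl hab le_rfl).trans_eq ?_
    refine setLIntegral_congr_fun measurableSet_Icc fun t ht => ?_
    rw [indicator_of_mem]
    exact fun htK => (he ▸ (⟨htK, ht⟩ : t ∈ K ∩ Icc a b) : t ∈ (∅ : Set ℝ))
  · have hcomp : IsCompact (K ∩ Icc a b) := isCompact_Icc.inter_left hK
    obtain ⟨t₁, ht₁, hmin⟩ := hcomp.exists_isLeast hne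
    obtain ⟨t₂, ht₂, hmax⟩ := hcomp.exists_isGreatest hne
    have h12 : t₁ ≤ t₂ := hmin ht₂
    have hl : edist (w a) (w t₁) ≤ ∫⁻ r in Ico a t₁, Kᶜ.indicator h r := by
      refine (hw a t₁ le_rfl ht₁.2.1 ht₁.2.2).trans_eq ?_
      rw [← setLIntegral_congr Ico_ae_eq_Icc]
      refine setLIntegral_congr_fun measurableSet_Ico fun t ht => ?_
      rw [indicator_of_mem]
      exact fun htK => (hmin ⟨htK, ht.1, ht.2.le.trans ht₁.2.2⟩).not_gt ht.2
    have hr : edist (w t₂) (w b) ≤ ∫⁻ r in Ioc t₂ b, Kᶜ.indicator h r := by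
      refine (hw t₂ b ht₂.2.1 ht₂.2.2 le_rfl).trans_eq ?_
      rw [← setLIntegral_congr Ioc_ae_eq_Icc]
      refine setLIntegral_congr_fun measurableSet_Ioc fun t ht => ?_
      rw [indicator_of_mem]
      exact fun htK => (hmax ⟨htK, ht₂.2.1.trans ht.1.le, ht.2⟩).not_gt ht.1
    have hdisj : Disjoint (Ico a t₁) (Ioc t₂ b) :=
      Set.disjoint_left.2 fun t h1 h2 => (h1.2.trans_le h12).not_gt h2.1
    calc edist (w a) (w b) ≤ edist (w a) (w t₁) + edist (w t₂) (w b) := by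
          rw [h0 t₁ ht₁, h0 t₂ ht₂]
          exact edist_triangle _ _ _
      _ ≤ ∫⁻ r in Ico a t₁ ∪ Ioc t₂ b, Kᶜ.indicator h r := by
          rw [lintegral_union measurableSet_Ioc hdisj]
          exact add_le_add hl hr
      _ ≤ ∫⁻ r in Icc a b, Kᶜ.indicator h r := by
          refine lintegral_mono_set (union_subset ?_ ?_)
          · exact fun t ht => ⟨ht.1, ht.2.le.trans ht₁.2.2⟩
          · exact fun t ht => ⟨ht₂.2.1.trans ht.1.le, ht.2⟩

lemma eq_zero_of_ae_eq_zero {d : ℝ → ℝ} {h : ℝ → ℝ≥0∞} {a b t₀ δ : ℝ} (hab : a < b)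
    (ht₀ : t₀ ∈ Icc a b) (hδ : 0 < δ) (hfin : ∫⁻ r in Icc a b, h r ≠ ⊤)
    (hd : ∀ s ∈ Icc a b, ∀ t ∈ Icc a b, s ≤ t → dist s t₀ < δ → dist t t₀ < δ →
      edist (d s) (d t) ≤ ∫⁻ r in Icc s t, h r)
    (hae : ∀ᵐ t, t ∈ Icc a b → dist t t₀ < δ → d t = 0) : d t₀ = 0 := by
  have hsmall : ∀ ε : ℝ≥0∞, 0 < ε → edist (d t₀) 0 ≤ ε := fun ε hε => by
    obtain ⟨η, hη, hint⟩ := exists_pos_setLIntegral_lt_of_measure_lt hfin hε.ne'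
    have hsub : ∀ {s t}, s ∈ Icc a b → t ∈ Icc a b → ENNReal.ofReal (t - s) < η →
        ∫⁻ r in Icc s t, h r ≤ ε := fun {s t} hs ht hst => by
      have h1 := hint (Icc s t) ((Measure.restrict_apply_le _ _).trans_lt
        (by rwa [Real.volume_Icc]))
      rw [Measure.restrict_restrict measurableSet_Icc,
        inter_eq_left.2 (Icc_subset_Icc hs.1 ht.2)] at h1
      exact h1.le
    obtain ⟨η', hη', hη'η⟩ : ∃ η' : ℝ, 0 < η' ∧ ENNReal.ofReal η' ≤ η := by
      rcases eq_or_ne η ⊤ with rfl | hne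
      · exact ⟨1, one_pos, le_top⟩
      · exact ⟨η.toReal, ENNReal.toReal_pos hη.ne' hne, ENNReal.ofReal_toReal hne |>.le⟩
    set κ := min δ η'
    have hκ : 0 < κ := lt_min hδ hη'
    have hpos : (volume (Ioo (max a (t₀ - κ)) (min b (t₀ + κ)))) ≠ 0 := by
      rw [Real.volume_Ioo]
      refine (ENNReal.ofReal_pos.2 (sub_pos.2 ?_)).ne'
      refine max_lt (lt_min hab ?_) (lt_min ?_ ?_) <;> linarith [ht₀.1, ht₀.2]
    obtain ⟨t, ht, hdt⟩ := (frequently_ae_mem_iff.2 hpos).and_eventually hae |>.exists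
    have h1 := ht.1
    have h2 := ht.2
    rw [max_lt_iff] at h1
    rw [lt_min_iff] at h2
    have htI : t ∈ Icc a b := ⟨h1.1.le, h2.1.le⟩
    have hdist : dist t t₀ < κ := by
      rw [Real.dist_eq, abs_lt]
      constructor <;> linarith
    have hη'' : |t - t₀| < η' := (Real.dist_eq t t₀ ▸ hdist).trans_le (min_le_right _ _)
    have hlt : ∀ {x : ℝ}, x < η' → ENNReal.ofReal x < η := fun hx =>
      ((ENNReal.ofReal_lt_ofReal_iff hη').2 hx).trans_le hη'η
    rw [← hdt htI (hdist.trans_le (min_le_left _ _))]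
    rcases le_total t t₀ with hle | hle
    · rw [edist_comm]
      exact (hd t htI t₀ ht₀ hle (hdist.trans_le (min_le_left _ _)) (by simpa using hδ)).trans
        (hsub htI ht₀ (hlt (by linarith [neg_abs_le (t - t₀)])))
    · exact (hd t₀ ht₀ t htI hle (by simpa using hδ) (hdist.trans_le (min_le_left _ _))).trans
        (hsub ht₀ htI (hlt (by linarith [le_abs_self (t - t₀)])))
  have := le_antisymm (le_of_forall_gt_imp_ge_of_dense hsmall) zero_le
  exact edist_eq_zero.1 this

namespace Atlas

variable {T Tt : Type*} [MetricSpace T] [MetricSpace Tt] {π : Tt → T} {θ : Tt ≃ₜ Tt} {ι : Type*}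
  (𝒜 : Atlas π θ ι)

lemma exists_local_estimate (hloc : IsLocalIsometry π) {f : Tt → ℝ} {g : T → ℝ≥0∞} {i : ι}
    (hgrad : ∀ γ : UPath T, γ.InSet (𝒜.chart i).base →
      edist (f ((𝒜.chart i).sec γ.start)) (f ((𝒜.chart i).sec γ.finish)) ≤ γ.integral g)
    (γ : UPath Tt) {t₀ : ℝ} (ht₀ : t₀ ∈ Icc γ.a γ.b) (hi : π (γ.toFun t₀) ∈ (𝒜.chart i).base) :
    ∃ δ > 0, (∀ t ∈ Icc γ.a γ.b, dist t t₀ < δ → π (γ.toFun t) ∈ (𝒜.chart i).base ∧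
        𝒜.idx i (γ.toFun t) = 𝒜.idx i (γ.toFun t₀)) ∧
      ∀ s ∈ Icc γ.a γ.b, ∀ t ∈ Icc γ.a γ.b, s ≤ t → dist s t₀ < δ → dist t t₀ < δ →
        edist (π (γ.toFun s)) (π (γ.toFun t)) ≤ ENNReal.ofReal (t - s) ∧
        edist (f ((𝒜.chart i).sec (π (γ.toFun s)))) (f ((𝒜.chart i).sec (π (γ.toFun t)))) ≤
          ∫⁻ r in Icc s t, g (π (γ.toFun r)) := by
  obtain ⟨ε, hε, hiso⟩ := hloc (γ.toFun t₀)
  obtain ⟨δ, hδ, hsub⟩ := Metric.mem_nhds_iff.1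
    (inter_mem (𝒜.eventually_idx_eq hi) (ball_mem_nhds (γ.toFun t₀) hε))
  have hmem : ∀ t ∈ Icc γ.a γ.b, dist t t₀ < δ → γ.toFun t ∈ ball (γ.toFun t₀) δ :=
    fun t ht h => by
      have := γ.lip.dist_le_mul t ht t₀ ht₀
      rw [NNReal.coe_one, one_mul] at this
      exact this.trans_lt h
  have hlip : LipschitzOnWith 1 (π ∘ γ.toFun) (Icc γ.a γ.b ∩ ball t₀ δ) :=
    LipschitzOnWith.of_dist_le_mul fun s hs t ht => by
      rw [Function.comp_apply, Function.comp_apply,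
        hiso _ (hsub (hmem s hs.1 hs.2)).2 _ (hsub (hmem t ht.1 ht.2)).2]
      exact γ.lip.dist_le_mul s hs.1 t ht.1
  refine ⟨δ, hδ, fun t ht h => (hsub (hmem t ht h)).1, fun s hs t ht hst hsδ htδ => ⟨?_, ?_⟩⟩
  · have := hlip ⟨hs, hsδ⟩ ⟨ht, htδ⟩
    rwa [ENNReal.coe_one, one_mul, edist_dist s t, Real.dist_eq, abs_sub_comm,
      abs_of_nonneg (sub_nonneg.2 hst)] at this
  · have hst' : Icc s t ⊆ Icc γ.a γ.b ∩ ball t₀ δ := fun r hr =>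
      ⟨⟨hs.1.trans hr.1, hr.2.trans ht.2⟩, by
        rw [Real.dist_eq, abs_lt] at hsδ htδ
        rw [mem_ball, Real.dist_eq, abs_lt]
        constructor <;> linarith [hr.1, hr.2]⟩
    exact hgrad ⟨s, t, hst, π ∘ γ.toFun, hlip.mono hst'⟩ fun r hr =>
      (hsub (hmem r (hst' hr).1 (hst' hr).2)).1.1

end Atlas

lemma edist_sub_sub_le (a b c d : ℝ) : edist (a - b) (c - d) ≤ edist a c + edist b d := by
  simp only [edist_dist, ← ENNReal.ofReal_add dist_nonneg dist_nonneg]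
  exact ENNReal.ofReal_le_ofReal (dist_sub_sub_le _ _ _ _)

namespace UPath

variable {X : Type*} [PseudoMetricSpace X] [MeasurableSpace X] [BorelSpace X]

lemma aemeasurable_comp (γ : UPath X) {H : X → ℝ≥0∞} (hH : Measurable H) {s t : ℝ}
    (hs : γ.a ≤ s) (ht : t ≤ γ.b) :
    AEMeasurable (fun r => H (γ.toFun r)) (volume.restrict (Icc s t)) :=
  hH.comp_aemeasurable ((γ.lip.continuousOn.mono (Icc_subset_Icc hs ht)).aemeasurable
    measurableSet_Icc)

end UPath

namespace Atlas

variable {T Tt : Type*} [MetricSpace T] [MetricSpace Tt] {π : Tt → T} {θ : Tt ≃ₜ Tt} {ι : Type*}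
  (𝒜 : Atlas π θ ι)

/-- A function that agrees with its local representatives off a null set agrees with them at every
point of a path along which its upper gradient is integrable. -/
lemma eq_on_path [MeasurableSpace Tt] [BorelSpace Tt] [MeasurableSpace T] [BorelSpace T]
    (hloc : IsLocalIsometry π) {f : Tt → ℝ} {g : T → ℝ≥0∞} (hgrad : ∀ i, ∀ γ : UPath T, γ.InSet (𝒜.chart i).base →
      edist (f ((𝒜.chart i).sec γ.start)) (f ((𝒜.chart i).sec γ.finish)) ≤ γ.integral g)
    {Z : Set T} (hZm : MeasurableSet Z)
    (hZ : ∀ i x, π x ∈ (𝒜.chart i).base → π x ∉ Z →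
      f x = f ((𝒜.chart i).sec (π x)) + 𝒜.idx i x)
    {H : Tt → ℝ≥0∞} (hH : Measurable H) {γ : UPath Tt} (hab : γ.a < γ.b)
    (hHγ : ∀ s t, γ.a ≤ s → s ≤ t → t ≤ γ.b →
      edist (f (γ.toFun s)) (f (γ.toFun t)) ≤ ∫⁻ r in Icc s t, H (γ.toFun r))
    (hfin : γ.integral (fun x => H x + g (π x) + (π ⁻¹' Z).indicator (fun _ => ⊤) x) ≠ ⊤)
    {t₀ : ℝ} (ht₀ : t₀ ∈ Icc γ.a γ.b) {i : ι} (hi : π (γ.toFun t₀) ∈ (𝒜.chart i).base) :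
    f (γ.toFun t₀) = f ((𝒜.chart i).sec (π (γ.toFun t₀))) + 𝒜.idx i (γ.toFun t₀) := by
  have hπ := 𝒜.continuous_proj.measurable
  obtain ⟨δ, hδ, hbase, hest⟩ := 𝒜.exists_local_estimate hloc (hgrad i) γ ht₀ hi
  set k := 𝒜.idx i (γ.toFun t₀)
  have hae : ∀ᵐ t, t ∈ Icc γ.a γ.b → π (γ.toFun t) ∉ Z := by
    rw [← ae_restrict_iff' measurableSet_Icc]
    have hm : Measurable ((π ⁻¹' Z).indicator (fun _ => (⊤ : ℝ≥0∞))) :=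
      measurable_const.indicator (hπ hZm)
    have hle : ∫⁻ t in Icc γ.a γ.b, (π ⁻¹' Z).indicator (fun _ => (⊤ : ℝ≥0∞)) (γ.toFun t) ≠ ⊤ :=
      ne_top_of_le_ne_top hfin (lintegral_mono fun t => le_add_self)
    filter_upwards [ae_lt_top' (γ.aemeasurable_comp hm le_rfl le_rfl) hle] with t ht hmem
    rw [indicator_of_mem (show γ.toFun t ∈ π ⁻¹' Z from hmem)] at ht
    exact lt_irrefl _ ht
  have h0 : f (γ.toFun t₀) - (f ((𝒜.chart i).sec (π (γ.toFun t₀))) + k) = 0 := by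
    refine eq_zero_of_ae_eq_zero
      (d := fun t => f (γ.toFun t) - (f ((𝒜.chart i).sec (π (γ.toFun t))) + k))
      (h := fun t => H (γ.toFun t) + g (π (γ.toFun t))) hab ht₀ hδ
      (ne_top_of_le_ne_top hfin (lintegral_mono fun t => le_self_add)) ?_ ?_
    · intro s hs t ht hst hsδ htδ
      rw [lintegral_add_left' (γ.aemeasurable_comp hH hs.1 ht.2)]
      exact (edist_sub_sub_le _ _ _ _).trans (add_le_add (hHγ s t hs.1 hst ht.2)
        ((edist_add_right _ _ _).trans_le (hest s hs t ht hst hsδ htδ).2))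
    · filter_upwards [hae] with t h ht htδ
      rw [hZ i _ (hbase t ht htδ).1 (h ht), (hbase t ht htδ).2, sub_self]
  linarith

lemma isWeakUpperGradientOn_sub [MeasurableSpace Tt] [BorelSpace Tt] [MeasurableSpace T]
    [BorelSpace T] (hloc : IsLocalIsometry π) {μt : Measure Tt} {p : ℝ} (hp : 1 ≤ p)
    {f : Tt → ℝ} (hf : MemNloc μt p f) {g : T → ℝ≥0∞} (hg : Measurable g)
    (hgrad : ∀ i, ∀ γ : UPath T, γ.InSet (𝒜.chart i).base →
      edist (f ((𝒜.chart i).sec γ.start)) (f ((𝒜.chart i).sec γ.finish)) ≤ γ.integral g)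
    {Z : Set T} (hZm : MeasurableSet Z) (hZ0 : μt (π ⁻¹' Z) = 0)
    (hZ : ∀ i x, π x ∈ (𝒜.chart i).base → π x ∉ Z →
      f x = f ((𝒜.chart i).sec (π x)) + 𝒜.idx i x)
    {v : Tt → ℝ} {C : ℝ} (hC : 0 ≤ C)
    (hv : ∀ x, ∃ O ∈ 𝓝 x, ∀ y ∈ O, ∀ z ∈ O, |v y - v z| ≤ C * dist (π y) (π z))
    {N : Set T} (hN : IsOpen N)
    (hvan : ∀ x, π x ∉ N → (∀ i, π x ∈ (𝒜.chart i).base →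
      f x = f ((𝒜.chart i).sec (π x)) + 𝒜.idx i x) → v x = f x)
    {U : Set Tt} (hU : IsOpen U) (hUc : IsCompact (closure U))
    (hgU : ∫⁻ x in U, g (π x) ^ p ∂μt < ⊤) :
    IsWeakUpperGradientOn μt p U (fun x => v x - f x)
      (fun x => N.indicator (fun z => ENNReal.ofReal C + g z) (π x)) := by
  have hπ := 𝒜.continuous_proj.measurable
  obtain ⟨ρ, hρ, hρf, hρfin⟩ := (hf U hU hUc).2
  obtain ⟨H, hH, hHfin, hHγ⟩ := exists_upperGradientOn hp hρ hρf hρfin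
  have hind : Measurable ((π ⁻¹' Z).indicator (fun _ => (⊤ : ℝ≥0∞))) :=
    measurable_const.indicator (hπ hZm)
  have hp0 : 0 < p := zero_lt_one.trans_le hp
  refine pathMod_eq_zero_of_integral_eq_top hp0
    (H := fun x => H x + g (π x) + (π ⁻¹' Z).indicator (fun _ => ⊤) x)
    ((hH.add (hg.comp hπ)).add hind) ?_ ?_
  · have hae : ∀ᵐ x ∂μt.restrict U, (H x + g (π x) + (π ⁻¹' Z).indicator (fun _ => ⊤) x) ^ p ≤
        2 ^ p * (H x ^ p + g (π x) ^ p) := by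
      refine ae_restrict_of_ae ?_
      filter_upwards [measure_eq_zero_iff_ae_notMem.1 hZ0] with x hx
      rw [indicator_of_notMem hx, add_zero]
      exact add_rpow_le_two_rpow_mul hp _ _
    refine (lintegral_mono_ae hae).trans_lt ?_
    rw [lintegral_const_mul' _ _ (by finiteness), lintegral_add_left (hH.pow_const p)]
    exact ENNReal.mul_lt_top (by finiteness) (ENNReal.add_lt_top.2 ⟨hHfin, hgU⟩)
  · rintro γ ⟨hγU, hγ⟩
    by_contra hfin
    refine hγ ?_
    rcases γ.hab.eq_or_lt with hab | hab
    · rw [UPath.start, UPath.finish, hab, edist_self]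
      exact zero_le
    have hf_eq := fun t (ht : t ∈ Icc γ.a γ.b) i hi =>
      𝒜.eq_on_path hloc hgrad hZm hZ hH hab (fun s t hs hst ht =>
        hHγ (γ.sub s t hst hs ht) fun r hr => hγU r ⟨hs.trans hr.1, hr.2.trans ht⟩) hfin
        (t₀ := t) ht (i := i) hi
    have hglob : ∀ s t, γ.a ≤ s → s ≤ t → t ≤ γ.b →
        edist (v (γ.toFun s) - f (γ.toFun s)) (v (γ.toFun t) - f (γ.toFun t)) ≤
          ∫⁻ r in Icc s t, (ENNReal.ofReal C + g (π (γ.toFun r))) := by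
      intro s t hs hst ht
      refine edist_le_lintegral_of_locally (w := fun t => v (γ.toFun t) - f (γ.toFun t))
        (fun t₀ ht₀ => ?_) hs hst ht
      obtain ⟨i, hi⟩ := 𝒜.exists_mem_ball (π (γ.toFun t₀))
      obtain ⟨δ, hδ, hbase, hest⟩ := 𝒜.exists_local_estimate hloc (hgrad i) γ ht₀
        (𝒜.core_subset_base i hi)
      obtain ⟨O, hO, hvO⟩ := hv (γ.toFun t₀)
      obtain ⟨δ', hδ', hsub⟩ := Metric.mem_nhds_iff.1 hO
      have hmem : ∀ t ∈ Icc γ.a γ.b, dist t t₀ < δ' → γ.toFun t ∈ O := fun t ht h => hsub <| by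
        have := γ.lip.dist_le_mul t ht t₀ ht₀
        rw [NNReal.coe_one, one_mul] at this
        exact this.trans_lt h
      refine ⟨min δ δ', lt_min hδ hδ', fun s hs t ht hst hsδ htδ => ?_⟩
      rw [lt_min_iff] at hsδ htδ
      obtain ⟨hd, hF⟩ := hest s hs t ht hst hsδ.1 htδ.1
      have hb := hbase s hs hsδ.1
      have hb' := hbase t ht htδ.1
      rw [lintegral_add_left measurable_const, setLIntegral_const, Real.volume_Icc]
      have hvd : edist (v (γ.toFun s)) (v (γ.toFun t)) ≤
          ENNReal.ofReal C * ENNReal.ofReal (t - s) := by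
        refine le_trans ?_ (mul_le_mul_right hd _)
        rw [edist_dist, edist_dist, ← ENNReal.ofReal_mul hC, Real.dist_eq]
        exact ENNReal.ofReal_le_ofReal (hvO _ (hmem s hs hsδ.2) _ (hmem t ht htδ.2))
      rw [hf_eq s hs i hb.1, hf_eq t ht i hb'.1, hb.2, hb'.2]
      exact (edist_sub_sub_le _ _ _ _).trans (add_le_add hvd
        ((edist_add_right _ _ _).trans_le hF))
    have hcont : ContinuousOn (fun t => π (γ.toFun t)) (Icc γ.a γ.b) :=
      𝒜.continuous_proj.comp_continuousOn γ.lip.continuousOn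
    refine (edist_le_lintegral_indicator hab.le hglob
      (hcont.preimage_isClosed_of_isClosed isClosed_Icc hN.isClosed_compl) fun t ht => ?_).trans ?_
    · rw [hvan _ ht.1.2 fun i hi => hf_eq t ht.2 i hi, sub_self]
    · refine (setLIntegral_congr_fun measurableSet_Icc fun t ht => ?_).le
      beta_reduce
      by_cases h : π (γ.toFun t) ∈ N
      · rw [indicator_of_mem h, indicator_of_mem]
        exact fun h' => h'.2 h
      · rw [indicator_of_notMem h, indicator_of_notMem]
        exact fun h' => h' ⟨ht, h⟩

end Atlas

/-! ### Equivariant approximation on the cover -/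

lemma exists_lipschitz_extensions {T ι : Type*} [MetricSpace T] [CompactSpace T] [Fintype ι]
    {F : ι → T → ℝ} {B : ι → Set T} {N : ℝ → Set T} (hN : Antitone N) {κ l₀ : ℝ} (hκ : 0 ≤ κ)
    (hl₀ : 1 ≤ l₀) (hF : ∀ i l, 0 < l →
      LipschitzOnWith (Real.toNNReal (κ * l)) (F i) (B i \ N l))
    (hne : ∀ i, (B i \ N l₀).Nonempty) :
    ∃ A : ℝ, 0 ≤ A ∧ ∀ l, l₀ ≤ l → ∃ G : ι → T → ℝ,
      (∀ i z w, |G i z - G i w| ≤ κ * l * dist z w) ∧ (∀ i, ∀ z ∈ B i \ N l, G i z = F i z) ∧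
        ∀ i z, |G i z| ≤ A * l := by
  choose q hq using hne
  refine ⟨∑ i, |F i (q i)| + κ * diam (univ : Set T), by positivity, fun l hl => ?_⟩
  have hl1 : 1 ≤ l := hl₀.trans hl
  have hκl : 0 ≤ κ * l := by positivity
  choose G hG hGF using fun i => (hF i l (by linarith)).extend_real
  have hlip : ∀ i z w, |G i z - G i w| ≤ κ * l * dist z w := fun i z w => by
    have := (hG i).dist_le_mul z w
    rwa [Real.coe_toNNReal _ hκl, Real.dist_eq] at this
  refine ⟨G, hlip, fun i z hz => (hGF i hz).symm, fun i z => ?_⟩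
  have hqi : G i (q i) = F i (q i) := (hGF i ⟨(hq i).1, fun h => (hq i).2 (hN hl h)⟩).symm
  have h1 : |F i (q i)| ≤ ∑ j, |F j (q j)| :=
    Finset.single_le_sum (f := fun j => |F j (q j)|) (fun j _ => abs_nonneg _) (Finset.mem_univ i)
  have h2 : dist z (q i) ≤ diam (univ : Set T) :=
    dist_le_diam_of_mem isCompact_univ.isBounded (mem_univ _) (mem_univ _)
  calc |G i z| = |F i (q i) + (G i z - G i (q i))| := by rw [← hqi]; congr 1; ring
    _ ≤ |F i (q i)| + κ * l * dist z (q i) := (abs_add_le _ _).trans (by gcongr; exact hlip i z _)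
    _ ≤ (∑ j, |F j (q j)|) * l + κ * l * diam (univ : Set T) := by
        gcongr
        exact h1.trans (le_mul_of_one_le_right (by positivity) hl1)
    _ = _ := by ring

section

variable {T Tt : Type*} [MetricSpace T] [MetricSpace Tt] {π : Tt → T} {θ : Tt ≃ₜ Tt}

lemma exists_atlas [CompactSpace T] (hπ : Continuous π)
    (hproj : ∀ (k : ℤ) x, π ((θ ^ k) x) = π x)
    (htrans : ∀ x y, π x = π y → ∃ k : ℤ, (θ ^ k) x = y)
    (hfree : ∀ (k : ℤ) x, (θ ^ k) x = x → k = 0)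
    (P : T → Sheet π) (hP : ∀ y, (P y).center = y) (r : T → ℝ) (hr : ∀ y, 0 < r y)
    (hrP : ∀ y, r y < (P y).radius) :
    ∃ (J : Finset T) (𝒜 : Atlas π θ J), ∀ i, 𝒜.chart i = P i ∧ 𝒜.inner i = r i := by
  obtain ⟨J, hJ⟩ := CompactSpace.elim_nhds_subcover (fun y => ball y (r y))
    fun y => ball_mem_nhds y (hr y)
  have hidx : ∀ (i : J) x, ∃ k : ℤ, π x ∈ (P i).base → (θ ^ k) ((P i).sec (π x)) = x :=
    fun i x => by
      by_cases hx : π x ∈ (P i).base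
      · exact (htrans _ _ ((P i).proj_sec hx)).imp fun k hk _ => hk
      · exact ⟨0, fun h => absurd h hx⟩
  choose idx hidx using hidx
  refine ⟨J, ⟨fun i => P i, fun i => r i, idx, hπ, hproj, hfree, fun i => hr i, fun i => hrP i,
    fun z => ?_, hidx⟩, fun i => ⟨rfl, rfl⟩⟩
  have hz : z ∈ ⋃ x ∈ J, ball x (r x) := hJ ▸ mem_univ z
  obtain ⟨y, hy, hzy⟩ := mem_iUnion₂.1 hz
  exact ⟨⟨y, hy⟩, by rwa [hP]⟩

namespace Atlas

variable {ι : Type*} (𝒜 : Atlas π θ ι)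

lemma exists_null_set [MeasurableSpace T] [BorelSpace T] [MeasurableSpace Tt] [BorelSpace Tt]
    [Countable ι] {μ : Measure T} {μt : Measure Tt} (hμt : IsLiftedMeasure π μ μt) {f : Tt → ℝ}
    (hf : ∀ᵐ x ∂μt, f (θ x) - f x = 1) :
    ∃ Z : Set T, MeasurableSet Z ∧ μ Z = 0 ∧ ∀ i x, π x ∈ (𝒜.chart i).base → π x ∉ Z →
      f x = f ((𝒜.chart i).sec (π x)) + 𝒜.idx i x := by
  have h1 : ∀ᵐ x ∂μt, ∀ k : ℤ, f ((θ ^ k) x) = f x + k := by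
    have h : ∀ᵐ x ∂μt, ∀ k : ℤ, f (θ ((θ ^ k) x)) - f ((θ ^ k) x) = 1 :=
      ae_all_iff.2 fun k =>
        (hμt.measurePreserving (θ ^ k) (𝒜.proj_zpow k)).quasiMeasurePreserving.ae hf
    filter_upwards [h] with x hx k
    have hsucc : ∀ k : ℤ, f ((θ ^ (k + 1)) x) = f ((θ ^ k) x) + 1 := fun k => by
      rw [add_comm k, zpow_add, zpow_one, Homeomorph.mul_apply]
      linarith [hx k]
    induction k using Int.induction_on with
    | zero => simp
    | succ n ih =>
      rw [hsucc, ih]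
      push_cast
      ring
    | pred n ih =>
      have := hsucc (-n - 1)
      rw [sub_add_cancel, ih] at this
      push_cast at this ⊢
      linarith
  have h2 : ∀ᵐ z ∂μ, ∀ i, z ∈ (𝒜.chart i).base →
      ∀ k : ℤ, f ((θ ^ k) ((𝒜.chart i).sec z)) = f ((𝒜.chart i).sec z) + k :=
    ae_all_iff.2 fun i =>
      (ae_restrict_iff' (𝒜.chart i).isOpen_base.measurableSet).1 ((𝒜.chart i).ae_sec hμt h1)
  refine ⟨_, measurableSet_toMeasurable μ _, (measure_toMeasurable _).trans h2,
    fun i x hx hxZ => ?_⟩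
  have := not_not.1 (notMem_subset (subset_toMeasurable μ _) hxZ) i hx (𝒜.idx i x)
  rwa [𝒜.zpow_idx i x hx] at this

/-- Gluing truncations of `f` at level `l` yields equivariant functions, with Lipschitz constants
linear in `l`, that agree with `f` off `N l`. -/
lemma exists_equivariant [CompactSpace T] [Fintype ι] {f : Tt → ℝ} {N : ℝ → Set T}
    (hN : Antitone N) {κ l₀ : ℝ} (hκ : 0 ≤ κ) (hl₀ : 1 ≤ l₀)
    (hF : ∀ i l, 0 < l →
      LipschitzOnWith (Real.toNNReal (κ * l)) (f ∘ (𝒜.chart i).sec) (𝒜.core i \ N l))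
    (hne : ∀ i, (𝒜.core i \ N l₀).Nonempty) :
    ∃ Q : ℝ, 0 ≤ Q ∧ ∀ l, l₀ ≤ l → ∃ v : Tt → ℝ, (∀ (k : ℤ) x, v ((θ ^ k) x) = v x + k) ∧
      (∀ x ∈ 𝒜.domain, |v x| ≤ Q * l) ∧
      (∀ x, ∃ O ∈ 𝓝 x, ∀ y ∈ O, ∀ z ∈ O, |v y - v z| ≤ Q * l * dist (π y) (π z)) ∧
      ∀ x, π x ∉ N l → (∀ i, π x ∈ (𝒜.chart i).base →
        f x = f ((𝒜.chart i).sec (π x)) + 𝒜.idx i x) → v x = f x := by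
  obtain ⟨A, hA, hext⟩ := exists_lipschitz_extensions hN hκ hl₀ hF hne
  obtain ⟨φ, Λ, hΛ, hφ, hsum, hsupp, hφlip⟩ := 𝒜.exists_partition
  obtain ⟨M, hM, hidx⟩ := 𝒜.exists_abs_idx_le
  refine ⟨A + M + Fintype.card ι * (Λ * (A + M) + κ), by positivity, fun l hl => ?_⟩
  have hl1 : 1 ≤ l := hl₀.trans hl
  have hAM : A * l + M ≤ (A + M) * l := by nlinarith
  obtain ⟨G, hGlip, hGF, hGA⟩ := hext l hl
  refine ⟨𝒜.glue φ G, 𝒜.glue_zpow hsum hsupp, fun x hx => ?_, fun x => ?_, fun x hx h => ?_⟩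
  · refine (𝒜.abs_glue_le hφ hsum hsupp hGA (hidx x hx)).trans (hAM.trans ?_)
    exact mul_le_mul_of_nonneg_right (le_add_of_nonneg_right (by positivity)) (by positivity)
  · obtain ⟨O, hO, hle⟩ := 𝒜.exists_nhds_abs_glue_sub_le hφ hsum hsupp hφlip hGA hGlip hidx
      (by positivity) x
    refine ⟨O, hO, fun y hy z hz => (hle y hy z hz).trans ?_⟩
    refine mul_le_mul_of_nonneg_right ?_ dist_nonneg
    calc Fintype.card ι * (Λ * (A * l + M) + κ * l)
        ≤ Fintype.card ι * (Λ * ((A + M) * l) + κ * l) := by gcongr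
      _ = Fintype.card ι * (Λ * (A + M) + κ) * l := by ring
      _ ≤ _ := mul_le_mul_of_nonneg_right (le_add_of_nonneg_left (by positivity)) (by positivity)
  · refine 𝒜.glue_eq hsum fun i hi => ?_
    rw [hGF i _ ⟨hsupp i _ hi, hx⟩, h i (𝒜.core_subset_base i (hsupp i _ hi))]
    rfl

end Atlas

end

section

variable {T Tt : Type*} [MetricSpace T] [MetricSpace Tt] {π : Tt → T} {θ : Tt ≃ₜ Tt}

section Error

variable [MeasurableSpace T] [BorelSpace T] [MeasurableSpace Tt] [BorelSpace Tt]
  {μ : Measure T} {μt : Measure Tt}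

lemma tendsto_measure_of_tendsto_rpow_mul {T : Type*} [MeasurableSpace T]
    {μ : Measure T} {N : ℝ → Set T} {p : ℝ} (hp : 0 < p)
    (h : Tendsto (fun l => ENNReal.ofReal l ^ p * μ (N l)) atTop (𝓝 0)) :
    Tendsto (fun l => μ (N l)) atTop (𝓝 0) := by
  refine tendsto_of_tendsto_of_tendsto_of_le_of_le' tendsto_const_nhds h
    (Eventually.of_forall fun _ => zero_le) ?_
  filter_upwards [eventually_ge_atTop 1] with l hl
  refine le_mul_of_one_le_left zero_le ?_
  exact ENNReal.one_le_rpow (ENNReal.one_le_ofReal.2 hl) hp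

lemma Sheet.setLIntegral_sub_le (P : Sheet π) (hμt : IsLiftedMeasure π μ μt) (hπ : Continuous π)
    {p : ℝ} (hp : 1 ≤ p) {v f : Tt → ℝ} {N : Set T} (hN : MeasurableSet N) {c : ℝ}
    (hv : ∀ x ∈ P.sheet, |v x| ≤ c) (hvf : ∀ᵐ x ∂μt, π x ∉ N → v x = f x) :
    ∫⁻ x in P.sheet, ENNReal.ofReal |v x - f x| ^ p ∂μt ≤ 2 ^ p * (ENNReal.ofReal c ^ p * μ N +
      ∫⁻ x in π ⁻¹' N, ENNReal.ofReal |f x| ^ p ∂μt.restrict P.sheet) := by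
  have hp0 : 0 < p := zero_lt_one.trans_le hp
  have hN' : MeasurableSet (π ⁻¹' N) := hπ.measurable hN
  calc ∫⁻ x in P.sheet, ENNReal.ofReal |v x - f x| ^ p ∂μt
      ≤ ∫⁻ x in P.sheet, (π ⁻¹' N).indicator
          (fun x => 2 ^ p * (ENNReal.ofReal c ^ p + ENNReal.ofReal |f x| ^ p)) x ∂μt := by
        refine lintegral_mono_ae ?_
        filter_upwards [ae_restrict_of_ae hvf, ae_restrict_mem P.isOpen_sheet.measurableSet]
          with x hx hxs
        by_cases h : π x ∈ N
        · rw [indicator_of_mem (show x ∈ π ⁻¹' N from h)]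
          refine le_trans ?_ (add_rpow_le_two_rpow_mul hp _ _)
          gcongr
          rw [← ENNReal.ofReal_add ((abs_nonneg _).trans (hv x hxs)) (abs_nonneg _)]
          exact ENNReal.ofReal_le_ofReal
            ((abs_sub _ _).trans (add_le_add_left (hv x hxs) _))
        · rw [hx h, sub_self, abs_zero, ENNReal.ofReal_zero, ENNReal.zero_rpow_of_pos hp0]
          exact zero_le
    _ = 2 ^ p * (ENNReal.ofReal c ^ p * (μt.restrict P.sheet) (π ⁻¹' N) +
          ∫⁻ x in π ⁻¹' N, ENNReal.ofReal |f x| ^ p ∂μt.restrict P.sheet) := by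
        rw [lintegral_indicator hN', lintegral_const_mul' _ _ (by finiteness),
          lintegral_add_left measurable_const, setLIntegral_const]
    _ ≤ _ := by
        gcongr
        rw [Measure.restrict_apply hN', inter_comm]
        exact P.measure_sheet_inter_preimage_le hμt hπ hN

lemma Sheet.setLIntegral_indicator_le (P : Sheet π) (hμt : IsLiftedMeasure π μ μt)
    (hπ : Continuous π) {p : ℝ} (hp : 1 ≤ p) {g : T → ℝ≥0∞} (hg : Measurable g) {N : Set T}
    (hN : MeasurableSet N) (c : ℝ≥0∞) :
    ∫⁻ x in P.sheet, N.indicator (fun z => c + g z) (π x) ^ p ∂μt ≤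
      2 ^ p * (c ^ p * μ N + ∫⁻ z in N, g z ^ p ∂μ) := by
  have hp0 : 0 < p := zero_lt_one.trans_le hp
  rw [P.setLIntegral_sheet_comp hμt hπ
    (F := fun z => N.indicator (fun z => c + g z) z ^ p)
    (((measurable_const.add hg).indicator hN).pow_const p)]
  refine (setLIntegral_le_lintegral _ _).trans ?_
  calc ∫⁻ z, N.indicator (fun z => c + g z) z ^ p ∂μ
      ≤ ∫⁻ z, N.indicator (fun z => 2 ^ p * (c ^ p + g z ^ p)) z ∂μ := by
        refine lintegral_mono fun z => ?_
        by_cases h : z ∈ N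
        · simp only [indicator_of_mem h]
          exact add_rpow_le_two_rpow_mul hp _ _
        · simp [h, hp0]
    _ = _ := by
        rw [lintegral_indicator hN, lintegral_const_mul' _ _ (by finiteness),
          lintegral_add_left measurable_const, setLIntegral_const]

/-- The error made by modifying `f` over `N l` with functions of size `Q * l`. -/
lemma tendsto_error {ι : Type*} [Fintype ι] (P : ι → Sheet π) (hμt : IsLiftedMeasure π μ μt)
    (hπ : Continuous π) {p : ℝ} (hp : 1 ≤ p) {f : Tt → ℝ} (hf : MemNloc μt p f) {g : T → ℝ≥0∞}
    (hgfin : ∫⁻ z, g z ^ p ∂μ < ⊤) {N : ℝ → Set T} (hNm : ∀ l, MeasurableSet (N l))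
    (h : Tendsto (fun l => ENNReal.ofReal l ^ p * μ (N l)) atTop (𝓝 0)) {Q : ℝ} (hQ : 0 ≤ Q) :
    Tendsto (fun l => ∑ i, 2 ^ p * (ENNReal.ofReal (Q * l) ^ p * μ (N l) +
        ∫⁻ x in π ⁻¹' N l, ENNReal.ofReal |f x| ^ p ∂μt.restrict (P i).sheet) +
      ∑ _i : ι, 2 ^ p * (ENNReal.ofReal (Q * l) ^ p * μ (N l) + ∫⁻ z in N l, g z ^ p ∂μ))
      atTop (𝓝 0) := by
  have hp0 : 0 < p := zero_lt_one.trans_le hp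
  have hμ0 := tendsto_measure_of_tendsto_rpow_mul hp0 h
  have h1 : Tendsto (fun l => ENNReal.ofReal (Q * l) ^ p * μ (N l)) atTop (𝓝 0) := by
    have := ENNReal.Tendsto.const_mul (a := ENNReal.ofReal Q ^ p) h (Or.inr (by finiteness))
    rw [mul_zero] at this
    refine this.congr fun l => ?_
    rw [ENNReal.ofReal_mul hQ, ENNReal.mul_rpow_of_nonneg _ _ hp0.le, mul_assoc]
  have h2 : Tendsto (fun l => ∫⁻ z in N l, g z ^ p ∂μ) atTop (𝓝 0) :=
    tendsto_setLIntegral_zero hgfin.ne hμ0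
  have h3 : ∀ i, Tendsto (fun l => ∫⁻ x in π ⁻¹' N l, ENNReal.ofReal |f x| ^ p
      ∂μt.restrict (P i).sheet) atTop (𝓝 0) := fun i => by
    refine tendsto_setLIntegral_zero
      (hf _ (P i).isOpen_sheet (P i).isCompact_closure).1.ne ?_
    refine tendsto_of_tendsto_of_tendsto_of_le_of_le tendsto_const_nhds hμ0
      (fun _ => zero_le) fun l => ?_
    rw [Function.comp_apply, Measure.restrict_apply (hπ.measurable (hNm l)), inter_comm]
    exact (P i).measure_sheet_inter_preimage_le hμt hπ (hNm l)
  have hmul : ∀ {F : ℝ → ℝ≥0∞}, Tendsto F atTop (𝓝 0) →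
      Tendsto (fun l => 2 ^ p * (ENNReal.ofReal (Q * l) ^ p * μ (N l) + F l)) atTop (𝓝 0) :=
    fun hF => by
      simpa using ENNReal.Tendsto.const_mul (a := 2 ^ p) (h1.add hF) (Or.inr (by finiteness))
  simpa using (tendsto_finsetSum Finset.univ fun i _ => hmul (h3 i)).add
    (tendsto_finsetSum Finset.univ fun (_ : ι) _ => hmul h2)

end Error

lemma locallyLipschitz_of_dist_proj_le (hloc : IsLocalIsometry π) {v : Tt → ℝ} {C : ℝ}
    (hv : ∀ x, ∃ O ∈ 𝓝 x, ∀ y ∈ O, ∀ z ∈ O, |v y - v z| ≤ C * dist (π y) (π z)) :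
    LocallyLipschitz v := fun x => by
  obtain ⟨O, hO, hle⟩ := hv x
  obtain ⟨ε, hε, hiso⟩ := hloc x
  refine ⟨Real.toNNReal C, O ∩ ball x ε, inter_mem hO (ball_mem_nhds x hε),
    LipschitzOnWith.of_dist_le_mul fun y hy z hz => ?_⟩
  rw [Real.dist_eq]
  refine (hle y hy.1 z hz.1).trans ?_
  rw [hiso y hy.2 z hz.2]
  exact mul_le_mul_of_nonneg_right (Real.le_coe_toNNReal C) dist_nonneg

end

variable {T Tt : Type*} [MetricSpace T] [MetricSpace Tt] [MeasurableSpace T] [BorelSpace T]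
  [MeasurableSpace Tt] [BorelSpace Tt] {μ : Measure T} {μt : Measure Tt} {π : Tt → T}

theorem Atlas.exists_approx [CompactSpace T] {θ : Tt ≃ₜ Tt} {ι : Type*} [Fintype ι]
    (𝒜 : Atlas π θ ι) (hloc : IsLocalIsometry π)
    (htrans : ∀ x y, π x = π y → ∃ k : ℤ, (θ ^ k) x = y) (hμt : IsLiftedMeasure π μ μt)
    (hμ : ∀ i, 0 < μ (𝒜.core i)) {p : ℝ} (hp : 1 ≤ p) {f : Tt → ℝ} (hf : MemNloc μt p f)
    (hfθ : ∀ᵐ x ∂μt, f (θ x) - f x = 1) {g : T → ℝ≥0∞} (hg : Measurable g)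
    (hgfin : ∫⁻ z, g z ^ p ∂μ < ⊤) (hgrad : ∀ i, ∀ γ : UPath T, γ.InSet (𝒜.chart i).base →
      edist (f ((𝒜.chart i).sec γ.start)) (f ((𝒜.chart i).sec γ.finish)) ≤ γ.integral g)
    {N : ℝ → Set T} (hNo : ∀ l, IsOpen (N l)) (hN : Antitone N)
    (hNμ : Tendsto (fun l => ENNReal.ofReal l ^ p * μ (N l)) atTop (𝓝 0)) {κ : ℝ} (hκ : 0 ≤ κ)
    (hF : ∀ i l, 0 < l →
      LipschitzOnWith (Real.toNNReal (κ * l)) (f ∘ (𝒜.chart i).sec) (𝒜.core i \ N l)) :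
    ∃ C : Set Tt → ℝ≥0∞, (∀ U, IsOpen U → IsCompact (closure U) → C U < ⊤) ∧
      ∀ ε : ℝ, 0 < ε → ∃ v : Tt → ℝ, LocallyLipschitz v ∧ (∀ x, v (θ x) - v x = 1) ∧
        ∀ U, IsOpen U → IsCompact (closure U) →
          NSeminorm μt p U (fun x => v x - f x) ≤ C U * ENNReal.ofReal ε := by
  have hp0 : 0 < p := zero_lt_one.trans_le hp
  have hπ := 𝒜.continuous_proj
  have hbase : ∀ z, ∃ i, z ∈ (𝒜.chart i).base := fun z =>
    (𝒜.exists_mem_ball z).imp fun i hi => 𝒜.core_subset_base i hi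
  obtain ⟨Z, hZm, hZ0, hZ⟩ := 𝒜.exists_null_set hμt hfθ
  have hZ0' := hμt.measure_preimage_eq_zero hπ hZm hZ0
  have hfZ : ∀ᵐ x ∂μt, π x ∉ Z := measure_eq_zero_iff_ae_notMem.1 hZ0'
  have hfk : ∀ᵐ x ∂μt, ∀ k : ℤ, f ((θ ^ k) x) = f x + k := by
    filter_upwards [hfZ] with x hx k
    obtain ⟨i, hi⟩ := hbase (π x)
    have h := hZ i ((θ ^ k) x)
    rw [𝒜.proj_zpow, 𝒜.idx_zpow k hi] at h
    rw [h hi hx, hZ i x hi hx]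
    push_cast
    ring
  obtain ⟨l₀, hl₀, hl₀μ⟩ : ∃ l₀ : ℝ, 1 ≤ l₀ ∧ ∀ i, μ (N l₀) < μ (𝒜.core i) :=
    ((eventually_ge_atTop 1).and (eventually_all.2 fun i =>
      (tendsto_measure_of_tendsto_rpow_mul hp0 hNμ).eventually_lt_const (hμ i))).exists
  obtain ⟨Q, hQ, hv⟩ := 𝒜.exists_equivariant hN hκ hl₀ hF fun i =>
    nonempty_of_not_subset fun h => (measure_mono h).not_gt (hl₀μ i)
  have hbound : ∀ U : Set Tt, ∃ M : ℝ≥0∞, IsCompact (closure U) → M < ⊤ ∧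
      ∀ F : Tt → ℝ≥0∞, (∀ᵐ x ∂μt, ∀ k : ℤ, F ((θ ^ k) x) = F x) →
        ∫⁻ x in U, F x ∂μt ≤ M * ∑ i, ∫⁻ x in (𝒜.chart i).sheet, F x ∂μt := fun U => by
    by_cases hU : IsCompact (closure U)
    · exact (hμt.exists_setLIntegral_le 𝒜.proj_zpow 𝒜.chart hbase htrans hU).imp fun M hM _ => hM
    · exact ⟨0, fun h => absurd h hU⟩
  choose M hM using hbound
  refine ⟨fun U => 2 * M U ^ (1 / p), fun U _ hUc => ?_, fun ε hε => ?_⟩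
  · have := (hM U hUc).1
    have : M U ≠ ⊤ := this.ne
    finiteness
  obtain ⟨l, hl, hlε⟩ := ((eventually_ge_atTop l₀).and
    ((tendsto_error 𝒜.chart hμt hπ hp hf hgfin (fun l => (hNo l).measurableSet) hNμ
      hQ).eventually_lt_const
        (ENNReal.rpow_pos (ENNReal.ofReal_pos.2 hε) ENNReal.ofReal_ne_top))).exists
  obtain ⟨v, hvθ, hvb, hvlip, hvf⟩ := hv l hl
  refine ⟨v, locallyLipschitz_of_dist_proj_le hloc hvlip, fun x => ?_, fun U hU hUc => ?_⟩
  · have := hvθ 1 x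
    rw [zpow_one, Int.cast_one] at this
    linarith
  obtain ⟨hMfin, hMU⟩ := hM U hUc
  have hQl : 0 ≤ Q * l := mul_nonneg hQ (zero_le_one.trans (hl₀.trans hl))
  have key : ∀ {J : ℝ≥0∞}, J ≤ M U * ENNReal.ofReal ε ^ p →
      J ^ (1 / p) ≤ M U ^ (1 / p) * ENNReal.ofReal ε := fun hJ => by
    refine (ENNReal.rpow_le_rpow hJ (by positivity)).trans_eq ?_
    rw [ENNReal.mul_rpow_of_nonneg _ _ (by positivity), ← ENNReal.rpow_mul,
      mul_one_div_cancel hp0.ne', ENNReal.rpow_one]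
  have hgm : Measurable fun z => (N l).indicator (fun z => ENNReal.ofReal (Q * l) + g z) z :=
    (measurable_const.add hg).indicator (hNo l).measurableSet
  have hmeas : Measurable fun x => (N l).indicator (fun z => ENNReal.ofReal (Q * l) + g z) (π x) :=
    hgm.comp hπ.measurable
  have hgradU : IsWeakUpperGradientOn μt p U (fun x => v x - f x)
      fun x => (N l).indicator (fun z => ENNReal.ofReal (Q * l) + g z) (π x) := by
    refine 𝒜.isWeakUpperGradientOn_sub hloc hp hf hg hgrad hZm hZ0' hZ hQl hvlip (hNo l) hvf hU
      hUc ?_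
    refine (hMU (fun x => g (π x) ^ p) (Eventually.of_forall fun x k => by
      simp only [𝒜.proj_zpow])).trans_lt
      (ENNReal.mul_lt_top hMfin (ENNReal.sum_lt_top.2 fun i _ => ?_))
    rw [(𝒜.chart i).setLIntegral_sheet_comp hμt hπ (hg.pow_const p)]
    exact (setLIntegral_le_lintegral _ _).trans_lt hgfin
  have hint : ∫⁻ x in U, (N l).indicator (fun z => ENNReal.ofReal (Q * l) + g z) (π x) ^ p ∂μt ≤
      M U * ENNReal.ofReal ε ^ p := by
    refine (hMU (fun x => (N l).indicator (fun z => ENNReal.ofReal (Q * l) + g z) (π x) ^ p)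
      (Eventually.of_forall fun x k => by simp only [𝒜.proj_zpow])).trans ?_
    refine mul_le_mul_right (le_trans (Finset.sum_le_sum fun i _ => ?_)
        (le_add_self.trans hlε.le)) _
    exact (𝒜.chart i).setLIntegral_indicator_le hμt hπ hp hg (hNo l).measurableSet _
  have hnorm : ∫⁻ x in U, ENNReal.ofReal |v x - f x| ^ p ∂μt ≤ M U * ENNReal.ofReal ε ^ p := by
    refine (hMU (fun x => ENNReal.ofReal |v x - f x| ^ p) ?_).trans ?_
    · filter_upwards [hfk] with x hx k
      rw [hvθ, hx, add_sub_add_right_eq_sub]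
    · refine mul_le_mul_right (le_trans (Finset.sum_le_sum fun i _ => ?_)
        (le_self_add.trans hlε.le)) _
      refine (𝒜.chart i).setLIntegral_sub_le hμt hπ hp (hNo l).measurableSet
        (fun x hx => hvb x (mem_iUnion.2 ⟨i, hx⟩)) ?_
      filter_upwards [hfZ] with x hx hxN
      exact hvf x hxN fun i hi => hZ i x hi hx
  beta_reduce
  rw [NSeminorm, two_mul, add_mul]
  exact add_le_add (key hnorm) ((iInf₂_le _ ⟨hmeas, hgradU⟩).trans (key hint))

theorem exists_locallyLipschitz_approx [CompactSpace T] {Cμ : ℝ≥0∞} {CP lP : ℝ} {x₀ : T}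
    {α₀ : Path x₀ x₀} {τ : Tt → Tt} (hdbl : IsDoubling μ Cμ) (hPI : SupportsPoincare μ CP lP)
    (hgen : IsGenerator x₀ α₀) (hcov : CoverSetup π) (hdeck : IsDeck π x₀ α₀ τ)
    (hμt : IsLiftedMeasure π μ μt) {p : ℝ} (hp : 1 ≤ p) {f : Tt → ℝ} (hf : MemNloc μt p f)
    (hτf : ∀ᵐ x ∂μt, f (τ x) - f x = 1) :
    ∃ C : Set Tt → ℝ≥0∞, (∀ U, IsOpen U → IsCompact (closure U) → C U < ⊤) ∧
      ∀ ε : ℝ, 0 < ε → ∃ v : Tt → ℝ, LocallyLipschitz v ∧ (∀ x, v (τ x) - v x = 1) ∧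
        ∀ U, IsOpen U → IsCompact (closure U) →
          NSeminorm μt p U (fun x => v x - f x) ≤ C U * ENNReal.ofReal ε := by
  obtain ⟨θ, hθ, hproj, htrans, hfree⟩ := hdeck.exists_homeomorph hcov hgen
  have hD := hgen.diam_pos
  have hCμ := hdbl.ne_top hD
  have hπ := hcov.1.continuous
  have hfin : IsFiniteMeasure μ := by
    refine ⟨lt_of_le_of_lt (measure_mono fun x _ => ?_)
      (hPI.1 x₀ (diam (univ : Set T) + 1) (by positivity)).2⟩
    exact (dist_le_diam_of_mem isCompact_univ.isBounded (mem_univ _) (mem_univ _)).trans_lt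
      (lt_add_one _)
  have hconn : PreconnectedSpace T := by
    have := hcov.2.2.2
    exact hcov.2.1.denseRange.preconnectedSpace hπ
  choose P hP using hcov.exists_sheet
  set S := diam (univ : Set T) / 5 with hS
  have hS0 : 0 < S := by positivity
  obtain ⟨K, hK⟩ : ∃ K, K = 2 * ((12 * Cμ.toReal + 4 * Cμ.toReal ^ 2) * max CP 0) + 1 := ⟨_, rfl⟩
  have hK0 : 0 ≤ K := by rw [hK]; positivity
  have hlP : 0 < 2 * max lP 1 := by positivity
  choose r hr hrD hrS hrP using fun y => exists_radius hS0 hD hK0 hlP (P y).radius_pos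
  choose g hg hgfin hgrad using fun y => (P y).exists_gradient hμt hp hf
  obtain ⟨J, 𝒜, h𝒜⟩ := exists_atlas hπ hproj htrans hfree P hP r hr fun y => by
    nlinarith [hrP y, hr y]
  have hGlsc : LowerSemicontinuous fun z => ∑ i : J, g i z :=
    lowerSemicontinuous_sum fun i _ => hg i
  have hle : ∀ (i : J) z, g i z ≤ ∑ i : J, g i z := fun i z =>
    Finset.single_le_sum (f := fun i : J => g i z) (fun _ _ => zero_le) (Finset.mem_univ i)
  have hGfin : ∫⁻ z, (∑ i : J, g i z) ^ p ∂μ < ⊤ := by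
    refine (lintegral_mono fun z => ENNReal.rpow_sum_le_const_mul_sum_rpow Finset.univ
      (fun i : J => g i z) hp).trans_lt ?_
    rw [lintegral_const_mul' _ _ (by finiteness), lintegral_finsetSum _ fun (i : J) _ =>
      (hg i).measurable.pow_const p]
    exact ENNReal.mul_lt_top (by finiteness) (ENNReal.sum_lt_top.2 fun i _ => hgfin i)
  have hGgrad : ∀ i, ∀ γ : UPath T, γ.InSet (𝒜.chart i).base →
      edist (f ((𝒜.chart i).sec γ.start)) (f ((𝒜.chart i).sec γ.finish)) ≤
        γ.integral fun z => ∑ i : J, g i z := fun i γ hγ => by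
    rw [(h𝒜 i).1] at hγ ⊢
    exact (hgrad i γ hγ).trans (lintegral_mono fun t => hle i _)
  simp_rw [← hθ] at hτf ⊢
  refine 𝒜.exists_approx hcov.2.2.1 htrans hμt (fun i => (hPI.1 _ _ (𝒜.inner_pos i)).1) hp hf hτf
    hGlsc.measurable hGfin hGgrad (isOpen_highSet μ _ S) (highSet_anti μ _ S)
    (tendsto_measure_highSet hdbl hCμ hGlsc.measurable hp (by linarith) hGfin.ne)
    (κ := 3 * K) (by positivity) fun i l hl => ?_
  rw [mul_right_comm, Atlas.core, (h𝒜 i).2]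
  refine lipschitzOnWith_of_gradient hdbl hCμ hPI hGlsc hS0 hK (hrD i) (hrS i)
    (c := (𝒜.chart i).center) (R := (𝒜.chart i).radius) (F := f ∘ (𝒜.chart i).sec) ?_
    (hGgrad i) hl
  rw [(h𝒜 i).1]
  exact hrP i

end Duality

open Duality in
/-- Density of equivariant locally Lipschitz functions in the space of degree-1
functions of `N^{1,p}_loc (T̃)` (after Björn–Björn). -/
theorem statement6
    (T : Type) [MetricSpace T] [MeasurableSpace T] [BorelSpace T] [CompactSpace T]
    (Tt : Type) [MetricSpace Tt] [MeasurableSpace Tt] [BorelSpace Tt]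
    (μ : Measure T) (μt : Measure Tt) (Cμ : ℝ≥0∞) (CP lP : ℝ)
    (x₀ : T) (α₀ : Path x₀ x₀) (π : Tt → T) (τ : Tt → Tt)
    (hdbl : IsDoubling μ Cμ) (hPI : SupportsPoincare μ CP lP)
    (hslsc : SemilocallySimplyConnected T) (hgen : IsGenerator x₀ α₀)
    (hcov : CoverSetup π) (hdeck : IsDeck π x₀ α₀ τ)
    (hμt : IsLiftedMeasure π μ μt)
    (p : ℝ) (hp : 1 < p)
    (f : Tt → ℝ) (hf : MemNloc μt p f) (hτf : ∀ᵐ x ∂μt, f (τ x) - f x = 1) :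
    ∃ C : Set Tt → ℝ≥0∞,
      (∀ U : Set Tt, IsOpen U → IsCompact (closure U) → C U < ⊤) ∧
      ∀ ε : ℝ, 0 < ε →
        ∃ v : Tt → ℝ, LocallyLipschitz v ∧ (∀ x, v (τ x) - v x = 1) ∧
          ∀ U : Set Tt, IsOpen U → IsCompact (closure U) →
            NSeminorm μt p U (fun x => v x - f x) ≤ C U * ENNReal.ofReal ε := by
  exact exists_locallyLipschitz_approx hdbl hPI hgen hcov hdeck hμt hp.le hf hτf
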